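/- arXiv:2603.09057 — 2 statements merged into one kernel-verified Lean document; each statement's English description precedes it below -/
import Mathlib

section
/- Assume p_1,…,p_m are positive rational numbers, and let (V, p) be a feasible quiver datum. Then there exist a tuple A of invertible matrices (A_{\underline i} ∈ GL(d_i, ℝ), A_j ∈ GL(n_j, ℝ)) and dimension vectors d^1, …, d^s such that: (1) d^1 + ⋯ + d^s = (d_1,…,d_k,n_1,…,n_m) and ∑_i d^ℓ_{\underline i} = ∑_j p_j d^ℓ_j for every ℓ ∈ [s]; (2) A·V is block upper-triangular of type (d^s,…,d^1), i.e., each matrix (A·V)_a = A_j V_a A_{\underline i}^{-1} is block upper-triangular with diagonal blocks of sizes d^ℓ_j × d^ℓ_{\underline i}; (3) the datum (Ṽ, p) is extremizable, where Ṽ := diag(A·V) is obtained from A·V by replacing each matrix by its block-diagonal part; and furthermore cap(V, p) = cap(A^{-1}·Ṽ, p). -/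
open Matrix BigOperators

/-- The value of the capacity functional of a quiver datum `(V, p)` at a tuple `Y`
of `n j × n j` matrices. -/
noncomputable def capVal {k m : ℕ} {d : Fin k → ℕ} {n : Fin m → ℕ} {A : Fin k → Fin m → ℕ}
    (p : Fin m → ℝ)
    (V : ∀ i : Fin k, ∀ j : Fin m, Fin (A i j) → Matrix (Fin (n j)) (Fin (d i)) ℝ)
    (Y : ∀ j : Fin m, Matrix (Fin (n j)) (Fin (n j)) ℝ) : ℝ :=
  (∏ i : Fin k, (∑ j : Fin m, p j • ∑ a : Fin (A i j), (V i j a)ᵀ * Y j * V i j a).det) /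
    ∏ j : Fin m, (Y j).det ^ (p j)

/-- The capacity `cap(V, p)` of a quiver datum: the infimum of the capacity functional
over all tuples of positive definite matrices. -/
noncomputable def cap {k m : ℕ} {d : Fin k → ℕ} {n : Fin m → ℕ} {A : Fin k → Fin m → ℕ}
    (p : Fin m → ℝ)
    (V : ∀ i : Fin k, ∀ j : Fin m, Fin (A i j) → Matrix (Fin (n j)) (Fin (d i)) ℝ) : ℝ :=
  sInf { r : ℝ | ∃ Y : ∀ j : Fin m, Matrix (Fin (n j)) (Fin (n j)) ℝ,
    (∀ j, (Y j).PosDef) ∧ r = capVal p V Y }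

/-- A quiver datum `(V, p)` is extremizable if it is feasible (`cap(V,p) > 0`) and the
infimum defining the capacity is attained at some tuple of positive definite matrices. -/
def Extremizable {k m : ℕ} {d : Fin k → ℕ} {n : Fin m → ℕ} {A : Fin k → Fin m → ℕ}
    (p : Fin m → ℝ)
    (V : ∀ i : Fin k, ∀ j : Fin m, Fin (A i j) → Matrix (Fin (n j)) (Fin (d i)) ℝ) : Prop :=
  0 < cap p V ∧ ∃ Y : ∀ j : Fin m, Matrix (Fin (n j)) (Fin (n j)) ℝ,
    (∀ j, (Y j).PosDef) ∧ capVal p V Y = cap p V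

/-- A quiver datum `(V, p)` is geometric. -/
def IsGeometric {k m : ℕ} {d : Fin k → ℕ} {n : Fin m → ℕ} {A : Fin k → Fin m → ℕ}
    (p : Fin m → ℝ)
    (V : ∀ i : Fin k, ∀ j : Fin m, Fin (A i j) → Matrix (Fin (n j)) (Fin (d i)) ℝ) : Prop :=
  (∀ i, ∑ j : Fin m, p j • ∑ a : Fin (A i j), (V i j a)ᵀ * V i j a = 1) ∧
  (∀ j, ∑ i : Fin k, ∑ a : Fin (A i j), V i j a * (V i j a)ᵀ = 1)

/-- The embedding of the `ℓ`-th block into the concatenation: `fembed f ℓ r` is the index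
of position `r` of block `ℓ`, the blocks being laid out in increasing order of `ℓ`. -/
def fembed {s : ℕ} (f : Fin s → ℕ) (ℓ : Fin s) (r : Fin (f ℓ)) : Fin (∑ ℓ' : Fin s, f ℓ') :=
  ⟨(∑ ℓ' ∈ Finset.univ.filter (fun ℓ' => ℓ' < ℓ), f ℓ') + (r : ℕ), by
    have h2 : f ℓ + ∑ ℓ' ∈ Finset.univ.filter (fun ℓ' => ℓ' < ℓ), f ℓ' ≤ ∑ ℓ' : Fin s, f ℓ' := by
      rw [← Finset.sum_insert (by simp)]
      exact Finset.sum_le_sum_of_subset (Finset.subset_univ _)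
    have h3 := r.isLt
    omega⟩


set_option linter.unusedSectionVars false

/-! ## Part 1: linear algebra preliminaries -/

section LinAlg

variable {ι κ : Type} [Fintype ι] [DecidableEq ι] [Fintype κ] [DecidableEq κ]

lemma aux_spectral {Y : Matrix ι ι ℝ} (hY : Y.IsHermitian) :
    ∃ (Q : Matrix ι ι ℝ) (l : ι → ℝ), Qᵀ * Q = 1 ∧ Q * Qᵀ = 1 ∧ Y = Qᵀ * Matrix.diagonal l * Q := by
  have h := hY.spectral_theorem
  rw [Unitary.conjStarAlgAut_apply] at h
  have h1 := Unitary.coe_star_mul_self hY.eigenvectorUnitary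
  have h2 := Unitary.coe_mul_star_self hY.eigenvectorUnitary
  refine ⟨(star (hY.eigenvectorUnitary : Matrix ι ι ℝ)), hY.eigenvalues, ?_, ?_, ?_⟩
  · simpa [Matrix.star_eq_conjTranspose] using h2
  · simpa [Matrix.star_eq_conjTranspose] using h1
  · simpa [Matrix.star_eq_conjTranspose, Function.comp_def] using h

lemma aux_psd_conj {Y : Matrix ι ι ℝ} (hY : Y.PosSemidef) (W : Matrix ι κ ℝ) :
    (Wᵀ * Y * W).PosSemidef := by
  simpa using hY.conjTranspose_mul_mul_same W

lemma aux_pd_conj {Y : Matrix ι ι ℝ} (hY : Y.PosDef) (W : Matrix ι κ ℝ) (W' : Matrix κ ι ℝ)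
    (h : W' * W = 1) : (Wᵀ * Y * W).PosDef := by
  have := hY.conjTranspose_mul_mul_same (B := W) (by
    intro x y hxy
    have := congrArg (W'.mulVec) hxy
    simpa [Matrix.mulVec_mulVec, h] using this)
  simpa using this

lemma aux_conj_cancel {S S' Y : Matrix ι ι ℝ} (h2 : S * S' = 1) : 
    (S')ᵀ * (Sᵀ * Y * S) * S' = Y := by
  have h3 : S'ᵀ * Sᵀ = 1 := by rw [← Matrix.transpose_mul, h2, Matrix.transpose_one]
  calc (S')ᵀ * (Sᵀ * Y * S) * S' = (S'ᵀ * Sᵀ) * Y * (S * S') := by simp only [Matrix.mul_assoc]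
    _ = Y := by rw [h3, h2]; simp

lemma aux_psd_spectral {Y : Matrix ι ι ℝ} (hY : Y.PosSemidef) :
    ∃ (Q : Matrix ι ι ℝ) (l : ι → ℝ), Qᵀ * Q = 1 ∧ Q * Qᵀ = 1 ∧ (∀ r, 0 ≤ l r) ∧ 
      Y = Qᵀ * Matrix.diagonal l * Q := by
  obtain ⟨Q, l, h1, h2, h3⟩ := aux_spectral hY.isHermitian
  refine ⟨Q, l, h1, h2, ?_, h3⟩
  have h4 : Matrix.diagonal l = Qᵀᵀ * Y * Qᵀ := by
    rw [h3]; exact (aux_conj_cancel h2).symm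
  have h5 : (Matrix.diagonal l).PosSemidef := h4 ▸ aux_psd_conj hY _
  exact fun r => Matrix.posSemidef_diagonal_iff.1 h5 r

lemma aux_pd_spectral {Y : Matrix ι ι ℝ} (hY : Y.PosDef) :
    ∃ (Q : Matrix ι ι ℝ) (l : ι → ℝ), Qᵀ * Q = 1 ∧ Q * Qᵀ = 1 ∧ (∀ r, 0 < l r) ∧ 
      Y = Qᵀ * Matrix.diagonal l * Q := by
  obtain ⟨Q, l, h1, h2, h3⟩ := aux_spectral hY.isHermitian
  refine ⟨Q, l, h1, h2, ?_, h3⟩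
  have h4 : Matrix.diagonal l = Qᵀᵀ * Y * Qᵀ := by
    rw [h3]; exact (aux_conj_cancel h2).symm
  have h5 : (Matrix.diagonal l).PosDef := h4 ▸ aux_pd_conj hY _ Q h2
  exact fun r => Matrix.posDef_diagonal_iff.1 h5 r

lemma aux_det_one_add {K : Matrix ι ι ℝ} (hK : K.PosSemidef) : 1 ≤ (1 + K).det := by
  obtain ⟨Q, l, h1, h2, h0, h3⟩ := aux_psd_spectral hK
  have : (1 : Matrix ι ι ℝ) + K = Qᵀ * Matrix.diagonal (fun r => 1 + l r) * Q := by
    have : Matrix.diagonal (fun r => 1 + l r) = 1 + Matrix.diagonal l := by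
      rw [← Matrix.diagonal_one, Matrix.diagonal_add]
    rw [this, h3, Matrix.mul_add, Matrix.add_mul, Matrix.mul_one, h1]
  rw [this, Matrix.det_mul, Matrix.det_mul, mul_comm, ← mul_assoc, ← Matrix.det_mul, h2, 
    Matrix.det_one, one_mul, Matrix.det_diagonal]
  calc (1 : ℝ) = ∏ _r : ι, (1 : ℝ) := by simp
    _ ≤ _ := Finset.prod_le_prod (fun _ _ => zero_le_one) (fun r _ => by linarith [h0 r])

lemma aux_det_mono {B C : Matrix ι ι ℝ} (hB : B.PosSemidef) (hC : C.PosSemidef) :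
    B.det ≤ (B + C).det := by
  by_cases h : B.det = 0
  · rw [h]; exact (hB.add hC).det_nonneg
  have hBp := hB.posDef_iff_det_ne_zero.2 h
  obtain ⟨Q, l, h1, h2, h0, h3⟩ := aux_pd_spectral hBp
  set S := Matrix.diagonal (fun r => √(l r)) * Q with hS
  set S' := Qᵀ * Matrix.diagonal (fun r => (√(l r))⁻¹) with hS'
  have hd : ∀ r, √(l r) ≠ 0 := fun r => (Real.sqrt_pos.2 (h0 r)).ne'
  have hSS : S' * S = 1 := by
    calc S' * S = Qᵀ * (Matrix.diagonal (fun r => (√(l r))⁻¹) * Matrix.diagonal (fun r => √(l r))) * Q := by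
          simp only [hS, hS', Matrix.mul_assoc]
      _ = 1 := by
          rw [Matrix.diagonal_mul_diagonal]
          simp [hd, h1]
  have hSS2 : S * S' = 1 := mul_eq_one_comm.1 hSS
  have hB' : B = Sᵀ * S := by
    calc B = Qᵀ * (Matrix.diagonal (fun r => √(l r)) * Matrix.diagonal (fun r => √(l r))) * Q := by
          rw [Matrix.diagonal_mul_diagonal]
          simp only [Real.mul_self_sqrt (h0 _).le]
          exact h3
      _ = _ := by simp only [hS, Matrix.transpose_mul, Matrix.diagonal_transpose, Matrix.mul_assoc]
  have hC' : C = Sᵀ * (S'ᵀ * C * S') * S := (aux_conj_cancel hSS).symm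
  have : B + C = Sᵀ * (1 + S'ᵀ * C * S') * S := by
    rw [Matrix.mul_add, Matrix.add_mul, ← hC', Matrix.mul_one, ← hB']
  have h1' := aux_det_one_add (aux_psd_conj hC S')
  rw [this, hB']
  simp only [Matrix.det_mul, Matrix.det_transpose]
  nlinarith [mul_self_nonneg S.det]

/-- Determinant of a congruence by an invertible matrix between different index types. -/
lemma aux_det_congr (P : Matrix ι κ ℝ) (P' : Matrix κ ι ℝ) (h1 : P * P' = 1) (h2 : P' * P = 1)
    (M : Matrix ι ι ℝ) : (Pᵀ * M * P).det = (P * Pᵀ).det * M.det := by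
  have hc : Fintype.card ι = Fintype.card κ := by
    classical
    let e : (κ → ℝ) ≃ₗ[ℝ] (ι → ℝ) := LinearEquiv.ofLinearMap (Matrix.mulVecLin P) (Matrix.mulVecLin P')
      (by rw [← Matrix.mulVecLin_mul, h1, Matrix.mulVecLin_one]) (by rw [← Matrix.mulVecLin_mul, h2, Matrix.mulVecLin_one])
    have := e.finrank_eq
    simpa using this.symm
  let e : κ ≃ ι := Fintype.equivOfCardEq hc.symm
  set R : Matrix ι ι ℝ := P.submatrix id e.symm with hR
  have hP : P = R.submatrix id e := by simp [hR]
  have h1 : Pᵀ * M * P = (Rᵀ * M * R).submatrix e e := by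
    rw [hP]
    rfl
  have h2 : P * Pᵀ = R * Rᵀ := by
    rw [hP, Matrix.transpose_submatrix]
    exact Matrix.submatrix_mul_equiv R Rᵀ id e id
  rw [h1, Matrix.det_submatrix_equiv_self, h2]
  simp only [Matrix.det_mul, Matrix.det_transpose]
  ring

lemma aux_inv_det_pos (P : Matrix ι κ ℝ) (P' : Matrix κ ι ℝ) (h1 : P * P' = 1) :
    0 < (P * Pᵀ).det := by
  have h : P'ᵀ * Pᵀ = 1 := by rw [← Matrix.transpose_mul, h1, Matrix.transpose_one]
  have := aux_pd_conj (Matrix.PosDef.one (n := κ) (R := ℝ)) Pᵀ P'ᵀ h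
  simpa using this.det_pos

end LinAlg

/-! ## Part 2: the capacity for general index types -/

section Cap

variable {k m : ℕ} {A : Fin k → Fin m → ℕ}
variable {D : Fin k → Type} {N : Fin m → Type}
  [∀ i, Fintype (D i)] [∀ i, DecidableEq (D i)] [∀ j, Fintype (N j)] [∀ j, DecidableEq (N j)]
variable {D' : Fin k → Type} {N' : Fin m → Type}
  [∀ i, Fintype (D' i)] [∀ i, DecidableEq (D' i)] [∀ j, Fintype (N' j)] [∀ j, DecidableEq (N' j)]

/-- The matrix whose determinant appears in the numerator. -/
noncomputable def gM (p : Fin m → ℝ) (V : ∀ i j, Fin (A i j) → Matrix (N j) (D i) ℝ)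
    (Y : ∀ j, Matrix (N j) (N j) ℝ) (i : Fin k) : Matrix (D i) (D i) ℝ :=
  ∑ j : Fin m, p j • ∑ a : Fin (A i j), (V i j a)ᵀ * Y j * V i j a

/-- Capacity functional for general index types. -/
noncomputable def gVal (p : Fin m → ℝ) (V : ∀ i j, Fin (A i j) → Matrix (N j) (D i) ℝ)
    (Y : ∀ j, Matrix (N j) (N j) ℝ) : ℝ :=
  (∏ i : Fin k, (gM p V Y i).det) / ∏ j : Fin m, (Y j).det ^ (p j)

/-- Capacity for general index types. -/
noncomputable def gCap (p : Fin m → ℝ) (V : ∀ i j, Fin (A i j) → Matrix (N j) (D i) ℝ) : ℝ :=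
  sInf { r : ℝ | ∃ Y : ∀ j : Fin m, Matrix (N j) (N j) ℝ, (∀ j, (Y j).PosDef) ∧ r = gVal p V Y }

/-- Extremizability for general index types. -/
def gExt (p : Fin m → ℝ) (V : ∀ i j, Fin (A i j) → Matrix (N j) (D i) ℝ) : Prop :=
  0 < gCap p V ∧ ∃ Y : ∀ j : Fin m, Matrix (N j) (N j) ℝ,
    (∀ j, (Y j).PosDef) ∧ gVal p V Y = gCap p V

lemma gM_psd {p : Fin m → ℝ} (hp : ∀ j, 0 < p j) (V : ∀ i j, Fin (A i j) → Matrix (N j) (D i) ℝ)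
    {Y : ∀ j, Matrix (N j) (N j) ℝ} (hY : ∀ j, (Y j).PosSemidef) (i : Fin k) :
    (gM p V Y i).PosSemidef := by
  unfold gM
  refine Matrix.posSemidef_sum _ fun j _ => ?_
  refine Matrix.PosSemidef.smul ?_ (hp j).le
  exact Matrix.posSemidef_sum _ fun a _ => aux_psd_conj (hY j) _

lemma gDen_pos (p : Fin m → ℝ) {Y : ∀ j, Matrix (N j) (N j) ℝ} (hY : ∀ j, (Y j).PosDef) :
    0 < ∏ j : Fin m, (Y j).det ^ (p j) :=
  Finset.prod_pos fun j _ => Real.rpow_pos_of_pos (hY j).det_pos _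

lemma gVal_nonneg {p : Fin m → ℝ} (hp : ∀ j, 0 < p j)
    (V : ∀ i j, Fin (A i j) → Matrix (N j) (D i) ℝ)
    {Y : ∀ j, Matrix (N j) (N j) ℝ} (hY : ∀ j, (Y j).PosDef) : 0 ≤ gVal p V Y :=
  div_nonneg (Finset.prod_nonneg fun i _ => (gM_psd hp V (fun j => (hY j).posSemidef) i).det_nonneg)
    (gDen_pos p hY).le

lemma gCap_le {p : Fin m → ℝ} (hp : ∀ j, 0 < p j)
    (V : ∀ i j, Fin (A i j) → Matrix (N j) (D i) ℝ)
    {Y : ∀ j, Matrix (N j) (N j) ℝ} (hY : ∀ j, (Y j).PosDef) : gCap p V ≤ gVal p V Y := by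
  refine csInf_le ⟨0, ?_⟩ ⟨Y, hY, rfl⟩
  rintro r ⟨Y, hY, rfl⟩
  exact gVal_nonneg hp V hY

lemma le_gCap {p : Fin m → ℝ} (V : ∀ i j, Fin (A i j) → Matrix (N j) (D i) ℝ) {c : ℝ}
    (h : ∀ Y : ∀ j, Matrix (N j) (N j) ℝ, (∀ j, (Y j).PosDef) → c ≤ gVal p V Y) :
    c ≤ gCap p V := by
  refine le_csInf ⟨_, fun j => 1, fun j => Matrix.PosDef.one, rfl⟩ ?_
  rintro r ⟨Y, hY, rfl⟩
  exact h Y hY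

lemma gCap_nonneg {p : Fin m → ℝ} (hp : ∀ j, 0 < p j)
    (V : ∀ i j, Fin (A i j) → Matrix (N j) (D i) ℝ) : 0 ≤ gCap p V :=
  le_gCap V fun _ hY => gVal_nonneg hp V hY

/-- The constant in the base change formula. -/
noncomputable def gFac (p : Fin m → ℝ) (P' : ∀ i, Matrix (D i) (D' i) ℝ) (Q : ∀ j, Matrix (N' j) (N j) ℝ) : ℝ :=
  (∏ i, (P' i * (P' i)ᵀ).det) * ∏ j, (Q j * (Q j)ᵀ).det ^ p j

lemma gFac_pos (p : Fin m → ℝ) (P : ∀ i, Matrix (D' i) (D i) ℝ) (P' : ∀ i, Matrix (D i) (D' i) ℝ)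
    (Q : ∀ j, Matrix (N' j) (N j) ℝ) (Q' : ∀ j, Matrix (N j) (N' j) ℝ)
    (hP' : ∀ i, P' i * P i = 1) (hQ : ∀ j, Q j * Q' j = 1) : 0 < gFac p P' Q :=
  mul_pos (Finset.prod_pos fun i _ => aux_inv_det_pos _ _ (hP' i))
    (Finset.prod_pos fun j _ => Real.rpow_pos_of_pos (aux_inv_det_pos _ _ (hQ j)) _)

lemma gM_base (p : Fin m → ℝ) (V : ∀ i j, Fin (A i j) → Matrix (N j) (D i) ℝ)
    (P' : ∀ i, Matrix (D i) (D' i) ℝ) (Q : ∀ j, Matrix (N' j) (N j) ℝ)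
    (Y : ∀ j, Matrix (N' j) (N' j) ℝ) (i : Fin k) :
    gM p (fun i j a => Q j * V i j a * P' i) Y i = 
      (P' i)ᵀ * gM p V (fun j => (Q j)ᵀ * Y j * Q j) i * P' i := by
  simp only [gM, Matrix.mul_sum, Matrix.sum_mul, Matrix.transpose_mul, Matrix.mul_smul, Matrix.smul_mul,
    Matrix.mul_assoc]

lemma gVal_base (p : Fin m → ℝ) (V : ∀ i j, Fin (A i j) → Matrix (N j) (D i) ℝ)
    (P : ∀ i, Matrix (D' i) (D i) ℝ) (P' : ∀ i, Matrix (D i) (D' i) ℝ)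
    (Q : ∀ j, Matrix (N' j) (N j) ℝ) (Q' : ∀ j, Matrix (N j) (N' j) ℝ)
    (hP : ∀ i, P i * P' i = 1) (hP' : ∀ i, P' i * P i = 1)
    (hQ : ∀ j, Q j * Q' j = 1) (hQ' : ∀ j, Q' j * Q j = 1) 
    (Y : ∀ j, Matrix (N' j) (N' j) ℝ) (hY : ∀ j, (Y j).PosDef) :
    gVal p (fun i j a => Q j * V i j a * P' i) Y = 
      gFac p P' Q * gVal p V (fun j => (Q j)ᵀ * Y j * Q j) := by
  have h2 : ∀ j, ((Q j)ᵀ * Y j * Q j).det ^ p j = (Q j * (Q j)ᵀ).det ^ p j * (Y j).det ^ p j := by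
    intro j
    rw [aux_det_congr (Q j) (Q' j) (hQ j) (hQ' j), Real.mul_rpow (aux_inv_det_pos _ _ (hQ j)).le 
      (hY j).det_pos.le]
  have h3 : (∏ j, (Q j * (Q j)ᵀ).det ^ p j) ≠ 0 := 
    (Finset.prod_pos fun j _ => Real.rpow_pos_of_pos (aux_inv_det_pos _ _ (hQ j)) _).ne'
  have h4 := (gDen_pos p hY).ne'
  unfold gVal gFac
  simp only [gM_base, aux_det_congr _ _ (hP' _) (hP _), h2, Finset.prod_mul_distrib]
  field_simp

lemma gCap_base {p : Fin m → ℝ} (hp : ∀ j, 0 < p j) (V : ∀ i j, Fin (A i j) → Matrix (N j) (D i) ℝ)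
    (P : ∀ i, Matrix (D' i) (D i) ℝ) (P' : ∀ i, Matrix (D i) (D' i) ℝ)
    (Q : ∀ j, Matrix (N' j) (N j) ℝ) (Q' : ∀ j, Matrix (N j) (N' j) ℝ)
    (hP : ∀ i, P i * P' i = 1) (hP' : ∀ i, P' i * P i = 1)
    (hQ : ∀ j, Q j * Q' j = 1) (hQ' : ∀ j, Q' j * Q j = 1) :
    gCap p (fun i j a => Q j * V i j a * P' i) = gFac p P' Q * gCap p V := by
  have hF := gFac_pos p P P' Q Q' hP' hQ
  apply le_antisymm
  · rw [← div_le_iff₀' hF]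
    refine le_gCap V fun Y hY => ?_
    rw [div_le_iff₀' hF]
    have hY' : ∀ j, ((Q' j)ᵀ * Y j * Q' j).PosDef := fun j => aux_pd_conj (hY j) _ (Q j) (hQ j)
    have h := gVal_base p V P P' Q Q' hP hP' hQ hQ' _ hY'
    have h2 : (fun j => (Q j)ᵀ * ((Q' j)ᵀ * Y j * Q' j) * Q j) = Y := by
      funext j
      have h3 : (Q j)ᵀ * (Q' j)ᵀ = 1 := by rw [← Matrix.transpose_mul, hQ', Matrix.transpose_one]
      calc (Q j)ᵀ * ((Q' j)ᵀ * Y j * Q' j) * Q j = ((Q j)ᵀ * (Q' j)ᵀ) * Y j * (Q' j * Q j) := by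
            simp only [Matrix.mul_assoc]
        _ = Y j := by rw [h3, hQ']; simp
    rw [h2] at h
    rw [← h]
    exact gCap_le hp _ hY'
  · refine le_gCap _ fun Y hY => ?_
    rw [gVal_base p V P P' Q Q' hP hP' hQ hQ' _ hY]
    exact mul_le_mul_of_nonneg_left (gCap_le hp _ fun j => aux_pd_conj (hY j) _ (Q' j) (hQ' j)) hF.le

lemma gExt_base {p : Fin m → ℝ} (hp : ∀ j, 0 < p j) (V : ∀ i j, Fin (A i j) → Matrix (N j) (D i) ℝ)
    (P : ∀ i, Matrix (D' i) (D i) ℝ) (P' : ∀ i, Matrix (D i) (D' i) ℝ)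
    (Q : ∀ j, Matrix (N' j) (N j) ℝ) (Q' : ∀ j, Matrix (N j) (N' j) ℝ)
    (hP : ∀ i, P i * P' i = 1) (hP' : ∀ i, P' i * P i = 1)
    (hQ : ∀ j, Q j * Q' j = 1) (hQ' : ∀ j, Q' j * Q j = 1) (h : gExt p V) :
    gExt p (fun i j a => Q j * V i j a * P' i) := by
  have hF := gFac_pos p P P' Q Q' hP' hQ
  obtain ⟨h0, Y, hY, hYe⟩ := h
  have hc := gCap_base hp V P P' Q Q' hP hP' hQ hQ'
  refine ⟨by rw [hc]; exact mul_pos hF h0, fun j => (Q' j)ᵀ * Y j * Q' j, 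
    fun j => aux_pd_conj (hY j) _ (Q j) (hQ j), ?_⟩
  have hY' : ∀ j, ((Q' j)ᵀ * Y j * Q' j).PosDef := fun j => aux_pd_conj (hY j) _ (Q j) (hQ j)
  have h := gVal_base p V P P' Q Q' hP hP' hQ hQ' _ hY'
  have h2 : (fun j => (Q j)ᵀ * ((Q' j)ᵀ * Y j * Q' j) * Q j) = Y := by
    funext j
    have h3 : (Q j)ᵀ * (Q' j)ᵀ = 1 := by rw [← Matrix.transpose_mul, hQ', Matrix.transpose_one]
    calc (Q j)ᵀ * ((Q' j)ᵀ * Y j * Q' j) * Q j = ((Q j)ᵀ * (Q' j)ᵀ) * Y j * (Q' j * Q j) := by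
          simp only [Matrix.mul_assoc]
      _ = Y j := by rw [h3, hQ']; simp
  rw [h, h2, hc, hYe]

end Cap

/-! ## Part 3: block triangular data -/

section TwoBlock

variable {k m : ℕ} {A : Fin k → Fin m → ℕ}
variable {D₁ D₂ : Fin k → Type} {N₁ N₂ : Fin m → Type}
  [∀ i, Fintype (D₁ i)] [∀ i, DecidableEq (D₁ i)] [∀ j, Fintype (N₁ j)] [∀ j, DecidableEq (N₁ j)]
  [∀ i, Fintype (D₂ i)] [∀ i, DecidableEq (D₂ i)] [∀ j, Fintype (N₂ j)] [∀ j, DecidableEq (N₂ j)]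

/-- Block upper triangular datum. -/
def tb (V₁ : ∀ i j, Fin (A i j) → Matrix (N₁ j) (D₁ i) ℝ)
    (X : ∀ i j, Fin (A i j) → Matrix (N₁ j) (D₂ i) ℝ)
    (V₂ : ∀ i j, Fin (A i j) → Matrix (N₂ j) (D₂ i) ℝ) :
    ∀ i j, Fin (A i j) → Matrix (N₁ j ⊕ N₂ j) (D₁ i ⊕ D₂ i) ℝ :=
  fun i j a => Matrix.fromBlocks (V₁ i j a) (X i j a) 0 (V₂ i j a)

/-- Off-diagonal block. -/
noncomputable def tbB (p : Fin m → ℝ) (V₁ : ∀ i j, Fin (A i j) → Matrix (N₁ j) (D₁ i) ℝ)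
    (X : ∀ i j, Fin (A i j) → Matrix (N₁ j) (D₂ i) ℝ) (Y : ∀ j, Matrix (N₁ j) (N₁ j) ℝ) (i : Fin k) :
    Matrix (D₁ i) (D₂ i) ℝ := ∑ j : Fin m, p j • ∑ a : Fin (A i j), (V₁ i j a)ᵀ * Y j * X i j a

lemma tb_gM (p : Fin m → ℝ) (V₁ : ∀ i j, Fin (A i j) → Matrix (N₁ j) (D₁ i) ℝ)
    (X : ∀ i j, Fin (A i j) → Matrix (N₁ j) (D₂ i) ℝ)
    (V₂ : ∀ i j, Fin (A i j) → Matrix (N₂ j) (D₂ i) ℝ)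
    (Y₁ : ∀ j, Matrix (N₁ j) (N₁ j) ℝ) (Y₂ : ∀ j, Matrix (N₂ j) (N₂ j) ℝ) (i : Fin k) :
    gM p (tb V₁ X V₂) (fun j => Matrix.fromBlocks (Y₁ j) 0 0 (Y₂ j)) i =
      Matrix.fromBlocks (gM p V₁ Y₁ i) (tbB p V₁ X Y₁ i) (tbB p X V₁ Y₁ i) 
        (gM p X Y₁ i + gM p V₂ Y₂ i) := by
  ext (x | x) (y | y) <;>
  simp [gM, tb, tbB, Matrix.sum_apply, Matrix.fromBlocks_multiply, Matrix.fromBlocks_transpose, 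
    Finset.sum_add_distrib, mul_add]

lemma tbB_transpose (p : Fin m → ℝ) (V₁ : ∀ i j, Fin (A i j) → Matrix (N₁ j) (D₁ i) ℝ)
    (X : ∀ i j, Fin (A i j) → Matrix (N₁ j) (D₂ i) ℝ)
    {Y₁ : ∀ j, Matrix (N₁ j) (N₁ j) ℝ} (hY : ∀ j, (Y₁ j)ᵀ = Y₁ j) (i : Fin k) :
    tbB p X V₁ Y₁ i = (tbB p V₁ X Y₁ i)ᵀ := by
  simp [tbB, Matrix.transpose_sum, Matrix.transpose_smul, Matrix.transpose_mul, hY, Matrix.mul_assoc]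

lemma tb_psd {p : Fin m → ℝ} (hp : ∀ j, 0 < p j) (V₁ : ∀ i j, Fin (A i j) → Matrix (N₁ j) (D₁ i) ℝ)
    (X : ∀ i j, Fin (A i j) → Matrix (N₁ j) (D₂ i) ℝ)
    {Y₁ : ∀ j, Matrix (N₁ j) (N₁ j) ℝ} (hY : ∀ j, (Y₁ j).PosSemidef) (i : Fin k) :
    (Matrix.fromBlocks (gM p V₁ Y₁ i) (tbB p V₁ X Y₁ i) (tbB p X V₁ Y₁ i) 
        (gM p X Y₁ i)).PosSemidef := by
  have h := gM_psd (D := fun i => D₁ i ⊕ D₂ i) hp (fun i j a => Matrix.fromCols (V₁ i j a) (X i j a)) hY i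
  convert h using 1
  ext (x | x) (y | y) <;>
  simp [gM, tbB, Matrix.sum_apply, Matrix.mul_apply, Matrix.transpose_apply]

lemma tb_det_le {p : Fin m → ℝ} (hp : ∀ j, 0 < p j)
    (V₁ : ∀ i j, Fin (A i j) → Matrix (N₁ j) (D₁ i) ℝ)
    (X : ∀ i j, Fin (A i j) → Matrix (N₁ j) (D₂ i) ℝ)
    (V₂ : ∀ i j, Fin (A i j) → Matrix (N₂ j) (D₂ i) ℝ)
    {Y₁ : ∀ j, Matrix (N₁ j) (N₁ j) ℝ} {Y₂ : ∀ j, Matrix (N₂ j) (N₂ j) ℝ}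
    (hY₁ : ∀ j, (Y₁ j).PosDef) (hY₂ : ∀ j, (Y₂ j).PosDef) (i : Fin k) :
    (gM p V₁ Y₁ i).det * (gM p V₂ Y₂ i).det ≤ 
      (gM p (tb V₁ X V₂) (fun j => Matrix.fromBlocks (Y₁ j) 0 0 (Y₂ j)) i).det := by
  rw [tb_gM]
  have h1 := gM_psd hp V₁ (fun j => (hY₁ j).posSemidef) i
  have h2 := gM_psd hp V₂ (fun j => (hY₂ j).posSemidef) i
  have hpsd := tb_psd hp V₁ X (fun j => (hY₁ j).posSemidef) i
  have hs := tbB_transpose p V₁ X (Y₁ := Y₁) (fun j => by simpa using (hY₁ j).isHermitian.eq) i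
  by_cases h0 : (gM p V₁ Y₁ i).det = 0
  · rw [h0, zero_mul]
    have h3 : (Matrix.fromBlocks (0 : Matrix (D₁ i) (D₁ i) ℝ) 0 0 (gM p V₂ Y₂ i)).PosSemidef := by
      have := aux_psd_conj h2 (Matrix.fromCols (0 : Matrix (D₂ i) (D₁ i) ℝ) (1 : Matrix (D₂ i) (D₂ i) ℝ))
      convert this using 1
      ext (x | x) (y | y) <;> simp [Matrix.mul_apply, Matrix.one_apply]
    have := (hpsd.add h3).det_nonneg
    simpa [Matrix.fromBlocks_add] using this
  · have hpd := h1.posDef_iff_det_ne_zero.2 h0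
    let _ : Invertible (gM p V₁ Y₁ i) := (gM p V₁ Y₁ i).invertibleOfIsUnitDet (isUnit_iff_ne_zero.2 h0)
    rw [Matrix.det_fromBlocks₁₁]
    refine mul_le_mul_of_nonneg_left ?_ hpd.det_pos.le
    rw [hs] at hpsd ⊢
    rw [← Matrix.conjTranspose_eq_transpose_of_trivial, Matrix.PosDef.fromBlocks₁₁ _ _ hpd] at hpsd
    rw [Matrix.conjTranspose_eq_transpose_of_trivial] at hpsd
    have := aux_det_mono h2 hpsd
    refine this.trans_eq ?_
    congr 1
    rw [Matrix.invOf_eq_nonsing_inv]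
    abel

lemma tb_lower {p : Fin m → ℝ} (hp : ∀ j, 0 < p j)
    (V₁ : ∀ i j, Fin (A i j) → Matrix (N₁ j) (D₁ i) ℝ)
    (X : ∀ i j, Fin (A i j) → Matrix (N₁ j) (D₂ i) ℝ)
    (V₂ : ∀ i j, Fin (A i j) → Matrix (N₂ j) (D₂ i) ℝ) :
    gCap p V₁ * gCap p V₂ ≤ gCap p (tb V₁ X V₂) := by
  refine le_gCap _ fun Y hY => ?_
  have key : ∀ j, ∃ (Y₁ : Matrix (N₁ j) (N₁ j) ℝ) (Y₂ : Matrix (N₂ j) (N₂ j) ℝ)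
      (Z : Matrix (N₁ j) (N₂ j) ℝ), Y₁.PosDef ∧ Y₂.PosDef ∧ 
      Y j = (Matrix.fromBlocks 1 Z 0 1)ᵀ * Matrix.fromBlocks Y₁ 0 0 Y₂ * Matrix.fromBlocks 1 Z 0 1 := by
    intro j
    set a := (Y j).toBlocks₁₁
    set b := (Y j).toBlocks₁₂
    set c := (Y j).toBlocks₂₂
    have hbt : (Y j).toBlocks₂₁ = bᵀ := by
      ext x y
      have := congrFun (congrFun (hY j).isHermitian.eq (Sum.inr x)) (Sum.inl y)
      simpa [Matrix.conjTranspose_apply, Matrix.toBlocks₂₁, b, Matrix.toBlocks₁₂] using this.symm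
    have hYj : Y j = Matrix.fromBlocks a b bᵀ c := by
      rw [← hbt]; exact (Matrix.fromBlocks_toBlocks _).symm
    have ha : a.PosDef := by
      have := (hY j).submatrix (e := Sum.inl) Sum.inl_injective
      exact this
    have hau : IsUnit a.det := isUnit_iff_ne_zero.2 ha.det_pos.ne'
    have hat : aᵀ = a := by simpa using ha.isHermitian.eq
    have hait : (a⁻¹)ᵀ = a⁻¹ := by rw [Matrix.transpose_nonsing_inv, hat]
    have hdec : Y j = (Matrix.fromBlocks 1 (a⁻¹ * b) 0 1)ᵀ * 
        Matrix.fromBlocks a 0 0 (c - bᵀ * a⁻¹ * b) * Matrix.fromBlocks 1 (a⁻¹ * b) 0 1 := by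
      rw [hYj, Matrix.fromBlocks_transpose, Matrix.fromBlocks_multiply, Matrix.fromBlocks_multiply]
      simp only [Matrix.transpose_one, Matrix.transpose_mul, Matrix.transpose_zero, hait, Matrix.one_mul,
        Matrix.mul_zero, Matrix.zero_mul, add_zero, zero_add, Matrix.mul_one]
      rw [Matrix.mul_assoc bᵀ a⁻¹ a, Matrix.nonsing_inv_mul _ hau, Matrix.mul_one, ← Matrix.mul_assoc a,
        Matrix.mul_nonsing_inv _ hau, Matrix.one_mul, Matrix.mul_assoc bᵀ]
      congr 1
      abel
    refine ⟨a, c - bᵀ * a⁻¹ * b, a⁻¹ * b, ha, ?_, hdec⟩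
    have h1 : (Matrix.fromBlocks (1 : Matrix (N₁ j) (N₁ j) ℝ) (a⁻¹ * b) 0 (1 : Matrix (N₂ j) (N₂ j) ℝ)) *
        (Matrix.fromBlocks 1 (-(a⁻¹ * b)) 0 1) = 1 := by
      rw [Matrix.fromBlocks_multiply, ← Matrix.fromBlocks_one]
      simp
    have h2 := aux_pd_conj (hY j) (Matrix.fromBlocks 1 (-(a⁻¹ * b)) 0 1) _ h1
    rw [hdec, aux_conj_cancel h1] at h2
    have := h2.submatrix (e := Sum.inr) Sum.inr_injective
    exact this
  choose Y₁ Y₂ Z hY₁ hY₂ hYe using key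
  have h1 : gVal p (tb V₁ X V₂) Y = gVal p (tb V₁ (fun i j a => X i j a + Z j * V₂ i j a) V₂) 
      (fun j => Matrix.fromBlocks (Y₁ j) 0 0 (Y₂ j)) := by
    unfold gVal
    congr 1
    · refine Finset.prod_congr rfl fun i _ => ?_
      congr 1
      unfold gM
      refine Finset.sum_congr rfl fun j _ => ?_
      congr 1
      refine Finset.sum_congr rfl fun a _ => ?_
      have : tb V₁ (fun i j a => X i j a + Z j * V₂ i j a) V₂ i j a = 
          (Matrix.fromBlocks (1 : Matrix (N₁ j) (N₁ j) ℝ) (Z j) 0 (1 : Matrix (N₂ j) (N₂ j) ℝ) : 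
            Matrix (N₁ j ⊕ N₂ j) (N₁ j ⊕ N₂ j) ℝ) * 
            (tb V₁ X V₂ i j a : Matrix (N₁ j ⊕ N₂ j) (D₁ i ⊕ D₂ i) ℝ) := by
        simp [tb, Matrix.fromBlocks_multiply]
      rw [this, hYe, Matrix.transpose_mul]
      simp only [Matrix.mul_assoc]
    · refine Finset.prod_congr rfl fun j _ => ?_
      congr 1
      rw [hYe]
      simp [Matrix.det_mul, Matrix.det_transpose]
  rw [h1]
  have h2 : gVal p V₁ Y₁ * gVal p V₂ Y₂ ≤ gVal p (tb V₁ (fun i j a => X i j a + Z j * V₂ i j a) V₂) 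
      (fun j => Matrix.fromBlocks (Y₁ j) 0 0 (Y₂ j)) := by
    unfold gVal
    rw [div_mul_div_comm, ← Finset.prod_mul_distrib, ← Finset.prod_mul_distrib]
    have h3 : ∀ j, (Y₁ j).det ^ p j * (Y₂ j).det ^ p j = (Matrix.fromBlocks (Y₁ j) 0 0 (Y₂ j)).det ^ p j := by
      intro j
      rw [Matrix.det_fromBlocks_zero₂₁, Real.mul_rpow (hY₁ j).det_pos.le (hY₂ j).det_pos.le]
    simp only [h3]
    refine div_le_div_of_nonneg_right (Finset.prod_le_prod (fun i _ => ?_) fun i _ => ?_) 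
      (Finset.prod_nonneg fun j _ => Real.rpow_nonneg ?_ _)
    · exact mul_nonneg (gM_psd hp V₁ (fun j => (hY₁ j).posSemidef) i).det_nonneg
        (gM_psd hp V₂ (fun j => (hY₂ j).posSemidef) i).det_nonneg
    · exact tb_det_le hp _ _ _ hY₁ hY₂ i
    · rw [Matrix.det_fromBlocks_zero₂₁]
      exact mul_nonneg (hY₁ j).det_pos.le (hY₂ j).det_pos.le
  exact (mul_le_mul (gCap_le hp _ hY₁) (gCap_le hp _ hY₂) (gCap_nonneg hp _) (gVal_nonneg hp _ hY₁)).trans h2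

lemma aux_pd_fromBlocks {ι κ : Type} [Fintype ι] [DecidableEq ι] [Fintype κ] [DecidableEq κ]
    {Y₁ : Matrix ι ι ℝ} {Y₂ : Matrix κ κ ℝ} (h₁ : Y₁.PosDef) (h₂ : Y₂.PosDef) :
    (Matrix.fromBlocks Y₁ 0 0 Y₂).PosDef := by
  have hp : (Matrix.fromBlocks Y₁ 0 0 Y₂).PosSemidef := by
    let _ : Invertible Y₁ := Y₁.invertibleOfIsUnitDet (isUnit_iff_ne_zero.2 h₁.det_pos.ne')
    have := (Matrix.PosDef.fromBlocks₁₁ (0 : Matrix ι κ ℝ) Y₂ h₁).2 (by simpa using h₂.posSemidef)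
    simpa using this
  rw [hp.posDef_iff_det_ne_zero, Matrix.det_fromBlocks_zero₂₁]
  exact (mul_pos h₁.det_pos h₂.det_pos).ne'

/-- The auxiliary function of the scaling parameter. -/
noncomputable def tbG (p : Fin m → ℝ) (V₁ : ∀ i j, Fin (A i j) → Matrix (N₁ j) (D₁ i) ℝ)
    (X : ∀ i j, Fin (A i j) → Matrix (N₁ j) (D₂ i) ℝ)
    (V₂ : ∀ i j, Fin (A i j) → Matrix (N₂ j) (D₂ i) ℝ)
    (Y₁ : ∀ j, Matrix (N₁ j) (N₁ j) ℝ) (Y₂ : ∀ j, Matrix (N₂ j) (N₂ j) ℝ) (ε : ℝ) : ℝ :=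
  (∏ i, (Matrix.fromBlocks (gM p V₁ Y₁ i) (ε • tbB p V₁ X Y₁ i) (tbB p X V₁ Y₁ i) 
        (ε • gM p X Y₁ i + gM p V₂ Y₂ i)).det) / 
    ((∏ j : Fin m, (Y₁ j).det ^ (p j)) * ∏ j : Fin m, (Y₂ j).det ^ (p j))

lemma tbG_cont (p : Fin m → ℝ) (V₁ : ∀ i j, Fin (A i j) → Matrix (N₁ j) (D₁ i) ℝ)
    (X : ∀ i j, Fin (A i j) → Matrix (N₁ j) (D₂ i) ℝ)
    (V₂ : ∀ i j, Fin (A i j) → Matrix (N₂ j) (D₂ i) ℝ)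
    (Y₁ : ∀ j, Matrix (N₁ j) (N₁ j) ℝ) (Y₂ : ∀ j, Matrix (N₂ j) (N₂ j) ℝ) :
    Continuous (tbG p V₁ X V₂ Y₁ Y₂) := by
  unfold tbG
  refine Continuous.div_const (continuous_finsetProd _ fun i _ => ?_) _
  refine Continuous.matrix_det ?_
  refine Continuous.matrix_fromBlocks ?_ ?_ ?_ ?_ <;> fun_prop

lemma tbG_zero (p : Fin m → ℝ) (V₁ : ∀ i j, Fin (A i j) → Matrix (N₁ j) (D₁ i) ℝ)
    (X : ∀ i j, Fin (A i j) → Matrix (N₁ j) (D₂ i) ℝ)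
    (V₂ : ∀ i j, Fin (A i j) → Matrix (N₂ j) (D₂ i) ℝ)
    (Y₁ : ∀ j, Matrix (N₁ j) (N₁ j) ℝ) (Y₂ : ∀ j, Matrix (N₂ j) (N₂ j) ℝ) :
    tbG p V₁ X V₂ Y₁ Y₂ 0 = gVal p V₁ Y₁ * gVal p V₂ Y₂ := by
  simp [tbG, gVal, Matrix.det_fromBlocks_zero₁₂, Finset.prod_mul_distrib, div_mul_div_comm]

lemma tb_scale {p : Fin m → ℝ} 
    (V₁ : ∀ i j, Fin (A i j) → Matrix (N₁ j) (D₁ i) ℝ)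
    (X : ∀ i j, Fin (A i j) → Matrix (N₁ j) (D₂ i) ℝ)
    (V₂ : ∀ i j, Fin (A i j) → Matrix (N₂ j) (D₂ i) ℝ)
    {Y₁ : ∀ j, Matrix (N₁ j) (N₁ j) ℝ} {Y₂ : ∀ j, Matrix (N₂ j) (N₂ j) ℝ}
    (hY₁ : ∀ j, (Y₁ j).PosDef) (hY₂ : ∀ j, (Y₂ j).PosDef) {τ : ℝ} (hτ : 0 < τ) :
    gVal p (tb V₁ X V₂) (fun j => Matrix.fromBlocks (Y₁ j) 0 0 (τ • Y₂ j)) =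
      τ ^ ((∑ i, (Fintype.card (D₂ i) : ℝ)) - ∑ j, p j * (Fintype.card (N₂ j) : ℝ)) * 
        tbG p V₁ X V₂ Y₁ Y₂ τ⁻¹ := by
  have hM : ∀ i, gM p V₂ (fun j => τ • Y₂ j) i = τ • gM p V₂ Y₂ i := by
    intro i
    simp only [gM, Finset.smul_sum, Matrix.mul_smul, Matrix.smul_mul]
    refine Finset.sum_congr rfl fun j _ => Finset.sum_congr rfl fun a _ => smul_comm _ _ _
  have hdet : ∀ i, (gM p (tb V₁ X V₂) (fun j => Matrix.fromBlocks (Y₁ j) 0 0 (τ • Y₂ j)) i).det = 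
      τ ^ (Fintype.card (D₂ i) : ℝ) * (Matrix.fromBlocks (gM p V₁ Y₁ i) (τ⁻¹ • tbB p V₁ X Y₁ i) (tbB p X V₁ Y₁ i) 
        (τ⁻¹ • gM p X Y₁ i + gM p V₂ Y₂ i)).det := by
    intro i
    rw [tb_gM]
    have : Matrix.fromBlocks (gM p V₁ Y₁ i) (tbB p V₁ X Y₁ i) (tbB p X V₁ Y₁ i) 
        (gM p X Y₁ i + gM p V₂ (fun j => τ • Y₂ j) i) = 
        Matrix.fromBlocks (gM p V₁ Y₁ i) (τ⁻¹ • tbB p V₁ X Y₁ i) (tbB p X V₁ Y₁ i) 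
        (τ⁻¹ • gM p X Y₁ i + gM p V₂ Y₂ i) * Matrix.fromBlocks 1 0 0 (τ • 1) := by
      rw [Matrix.fromBlocks_multiply, hM]
      simp [smul_smul, hτ.ne', smul_add]
    rw [this, Matrix.det_mul, Matrix.det_fromBlocks_zero₂₁, Real.rpow_natCast]
    simp [mul_comm]
  have hden : ∀ j, (Matrix.fromBlocks (Y₁ j) 0 0 (τ • Y₂ j)).det ^ p j = 
      τ ^ (p j * (Fintype.card (N₂ j) : ℝ)) * ((Y₁ j).det ^ p j * (Y₂ j).det ^ p j) := by
    intro j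
    rw [Matrix.det_fromBlocks_zero₂₁, Matrix.det_smul, Real.mul_rpow (hY₁ j).det_pos.le 
      (mul_nonneg (by positivity) (hY₂ j).det_pos.le), Real.mul_rpow (by positivity) (hY₂ j).det_pos.le,
      ← Real.rpow_natCast, ← Real.rpow_mul hτ.le, mul_comm (p j)]
    ring
  unfold gVal tbG
  simp only [hdet, hden, Finset.prod_mul_distrib]
  rw [Real.rpow_sub hτ, Real.rpow_sum_of_pos hτ, Real.rpow_sum_of_pos hτ, mul_div_mul_comm]

lemma tb_upper {p : Fin m → ℝ} (hp : ∀ j, 0 < p j)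
    (V₁ : ∀ i j, Fin (A i j) → Matrix (N₁ j) (D₁ i) ℝ)
    (X : ∀ i j, Fin (A i j) → Matrix (N₁ j) (D₂ i) ℝ)
    (V₂ : ∀ i j, Fin (A i j) → Matrix (N₂ j) (D₂ i) ℝ)
    (hb : ∑ i, (Fintype.card (D₂ i) : ℝ) = ∑ j, p j * (Fintype.card (N₂ j) : ℝ)) :
    gCap p (tb V₁ X V₂) ≤ gCap p V₁ * gCap p V₂ := by
  have h1 : ∀ (Y₁ : ∀ j, Matrix (N₁ j) (N₁ j) ℝ) (Y₂ : ∀ j, Matrix (N₂ j) (N₂ j) ℝ),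
     (∀ j, (Y₁ j).PosDef) → (∀ j, (Y₂ j).PosDef) → 
      gCap p (tb V₁ X V₂) ≤ gVal p V₁ Y₁ * gVal p V₂ Y₂ := by
    intro Y₁ Y₂ hY₁ hY₂
    rw [← tbG_zero p V₁ X V₂]
    have ht : Filter.Tendsto (fun τ : ℝ => tbG p V₁ X V₂ Y₁ Y₂ τ⁻¹) Filter.atTop (nhds (tbG p V₁ X V₂ Y₁ Y₂ 0)) :=
      ((tbG_cont p V₁ X V₂ Y₁ Y₂).tendsto 0).comp tendsto_inv_atTop_zero
    refine ge_of_tendsto ht ?_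
    filter_upwards [Filter.eventually_gt_atTop 0] with τ hτ
    have := tb_scale (p := p) V₁ X V₂ hY₁ hY₂ hτ
    rw [hb, sub_self, Real.rpow_zero, one_mul] at this
    rw [← this]
    exact gCap_le hp _ fun j => aux_pd_fromBlocks (hY₁ j) ((hY₂ j).smul hτ)
  have h2 : ∀ (Y₁ : ∀ j, Matrix (N₁ j) (N₁ j) ℝ), (∀ j, (Y₁ j).PosDef) → 
      gCap p (tb V₁ X V₂) ≤ gVal p V₁ Y₁ * gCap p V₂ := by
    intro Y₁ hY₁
    rcases (gVal_nonneg hp V₁ hY₁).eq_or_lt with h0 | h0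
    · have := h1 Y₁ (fun j => 1) hY₁ (fun j => Matrix.PosDef.one)
      rw [← h0] at this ⊢
      simpa using this
    · rw [← div_le_iff₀' h0]
      refine le_gCap _ fun Y₂ hY₂ => ?_
      rw [div_le_iff₀' h0]
      exact h1 Y₁ Y₂ hY₁ hY₂
  rcases (gCap_nonneg hp V₂).eq_or_lt with h0 | h0
  · have := h2 (fun j => 1) (fun j => Matrix.PosDef.one)
    rw [← h0] at this ⊢
    simpa using this
  · rw [← div_le_iff₀ h0]
    refine le_gCap _ fun Y₁ hY₁ => ?_
    rw [div_le_iff₀ h0]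
    exact h2 Y₁ hY₁

lemma tb_cap {p : Fin m → ℝ} (hp : ∀ j, 0 < p j)
    (V₁ : ∀ i j, Fin (A i j) → Matrix (N₁ j) (D₁ i) ℝ)
    (X : ∀ i j, Fin (A i j) → Matrix (N₁ j) (D₂ i) ℝ)
    (V₂ : ∀ i j, Fin (A i j) → Matrix (N₂ j) (D₂ i) ℝ)
    (hb : ∑ i, (Fintype.card (D₂ i) : ℝ) = ∑ j, p j * (Fintype.card (N₂ j) : ℝ)) :
    gCap p (tb V₁ X V₂) = gCap p V₁ * gCap p V₂ := 
  le_antisymm (tb_upper hp V₁ X V₂ hb) (tb_lower hp V₁ X V₂)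

lemma tb_ext {p : Fin m → ℝ} (hp : ∀ j, 0 < p j)
    (V₁ : ∀ i j, Fin (A i j) → Matrix (N₁ j) (D₁ i) ℝ)
    (V₂ : ∀ i j, Fin (A i j) → Matrix (N₂ j) (D₂ i) ℝ)
    (hb : ∑ i, (Fintype.card (D₂ i) : ℝ) = ∑ j, p j * (Fintype.card (N₂ j) : ℝ))
    (h₁ : gExt p V₁) (h₂ : gExt p V₂) : gExt p (tb V₁ (fun _ _ _ => 0) V₂) := by
  obtain ⟨h1, Y₁, hY₁, he₁⟩ := h₁
  obtain ⟨h2, Y₂, hY₂, he₂⟩ := h₂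
  have hc := tb_cap hp V₁ (fun _ _ _ => 0) V₂ hb
  refine ⟨by rw [hc]; positivity, fun j => Matrix.fromBlocks (Y₁ j) 0 0 (Y₂ j), 
    fun j => aux_pd_fromBlocks (hY₁ j) (hY₂ j), ?_⟩
  have h := tb_scale (p := p) V₁ (fun _ _ _ => 0) V₂ hY₁ hY₂ one_pos
  simp only [one_smul, Real.one_rpow, inv_one, one_mul] at h
  rw [h, hc, ← he₁, ← he₂]
  have hB : ∀ i, tbB p V₁ (fun i j (a : Fin (A i j)) => (0 : Matrix (N₁ j) (D₂ i) ℝ)) Y₁ i = 0 := by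
    intro i; simp [tbB]
  have hC : ∀ i, gM p (fun i j (a : Fin (A i j)) => (0 : Matrix (N₁ j) (D₂ i) ℝ)) Y₁ i = 0 := by
    intro i; simp [gM]
  simp [tbG, gVal, Matrix.det_fromBlocks_zero₁₂, Finset.prod_mul_distrib, div_mul_div_comm, hB, hC]

/-- Semistability: a feasible balanced block triangular datum has non-positive slope on the
sub-block. -/
lemma tb_semistable {p : Fin m → ℝ} (hp : ∀ j, 0 < p j)
    (V₁ : ∀ i j, Fin (A i j) → Matrix (N₁ j) (D₁ i) ℝ)
    (X : ∀ i j, Fin (A i j) → Matrix (N₁ j) (D₂ i) ℝ)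
    (V₂ : ∀ i j, Fin (A i j) → Matrix (N₂ j) (D₂ i) ℝ)
    (hf : 0 < gCap p (tb V₁ X V₂)) :
    ∑ j, p j * (Fintype.card (N₂ j) : ℝ) ≤ ∑ i, (Fintype.card (D₂ i) : ℝ) := by
  by_contra hlt
  push Not at hlt
  set e := (∑ i, (Fintype.card (D₂ i) : ℝ)) - ∑ j, p j * (Fintype.card (N₂ j) : ℝ) with he
  have he0 : 0 < -e := by linarith
  have ht : Filter.Tendsto (fun τ : ℝ => τ ^ e * tbG p V₁ X V₂ (fun j => 1) (fun j => 1) τ⁻¹) Filter.atTop 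
      (nhds (0 * tbG p V₁ X V₂ (fun j => 1) (fun j => 1) 0)) := by
    refine Filter.Tendsto.mul ?_ (((tbG_cont p V₁ X V₂ _ _).tendsto 0).comp tendsto_inv_atTop_zero)
    have := tendsto_rpow_neg_atTop he0
    simpa using this
  rw [zero_mul] at ht
  have : gCap p (tb V₁ X V₂) ≤ 0 := by
    refine ge_of_tendsto ht ?_
    filter_upwards [Filter.eventually_gt_atTop 0] with τ hτ
    have := tb_scale (p := p) V₁ X V₂ (Y₁ := fun j => 1) (Y₂ := fun j => 1) 
      (fun j => Matrix.PosDef.one) (fun j => Matrix.PosDef.one) hτ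
    rw [← he] at this
    rw [← this]
    exact gCap_le hp _ fun j => aux_pd_fromBlocks Matrix.PosDef.one (Matrix.PosDef.one.smul hτ)
  linarith

end TwoBlock

/-! ## Part 4: subrepresentations -/

section Sub

lemma aux_adapt {ι : Type} [Fintype ι] [DecidableEq ι] (U : Submodule ℝ (ι → ℝ)) :
    ∃ (P' : Matrix ι (Fin (Module.finrank ℝ U) ⊕ Fin (Module.finrank ℝ ((ι → ℝ) ⧸ U))) ℝ)
      (P : Matrix (Fin (Module.finrank ℝ U) ⊕ Fin (Module.finrank ℝ ((ι → ℝ) ⧸ U))) ι ℝ),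
      P * P' = 1 ∧ P' * P = 1 ∧ (∀ c, (fun x => P' x (Sum.inl c)) ∈ U) ∧
      ∀ y ∈ U, ∀ r, (P.mulVec y) (Sum.inr r) = 0 := by
  let b := Module.Basis.sumQuot (Module.finBasis ℝ U) (Module.finBasis ℝ ((ι → ℝ) ⧸ U))
  refine ⟨(Pi.basisFun ℝ ι).toMatrix b, b.toMatrix (Pi.basisFun ℝ ι), 
    Module.Basis.toMatrix_mul_toMatrix_flip _ _, Module.Basis.toMatrix_mul_toMatrix_flip _ _, ?_, ?_⟩
  · intro c
    have : (fun x => (Pi.basisFun ℝ ι).toMatrix b x (Sum.inl c)) = Module.finBasis ℝ U c := by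
      funext x
      simp [Module.Basis.toMatrix_apply, b]
    rw [this]
    exact Submodule.coe_mem _
  · intro y hy r
    have h1 : (b.toMatrix (Pi.basisFun ℝ ι)).mulVec y = b.repr y := by
      have := Module.Basis.toMatrix_mulVec_repr (Pi.basisFun ℝ ι) b y
      have h0 : ⇑((Pi.basisFun ℝ ι).repr y) = y := by funext x; simp
      rwa [h0] at this
    rw [h1]
    exact Module.Basis.sumQuot_repr_inr_of_mem _ _ _ hy _

variable {k m : ℕ} {A : Fin k → Fin m → ℕ}
variable {D : Fin k → Type} {N : Fin m → Type}
  [∀ i, Fintype (D i)] [∀ i, DecidableEq (D i)] [∀ j, Fintype (N j)] [∀ j, DecidableEq (N j)]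

lemma sub_adapt (V : ∀ i j, Fin (A i j) → Matrix (N j) (D i) ℝ)
    (U : ∀ i, Submodule ℝ (D i → ℝ)) (W : ∀ j, Submodule ℝ (N j → ℝ))
    (hUW : ∀ i j a, ∀ x ∈ U i, (V i j a).mulVec x ∈ W j) :
    ∃ (P : ∀ i, Matrix (Fin (Module.finrank ℝ (U i)) ⊕ Fin (Module.finrank ℝ ((D i → ℝ) ⧸ U i))) (D i) ℝ)
      (P' : ∀ i, Matrix (D i) (Fin (Module.finrank ℝ (U i)) ⊕ Fin (Module.finrank ℝ ((D i → ℝ) ⧸ U i))) ℝ)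
      (Q : ∀ j, Matrix (Fin (Module.finrank ℝ (W j)) ⊕ Fin (Module.finrank ℝ ((N j → ℝ) ⧸ W j))) (N j) ℝ)
      (Q' : ∀ j, Matrix (N j) (Fin (Module.finrank ℝ (W j)) ⊕ Fin (Module.finrank ℝ ((N j → ℝ) ⧸ W j))) ℝ)
      (V₁ : ∀ i j, Fin (A i j) → Matrix (Fin (Module.finrank ℝ (W j))) (Fin (Module.finrank ℝ (U i))) ℝ)
      (X : ∀ i j, Fin (A i j) → Matrix (Fin (Module.finrank ℝ (W j))) (Fin (Module.finrank ℝ ((D i → ℝ) ⧸ U i))) ℝ)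
      (V₂ : ∀ i j, Fin (A i j) → Matrix (Fin (Module.finrank ℝ ((N j → ℝ) ⧸ W j))) (Fin (Module.finrank ℝ ((D i → ℝ) ⧸ U i))) ℝ),
      (∀ i, P i * P' i = 1) ∧ (∀ i, P' i * P i = 1) ∧ (∀ j, Q j * Q' j = 1) ∧ (∀ j, Q' j * Q j = 1) ∧
      (fun i j a => Q j * V i j a * P' i) = tb V₁ X V₂ := by
  choose P' P h1 h2 h3 h4 using fun i => aux_adapt (U i)
  choose Q' Q g1 g2 g3 g4 using fun j => aux_adapt (W j)
  refine ⟨P, P', Q, Q', fun i j a => (Q j * V i j a * P' i).toBlocks₁₁, 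
    fun i j a => (Q j * V i j a * P' i).toBlocks₁₂, fun i j a => (Q j * V i j a * P' i).toBlocks₂₂,
    h1, h2, g1, g2, ?_⟩
  funext i j a
  have h0 : (Q j * V i j a * P' i).toBlocks₂₁ = 0 := by
    ext r c
    have := g4 j _ (hUW i j a _ (h3 i c)) r
    rw [Matrix.mulVec_mulVec] at this
    simpa [Matrix.toBlocks₂₁, Matrix.mul_apply, Matrix.mulVec, dotProduct] using this
  unfold tb
  rw [← h0]
  exact (Matrix.fromBlocks_toBlocks _).symm

lemma sub_dim {ι : Type} [Fintype ι] (U : Submodule ℝ (ι → ℝ)) :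
    (Module.finrank ℝ ((ι → ℝ) ⧸ U) : ℝ) = Fintype.card ι - Module.finrank ℝ U := by
  have := U.finrank_quotient_add_finrank
  rw [Module.finrank_fintype_fun_eq_card] at this
  rw [eq_sub_iff_add_eq]
  exact_mod_cast this

lemma sub_semistable {p : Fin m → ℝ} (hp : ∀ j, 0 < p j)
    (V : ∀ i j, Fin (A i j) → Matrix (N j) (D i) ℝ) (hf : 0 < gCap p V)
    (hb : ∑ i, (Fintype.card (D i) : ℝ) = ∑ j, p j * (Fintype.card (N j) : ℝ))
    (U : ∀ i, Submodule ℝ (D i → ℝ)) (W : ∀ j, Submodule ℝ (N j → ℝ))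
    (hUW : ∀ i j a, ∀ x ∈ U i, (V i j a).mulVec x ∈ W j) :
    ∑ i, (Module.finrank ℝ (U i) : ℝ) ≤ ∑ j, p j * (Module.finrank ℝ (W j) : ℝ) := by
  obtain ⟨P, P', Q, Q', V₁, X, V₂, h1, h2, g1, g2, h⟩ := sub_adapt V U W hUW
  have hc := gCap_base hp V P P' Q Q' h1 h2 g1 g2
  rw [h] at hc
  have := tb_semistable hp V₁ X V₂ (by rw [hc]; exact mul_pos (gFac_pos p P P' Q Q' h2 g1) hf)
  simp only [Fintype.card_fin, sub_dim, mul_sub, Finset.sum_sub_distrib] at this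
  linarith

/-- Index type of the rows of the stacked matrix at the source vertex `i`. -/
abbrev GI (A : Fin k → Fin m → ℕ) (N : Fin m → Type) (i : Fin k) : Type :=
  Σ s : (Σ j, N j), Fin (A i s.1)

/-- Rows of the stacked matrix. -/
def row' (V : ∀ i j, Fin (A i j) → Matrix (N j) (D i) ℝ) (i : Fin k) (g : GI A N i) : D i → ℝ :=
  V i g.1.1 g.2 g.1.2

/-- Rank of the rows lying over `T`. -/
noncomputable def rho (V : ∀ i j, Fin (A i j) → Matrix (N j) (D i) ℝ) (T : Finset (Σ j, N j)) (i : Fin k) : ℕ :=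
  Module.finrank ℝ (Submodule.span ℝ (row' V i '' {g | g.1 ∈ T}))

/-- The slope defect of a coordinate subspace. -/
noncomputable def bdef (p : Fin m → ℝ) (V : ∀ i j, Fin (A i j) → Matrix (N j) (D i) ℝ) (T : Finset (Σ j, N j)) : ℝ :=
  ∑ i, (rho V T i : ℝ) - ∑ s ∈ T, p s.1

lemma aux_ann {ι κ : Type} [Fintype ι] [DecidableEq ι] (f : κ → ι → ℝ) (s : Set κ) (hs : s.Finite) :
    ∃ U : Submodule ℝ (ι → ℝ), (∀ x, x ∈ U ↔ ∀ c ∈ s, f c ⬝ᵥ x = 0) ∧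
      (Module.finrank ℝ U : ℝ) = Fintype.card ι - Module.finrank ℝ (Submodule.span ℝ (f '' s)) := by
  classical
  let M : Matrix s ι ℝ := Matrix.of fun c => f c
  have := hs.fintype
  refine ⟨LinearMap.ker M.mulVecLin, ?_, ?_⟩
  · intro x
    simp only [LinearMap.mem_ker, Matrix.mulVecLin_apply, funext_iff, Pi.zero_apply, Subtype.forall]
    rfl
  · have h1 := LinearMap.finrank_range_add_finrank_ker M.mulVecLin
    have h2 := M.rank_eq_finrank_span_row
    have h3 : Set.range M.row = f '' s := by
      rw [Set.image_eq_range]; rfl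
    rw [h3] at h2
    rw [Module.finrank_fintype_fun_eq_card] at h1
    unfold Matrix.rank at h2
    rw [h2] at h1
    rw [eq_sub_iff_add_eq, add_comm]
    exact_mod_cast h1

lemma sub_coord (p : Fin m → ℝ) (V : ∀ i j, Fin (A i j) → Matrix (N j) (D i) ℝ)
    (hb : ∑ i, (Fintype.card (D i) : ℝ) = ∑ j, p j * (Fintype.card (N j) : ℝ)) (T : Finset (Σ j, N j)) : 
    ∃ (U : ∀ i, Submodule ℝ (D i → ℝ)) (W : ∀ j, Submodule ℝ (N j → ℝ)),
    (∀ i j a, ∀ x ∈ U i, (V i j a).mulVec x ∈ W j) ∧ 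
    (∀ j y, y ∈ W j ↔ ∀ r, ⟨j, r⟩ ∈ T → y r = 0) ∧
    bdef p V T = ∑ j, p j * (Module.finrank ℝ (W j) : ℝ) - ∑ i, (Module.finrank ℝ (U i) : ℝ) := by
  classical
  choose U hU hUr using fun i => aux_ann (row' V i) {g | g.1 ∈ T} (Set.toFinite _)
  choose W hW hWr using fun j => aux_ann (fun r : N j => (Pi.single r 1 : N j → ℝ)) {r | ⟨j, r⟩ ∈ T} (Set.toFinite _)
  have hW' : ∀ j y, y ∈ W j ↔ ∀ r, ⟨j, r⟩ ∈ T → y r = 0 := by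
    intro j y
    rw [hW]; simp
  refine ⟨U, W, ?_, hW', ?_⟩
  · intro i j a x hx
    rw [hW']
    intro r hr
    exact (hU i x).1 hx ⟨⟨j, r⟩, a⟩ hr
  · have h1 : ∀ j, Module.finrank ℝ (Submodule.span ℝ ((fun r : N j => (Pi.single r 1 : N j → ℝ)) '' {r | ⟨j, r⟩ ∈ T})) 
        = (Finset.univ.filter (fun r : N j => (⟨j, r⟩ : Σ j, N j) ∈ T)).card := by
      intro j
      have hli : LinearIndependent ℝ (fun r : {r : N j // ⟨j, r⟩ ∈ T} => (Pi.single r.1 1 : N j → ℝ)) := by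
        have := (Pi.basisFun ℝ (N j)).linearIndependent.comp (Subtype.val : {r : N j // ⟨j, r⟩ ∈ T} → N j) 
          Subtype.val_injective
        convert this using 1
        funext r
        simp
      have := finrank_span_eq_card hli
      rw [← Fintype.card_subtype, ← this, Set.image_eq_range]
      rfl
    have h2 : ∑ s ∈ T, p s.1 = ∑ j, p j * ((Finset.univ.filter (fun r : N j => (⟨j, r⟩ : Σ j, N j) ∈ T)).card : ℝ) := by
      have : T = Finset.univ.sigma (fun j => Finset.univ.filter (fun r : N j => (⟨j, r⟩ : Σ j, N j) ∈ T)) := by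
        ext ⟨j, r⟩; simp
      conv_lhs => rw [this]
      rw [Finset.sum_sigma]
      simp [mul_comm]
    simp only [hWr, hUr, h1, mul_sub, Finset.sum_sub_distrib, bdef, h2, rho]
    rw [hb]; ring

end Sub

/-! ## Part 5: the greedy selection -/

section Greedy

variable {k m : ℕ} {A : Fin k → Fin m → ℕ}
variable {D : Fin k → Type} {N : Fin m → Type}
  [∀ i, Fintype (D i)] [∀ i, DecidableEq (D i)] [∀ j, Fintype (N j)] [∀ j, DecidableEq (N j)]

lemma bdef_nonneg {p : Fin m → ℝ} (hp : ∀ j, 0 < p j)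
    (V : ∀ i j, Fin (A i j) → Matrix (N j) (D i) ℝ) (hf : 0 < gCap p V)
    (hb : ∑ i, (Fintype.card (D i) : ℝ) = ∑ j, p j * (Fintype.card (N j) : ℝ))
    (T : Finset (Σ j, N j)) : 0 ≤ bdef p V T := by
  obtain ⟨U, W, h1, -, h3⟩ := sub_coord p V hb T
  have := sub_semistable hp V hf hb U W h1
  linarith

lemma rho_empty (V : ∀ i j, Fin (A i j) → Matrix (N j) (D i) ℝ) (i : Fin k) : rho V ∅ i = 0 := by
  simp [rho]

lemma bdef_empty (p : Fin m → ℝ) (V : ∀ i j, Fin (A i j) → Matrix (N j) (D i) ℝ) : bdef p V ∅ = 0 := by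
  simp [bdef, rho_empty]

lemma rho_le (V : ∀ i j, Fin (A i j) → Matrix (N j) (D i) ℝ) (T : Finset (Σ j, N j)) (i : Fin k) :
    rho V T i ≤ Fintype.card (D i) := by
  have := Submodule.finrank_le (Submodule.span ℝ (row' V i '' {g | g.1 ∈ T}))
  rwa [Module.finrank_fintype_fun_eq_card] at this

lemma sum_univ_p (p : Fin m → ℝ) : ∑ s : (Σ j, N j), p s.1 = ∑ j, p j * (Fintype.card (N j) : ℝ) := by
  rw [Fintype.sum_sigma]
  simp [mul_comm]

lemma rho_univ {p : Fin m → ℝ} (hp : ∀ j, 0 < p j)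
    (V : ∀ i j, Fin (A i j) → Matrix (N j) (D i) ℝ) (hf : 0 < gCap p V)
    (hb : ∑ i, (Fintype.card (D i) : ℝ) = ∑ j, p j * (Fintype.card (N j) : ℝ)) (i : Fin k) :
    rho V Finset.univ i = Fintype.card (D i) := by
  have h0 := bdef_nonneg hp V hf hb Finset.univ
  unfold bdef at h0
  rw [sum_univ_p, ← hb] at h0
  by_contra hne
  have hlt : ∑ i, (rho V Finset.univ i : ℝ) < ∑ i, (Fintype.card (D i) : ℝ) := by
    refine Finset.sum_lt_sum (fun i _ => by exact_mod_cast rho_le V _ i) ⟨i, Finset.mem_univ _, ?_⟩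
    exact_mod_cast lt_of_le_of_ne (rho_le V _ i) hne
  linarith

lemma bdef_univ {p : Fin m → ℝ} (hp : ∀ j, 0 < p j)
    (V : ∀ i j, Fin (A i j) → Matrix (N j) (D i) ℝ) (hf : 0 < gCap p V)
    (hb : ∑ i, (Fintype.card (D i) : ℝ) = ∑ j, p j * (Fintype.card (N j) : ℝ)) :
    bdef p V Finset.univ = 0 := by
  unfold bdef
  simp only [rho_univ hp V hf hb]
  rw [sum_univ_p, ← hb]; ring

lemma greedy_step (V : ∀ i j, Fin (A i j) → Matrix (N j) (D i) ℝ) (T : Finset (Σ j, N j))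
    (a : Σ j, N j) (i : Fin k) (S : Finset (GI A N i))
    (hS : ∀ g ∈ S, g.1 ∈ T) (hli : LinearIndepOn ℝ (row' V i) (S : Set (GI A N i)))
    (hsp : row' V i '' {g | g.1 ∈ T} ⊆ Submodule.span ℝ (row' V i '' (S : Set (GI A N i)))) :
    ∃ S' : Finset (GI A N i), (∀ g ∈ S', g.1 ∈ insert a T) ∧
      LinearIndepOn ℝ (row' V i) (S' : Set (GI A N i)) ∧
      (row' V i '' {g | g.1 ∈ insert a T} ⊆ Submodule.span ℝ (row' V i '' (S' : Set (GI A N i)))) ∧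
      S ⊆ S' ∧ ∀ g ∈ S', g ∉ S → g.1 = a := by
  classical
  obtain ⟨b, hb1, hb2, hb3, hb4⟩ := exists_linearIndepOn_extension hli
    (t := {g | g.1 ∈ insert a T}) (fun g hg => Finset.mem_insert_of_mem (hS g hg))
  have hbf : b.Finite := Set.toFinite b
  refine ⟨hbf.toFinset, ?_, ?_, ?_, ?_, ?_⟩
  · intro g hg; exact hb1 (by simpa using hg)
  · simpa using hb4
  · simpa using hb3
  · intro g hg; simpa using hb2 hg
  · intro g hg hgS
    have hgb : g ∈ b := by simpa using hg
    by_contra hga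
    have hgT : g.1 ∈ T := by
      rcases Finset.mem_insert.1 (hb1 hgb) with h | h
      · exact absurd h hga
      · exact h
    have h1 : row' V i g ∈ Submodule.span ℝ (row' V i '' (S : Set (GI A N i))) := hsp ⟨g, hgT, rfl⟩
    exact hgS ((hli.mem_span_iff (a := g)).1 h1 (hb4.mono (Set.insert_subset hgb hb2)))

lemma greedy_card (V : ∀ i j, Fin (A i j) → Matrix (N j) (D i) ℝ) (T : Finset (Σ j, N j))
    (i : Fin k) (S : Finset (GI A N i))
    (hS : ∀ g ∈ S, g.1 ∈ T) (hli : LinearIndepOn ℝ (row' V i) (S : Set (GI A N i)))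
    (hsp : row' V i '' {g | g.1 ∈ T} ⊆ Submodule.span ℝ (row' V i '' (S : Set (GI A N i)))) :
    S.card = rho V T i := by
  have h1 : Submodule.span ℝ (row' V i '' {g | g.1 ∈ T}) = Submodule.span ℝ (row' V i '' (S : Set (GI A N i))) := by
    apply le_antisymm
    · exact Submodule.span_le.2 hsp
    · apply Submodule.span_mono
      exact Set.image_mono hS
  have h2 := finrank_span_eq_card (R := ℝ) (b := fun x : (S : Set (GI A N i)) => row' V i x) hli
  unfold rho
  rw [h1, Set.image_eq_range, h2]
  simp

lemma greedy_main (p : Fin m → ℝ) 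
    (V : ∀ i j, Fin (A i j) → Matrix (N j) (D i) ℝ)
    (hpos : ∀ T : Finset (Σ j, N j), T ≠ ∅ → T ≠ Finset.univ → 0 < bdef p V T)
    (h : (Σ j, N j) → ℝ) (T : Finset (Σ j, N j)) :
    ∃ S : ∀ i, Finset (GI A N i), (∀ i, ∀ g ∈ S i, g.1 ∈ T) ∧ 
      (∀ i, LinearIndepOn ℝ (row' V i) (S i : Set (GI A N i))) ∧
      (∀ i, row' V i '' {g | g.1 ∈ T} ⊆ Submodule.span ℝ (row' V i '' (S i : Set (GI A N i)))) ∧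
      ((T = ∅ ∧ ∀ i, S i = ∅) ∨ ∃ c, (∃ x ∈ T, h x = c) ∧ (∀ x ∈ T, c ≤ h x) ∧ 
        0 ≤ (∑ i, ∑ g ∈ S i, h g.1 - ∑ s ∈ T, p s.1 * h s) - bdef p V T * c ∧
        ((∃ x ∈ T, c < h x) → 
          0 < (∑ i, ∑ g ∈ S i, h g.1 - ∑ s ∈ T, p s.1 * h s) - bdef p V T * c)) := by
  classical
  induction T using Finset.induction_on_min_value h with
  | empty =>
    refine ⟨fun i => ∅, by simp, by simp, by simp, Or.inl ⟨rfl, fun i => rfl⟩⟩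
  | insert a T haT hmin ih =>
    obtain ⟨S, h1, h2, h3, h4⟩ := ih
    choose S' g1 g2 g3 g4 g5 using fun i => greedy_step V T a i (S i) (h1 i) (h2 i) (h3 i)
    refine ⟨S', g1, g2, g3, Or.inr ⟨h a, ⟨a, Finset.mem_insert_self _ _, rfl⟩, ?_, ?_⟩⟩
    · intro x hx
      rcases Finset.mem_insert.1 hx with rfl | hx
      · exact le_rfl
      · exact hmin x hx
    have e1 : ∀ i, ∑ g ∈ S' i, h g.1 = ∑ g ∈ S i, h g.1 + ((rho V (insert a T) i : ℝ) - rho V T i) * h a := by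
      intro i
      rw [← greedy_card V T i (S i) (h1 i) (h2 i) (h3 i), 
        ← greedy_card V _ i (S' i) (g1 i) (g2 i) (g3 i), ← Finset.sum_sdiff (g4 i)]
      have : ∑ g ∈ S' i \ S i, h g.1 = ∑ g ∈ S' i \ S i, h a := by
        refine Finset.sum_congr rfl fun g hg => ?_
        rw [Finset.mem_sdiff] at hg
        rw [g5 i g hg.1 hg.2]
      rw [this, Finset.sum_const, nsmul_eq_mul, Finset.card_sdiff_of_subset (g4 i),
        Nat.cast_sub (Finset.card_le_card (g4 i))]
      ring
    have e2 : (∑ i, ∑ g ∈ S' i, h g.1 - ∑ s ∈ insert a T, p s.1 * h s) - bdef p V (insert a T) * h a =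
        (∑ i, ∑ g ∈ S i, h g.1 - ∑ s ∈ T, p s.1 * h s) - bdef p V T * h a := by
      unfold bdef
      rw [Finset.sum_insert haT, Finset.sum_insert haT, Finset.sum_congr rfl fun i _ => e1 i,
        Finset.sum_add_distrib, ← Finset.sum_mul, Finset.sum_sub_distrib]
      ring
    rw [e2]
    rcases h4 with ⟨rfl, hS⟩ | ⟨c, ⟨x₀, hx₀, hx₀c⟩, hc, hc1, hc2⟩
    · simp [hS, bdef_empty]
    · have hbp := hpos T (Finset.ne_empty_of_mem hx₀) (fun hT => haT (hT ▸ Finset.mem_univ a))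
      have hac : h a ≤ c := hx₀c ▸ hmin x₀ hx₀
      have hmul : 0 ≤ bdef p V T * (c - h a) := mul_nonneg hbp.le (by linarith)
      refine ⟨by linarith, ?_⟩
      rintro ⟨x, hx, hax⟩
      rcases hac.lt_or_eq with hlt | heq
      · have : 0 < bdef p V T * (c - h a) := mul_pos hbp (by linarith)
        linarith
      · rcases Finset.mem_insert.1 hx with rfl | hx
        · exact absurd hax (lt_irrefl _)
        · have := hc2 ⟨x, hx, heq ▸ hax⟩
          linarith

lemma greedy_final {p : Fin m → ℝ} (hp : ∀ j, 0 < p j)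
    (V : ∀ i j, Fin (A i j) → Matrix (N j) (D i) ℝ) (hf : 0 < gCap p V)
    (hb : ∑ i, (Fintype.card (D i) : ℝ) = ∑ j, p j * (Fintype.card (N j) : ℝ))
    (hpos : ∀ T : Finset (Σ j, N j), T ≠ ∅ → T ≠ Finset.univ → 0 < bdef p V T)
    (h : (Σ j, N j) → ℝ) (x y : Σ j, N j) (hxy : h x < h y) :
    ∃ σ : ∀ i, D i → GI A N i, (∀ i, Function.Injective (σ i)) ∧
      (∀ i, (Matrix.of fun y => row' V i (σ i y)).det ≠ 0) ∧
      0 < ∑ i, ∑ y, h (σ i y).1 - ∑ s, p s.1 * h s := by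
  classical
  obtain ⟨S, h1, h2, h3, h4⟩ := greedy_main p V hpos h Finset.univ
  have hcard : ∀ i, (S i).card = Fintype.card (D i) := fun i => by
    rw [greedy_card V _ i (S i) (h1 i) (h2 i) (h3 i), rho_univ hp V hf hb]
  have e : ∀ i, Nonempty (D i ≃ S i) := fun i => by
    rw [← Fintype.card_eq]; simp [hcard]
  replace e := fun i => (e i).some
  refine ⟨fun i y => (e i y).1, fun i => Subtype.val_injective.comp (e i).injective, ?_, ?_⟩
  · intro i
    have hl : LinearIndependent ℝ (fun g : S i => row' V i g) := h2 i
    have hl2 := hl.comp (e i) (e i).injective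
    have hu : IsUnit (Matrix.of fun y => row' V i (e i y).1) := by
      rw [← Matrix.linearIndependent_rows_iff_isUnit]
      exact hl2
    exact ((Matrix.isUnit_iff_isUnit_det _).1 hu).ne_zero
  · rcases h4 with ⟨h5, -⟩ | ⟨c, -, hc, -, hc2⟩
    · exact absurd h5 (Finset.ne_empty_of_mem (Finset.mem_univ x))
    · have := hc2 ⟨y, Finset.mem_univ _, lt_of_le_of_lt (hc x (Finset.mem_univ _)) hxy⟩
      rw [bdef_univ hp V hf hb, zero_mul, sub_zero] at this
      convert this using 3 with i
      rw [← Finset.sum_coe_sort (S i) (fun g => h g.1)]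
      exact (e i).sum_comp (fun g => h g.1.1)

end Greedy

/-! ## Part 6: coercivity -/

section Coercive

variable {k m : ℕ} {A : Fin k → Fin m → ℕ}
variable {D : Fin k → Type} {N : Fin m → Type}
  [∀ i, Fintype (D i)] [∀ i, DecidableEq (D i)] [∀ j, Fintype (N j)] [∀ j, DecidableEq (N j)]

lemma gM_diag (p : Fin m → ℝ) (V : ∀ i j, Fin (A i j) → Matrix (N j) (D i) ℝ)
    (l : (Σ j, N j) → ℝ) (i : Fin k) :
    gM p V (fun j => Matrix.diagonal fun r => l ⟨j, r⟩) i =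
      (Matrix.of (row' V i))ᵀ * Matrix.diagonal (fun g : GI A N i => p g.1.1 * l g.1) * Matrix.of (row' V i) := by
  ext x y
  rw [Matrix.mul_apply]
  simp only [Matrix.mul_diagonal, Matrix.transpose_apply, Matrix.of_apply]
  rw [Fintype.sum_sigma, Fintype.sum_sigma]
  simp only [gM, Matrix.sum_apply, Matrix.smul_apply, Matrix.mul_apply (M := _ * _), Matrix.mul_diagonal, Matrix.transpose_apply, row', smul_eq_mul]
  refine Finset.sum_congr rfl fun j _ => ?_
  rw [Finset.sum_comm, Finset.mul_sum]
  refine Finset.sum_congr rfl fun r _ => ?_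
  rw [Finset.mul_sum]
  refine Finset.sum_congr rfl fun a _ => ?_
  ring

lemma gM_lower {p : Fin m → ℝ} (hp : ∀ j, 0 < p j) (V : ∀ i j, Fin (A i j) → Matrix (N j) (D i) ℝ)
    (l : (Σ j, N j) → ℝ) (hl : ∀ s, 0 < l s) (i : Fin k) (σ : D i → GI A N i) (hσ : Function.Injective σ) :
    (Matrix.of fun y => row' V i (σ y)).det ^ 2 * ∏ y, (p (σ y).1.1 * l (σ y).1) ≤
      (gM p V (fun j => Matrix.diagonal fun r => l ⟨j, r⟩) i).det := by
  classical
  set w : GI A N i → ℝ := fun g => p g.1.1 * l g.1 with hw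
  have hwpos : ∀ g, 0 < w g := fun g => mul_pos (hp _) (hl _)
  have e1 : Matrix.diagonal w = Matrix.diagonal (fun g => if g ∈ Set.range σ then w g else 0) +
      Matrix.diagonal (fun g => if g ∈ Set.range σ then 0 else w g) := by
    rw [Matrix.diagonal_add]
    congr 1
    funext g
    split_ifs <;> simp
  have e2 : (Matrix.of (row' V i))ᵀ * Matrix.diagonal (fun g => if g ∈ Set.range σ then w g else 0) * Matrix.of (row' V i) =
      (Matrix.of fun y => row' V i (σ y))ᵀ * Matrix.diagonal (fun y => w (σ y)) * Matrix.of fun y => row' V i (σ y) := by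
    ext x y
    rw [Matrix.mul_apply, Matrix.mul_apply]
    simp only [Matrix.mul_diagonal, Matrix.transpose_apply, Matrix.of_apply]
    rw [← Finset.sum_subset (Finset.subset_univ (Finset.univ.image σ)), Finset.sum_image hσ.injOn]
    · simp
    · intro g _ hg
      have : g ∉ Set.range σ := by simpa using hg
      simp [this]
  rw [gM_diag, e1, Matrix.mul_add, Matrix.add_mul, e2]
  refine le_trans (le_of_eq ?_) (aux_det_mono (aux_psd_conj ?_ _) (aux_psd_conj ?_ _))
  · rw [Matrix.det_mul, Matrix.det_mul, Matrix.det_transpose, Matrix.det_diagonal]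
    ring
  · exact Matrix.PosSemidef.diagonal fun y => (hwpos _).le
  · refine Matrix.PosSemidef.diagonal fun y => ?_
    show (0:ℝ) ≤ if _ then _ else _
    split_ifs
    · exact le_rfl
    · exact (hwpos _).le

/-- The constant in the lower bound. -/
noncomputable def lbC (p : Fin m → ℝ) (V : ∀ i j, Fin (A i j) → Matrix (N j) (D i) ℝ)
    (σ : ∀ i, D i → GI A N i) : ℝ :=
  ∏ i, ((Matrix.of fun y => row' V i (σ i y)).det ^ 2 * ∏ y, p (σ i y).1.1)

/-- The exponent in the lower bound. -/
noncomputable def lbL (p : Fin m → ℝ) 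
    (σ : ∀ i, D i → GI A N i) (h : (Σ j, N j) → ℝ) : ℝ :=
  ∑ i, ∑ y, h (σ i y).1 - ∑ s, p s.1 * h s

lemma gVal_lower {p : Fin m → ℝ} (hp : ∀ j, 0 < p j) (V : ∀ i j, Fin (A i j) → Matrix (N j) (D i) ℝ)
    (h : (Σ j, N j) → ℝ) (τ : ℝ) (σ : ∀ i, D i → GI A N i) (hσ : ∀ i, Function.Injective (σ i)) :
    lbC p V σ * Real.exp (τ * lbL p σ h) ≤
      gVal p V (fun j => Matrix.diagonal fun r => Real.exp (τ * h ⟨j, r⟩)) := by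
  have hd : ∏ j : Fin m, (Matrix.diagonal fun r : N j => Real.exp (τ * h ⟨j, r⟩)).det ^ (p j) = 
      Real.exp (τ * ∑ s, p s.1 * h s) := by
    rw [Fintype.sum_sigma, Finset.mul_sum, Real.exp_sum]
    refine Finset.prod_congr rfl fun j _ => ?_
    rw [Matrix.det_diagonal, ← Real.exp_sum, ← Real.exp_mul, ← Finset.mul_sum]
    have : ∑ y : N j, p (⟨j, y⟩ : Σ j, N j).fst * h ⟨j, y⟩ = p j * ∑ y : N j, h ⟨j, y⟩ := by
      rw [Finset.mul_sum]
    rw [this]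
    congr 1; ring
  unfold gVal
  rw [hd, le_div_iff₀ (Real.exp_pos _), mul_assoc, ← Real.exp_add]
  have e : τ * lbL p σ h + τ * ∑ s, p s.1 * h s = ∑ i, ∑ y, τ * h (σ i y).1 := by
    simp only [← Finset.mul_sum]
    unfold lbL; ring
  rw [e, Real.exp_sum, lbC, ← Finset.prod_mul_distrib]
  refine Finset.prod_le_prod ?_ ?_
  · intro i _
    exact mul_nonneg (mul_nonneg (sq_nonneg _) (Finset.prod_nonneg fun y _ => (hp _).le)) (Real.exp_pos _).le
  · intro i _
    refine le_trans (le_of_eq ?_) (gM_lower hp V (fun s => Real.exp (τ * h s)) (fun s => Real.exp_pos _) i (σ i) (hσ i))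
    rw [Finset.prod_mul_distrib, Real.exp_sum, mul_assoc]

/-- Tuples of orthogonal matrices. -/
def orth (N : Fin m → Type) [∀ j, Fintype (N j)] [∀ j, DecidableEq (N j)] : Set (∀ j, Matrix (N j) (N j) ℝ) :=
  {Q | ∀ j, (Q j)ᵀ * Q j = 1 ∧ Q j * (Q j)ᵀ = 1}

lemma orth_compact : IsCompact (orth N) := by
  have hK : IsCompact (Set.univ.pi fun j : Fin m => Set.univ.pi fun _ : N j => Set.univ.pi fun _ : N j => Set.Icc (-1:ℝ) 1) :=
    isCompact_univ_pi fun j => isCompact_univ_pi fun _ => isCompact_univ_pi fun _ => isCompact_Icc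
  refine IsCompact.of_isClosed_subset hK ?_ ?_
  · have : orth N = ⋂ j, ({Q : ∀ j, Matrix (N j) (N j) ℝ | (Q j)ᵀ * Q j = 1} ∩ {Q | Q j * (Q j)ᵀ = 1}) := by
      ext Q; simp [orth]
    rw [this]
    refine isClosed_iInter fun j => IsClosed.inter (isClosed_eq ?_ continuous_const) (isClosed_eq ?_ continuous_const)
    · exact ((continuous_apply j).matrix_transpose).matrix_mul (continuous_apply j)
    · exact (continuous_apply j).matrix_mul ((continuous_apply j).matrix_transpose)
  · intro Q hQ j _ r _ c _
    have h1 := congrFun (congrFun (hQ j).2 r) r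
    rw [Matrix.mul_apply, Matrix.one_apply_eq] at h1
    simp only [Matrix.transpose_apply] at h1
    have h2 : Q j r c * Q j r c ≤ 1 := by
      rw [← h1]
      exact Finset.single_le_sum (f := fun c => Q j r c * Q j r c) (fun c _ => mul_self_nonneg _) (Finset.mem_univ c)
    rw [Set.mem_Icc, ← abs_le]
    exact abs_le_one_iff_mul_self_le_one.2 h2

lemma gCap_orth {p : Fin m → ℝ} (hp : ∀ j, 0 < p j) (V : ∀ i j, Fin (A i j) → Matrix (N j) (D i) ℝ)
    (hf : 0 < gCap p V) (Q : ∀ j, Matrix (N j) (N j) ℝ) (hQ : Q ∈ orth N) :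
    0 < gCap p (fun i j a => Q j * V i j a) := by
  have := gCap_base hp V (fun i => (1 : Matrix (D i) (D i) ℝ)) (fun i => (1 : Matrix (D i) (D i) ℝ)) Q (fun j => (Q j)ᵀ) (fun i => Matrix.one_mul _) (fun i => Matrix.one_mul _) (fun j => (hQ j).2) (fun j => (hQ j).1)
  simp only [Matrix.mul_one] at this
  rw [this]
  exact mul_pos (gFac_pos p (fun i => (1 : Matrix (D i) (D i) ℝ)) (fun i => (1 : Matrix (D i) (D i) ℝ)) Q (fun j => (Q j)ᵀ) (fun i => Matrix.one_mul _) (fun j => (hQ j).2)) hf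

lemma gVal_orth (p : Fin m → ℝ) (V : ∀ i j, Fin (A i j) → Matrix (N j) (D i) ℝ)
    (Q : ∀ j, Matrix (N j) (N j) ℝ) (hQ : Q ∈ orth N) (Y : ∀ j, Matrix (N j) (N j) ℝ) :
    gVal p V (fun j => (Q j)ᵀ * Y j * Q j) = gVal p (fun i j a => Q j * V i j a) Y := by
  have e : gM p (fun i j a => Q j * V i j a) Y = gM p V (fun j => (Q j)ᵀ * Y j * Q j) := by
    funext i
    simp only [gM, Matrix.transpose_mul, Matrix.mul_assoc]
  unfold gVal
  rw [e]
  congr 1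
  refine Finset.prod_congr rfl fun j _ => ?_
  congr 1
  have := congrArg Matrix.det (hQ j).1
  rw [Matrix.det_mul, Matrix.det_one] at this
  rw [Matrix.det_mul, Matrix.det_mul, mul_right_comm, this, one_mul]

lemma coer {p : Fin m → ℝ} (hp : ∀ j, 0 < p j)
    (V : ∀ i j, Fin (A i j) → Matrix (N j) (D i) ℝ) (hf : 0 < gCap p V)
    (hb : ∑ i, (Fintype.card (D i) : ℝ) = ∑ j, p j * (Fintype.card (N j) : ℝ))
    (hpos : ∀ Q ∈ orth N, ∀ T : Finset (Σ j, N j), T ≠ ∅ → T ≠ Finset.univ → 0 < bdef p (fun i j a => Q j * V i j a) T) :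
    ∃ c > 0, ∃ δ > 0, ∀ Q ∈ orth N, ∀ h : (Σ j, N j) → ℝ, (∀ s, h s ∈ Set.Icc (0:ℝ) 1) → (∃ s, h s = 0) → 
      (∃ s, h s = 1) → ∀ τ : ℝ, 0 ≤ τ → 
      c * Real.exp (τ * δ) ≤ gVal p V (fun j => (Q j)ᵀ * (Matrix.diagonal fun r => Real.exp (τ * h ⟨j, r⟩)) * Q j) := by
  classical
  let H : Set ((Σ j, N j) → ℝ) := Set.univ.pi (fun _ => Set.Icc (0:ℝ) 1) ∩ ((⋃ s, {h | h s = 0}) ∩ ⋃ s, {h | h s = 1})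
  have hH : IsCompact H := by
    refine (isCompact_univ_pi fun _ => isCompact_Icc).inter_right (IsClosed.inter ?_ ?_)
    · exact isClosed_iUnion_of_finite fun s => isClosed_eq (continuous_apply s) continuous_const
    · exact isClosed_iUnion_of_finite fun s => isClosed_eq (continuous_apply s) continuous_const
  have hK : IsCompact (orth N ×ˢ H) := orth_compact.prod hH
  let Pr : Set ((∀ j, Matrix (N j) (N j) ℝ) × ((Σ j, N j) → ℝ)) → Prop := fun S =>
    ∃ c > 0, ∃ δ > 0, ∀ z ∈ S, z.1 ∈ orth N → ∀ τ : ℝ, 0 ≤ τ → 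
      c * Real.exp (τ * δ) ≤ gVal p V (fun j => (z.1 j)ᵀ * (Matrix.diagonal fun r => Real.exp (τ * z.2 ⟨j, r⟩)) * z.1 j)
  have main : Pr (orth N ×ˢ H) := by
    refine hK.induction_on (p := Pr) ?_ ?_ ?_ ?_
    · exact ⟨1, one_pos, 1, one_pos, by simp⟩
    · rintro S T hST ⟨c, hc, δ, hδ, h⟩
      exact ⟨c, hc, δ, hδ, fun z hz => h z (hST hz)⟩
    · rintro S T ⟨c, hc, δ, hδ, h⟩ ⟨c', hc', δ', hδ', h'⟩
      refine ⟨min c c', lt_min hc hc', min δ δ', lt_min hδ hδ', ?_⟩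
      intro z hz hzo τ hτ
      rcases hz with hz | hz
      · refine le_trans ?_ (h z hz hzo τ hτ)
        gcongr
        · exact min_le_left _ _
        · exact min_le_left _ _
      · refine le_trans ?_ (h' z hz hzo τ hτ)
        gcongr
        · exact min_le_right _ _
        · exact min_le_right _ _
    · rintro ⟨Q, h⟩ ⟨hQ, hh, h0, h1⟩
      simp only [Set.mem_iUnion, Set.mem_ofPred_eq] at h0 h1
      obtain ⟨s0, h0⟩ := h0
      obtain ⟨s1, h1⟩ := h1
      obtain ⟨σ, hσ, hdet, hL⟩ := greedy_final hp (fun i j a => Q j * V i j a) (gCap_orth hp V hf Q hQ) hb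
        (hpos Q hQ) h s0 s1 (by rw [h0, h1]; exact one_pos)
      have hC : 0 < lbC p (fun i j a => Q j * V i j a) σ := by
        refine Finset.prod_pos fun i _ => mul_pos ?_ (Finset.prod_pos fun y _ => hp _)
        exact lt_of_le_of_ne (sq_nonneg _) (Ne.symm (pow_ne_zero 2 (hdet i)))
      have cC : Continuous (fun z : (∀ j, Matrix (N j) (N j) ℝ) × ((Σ j, N j) → ℝ) => 
          lbC p (fun i j a => z.1 j * V i j a) σ) := by
        unfold lbC
        refine continuous_finsetProd _ fun i _ => Continuous.mul (Continuous.pow (Continuous.matrix_det ?_) 2) continuous_const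
        refine continuous_pi fun y => ?_
        refine continuous_pi fun x => ?_
        have : Continuous (fun z : (∀ j, Matrix (N j) (N j) ℝ) × ((Σ j, N j) → ℝ) => 
          (z.1 (σ i y).1.1 * V i (σ i y).1.1 (σ i y).2)) := 
          ((continuous_apply _).comp continuous_fst).matrix_mul continuous_const
        exact this.matrix_elem _ _
      have cL : Continuous (fun z : (∀ j, Matrix (N j) (N j) ℝ) × ((Σ j, N j) → ℝ) => lbL p σ z.2) := by
        unfold lbL
        fun_prop
      set C := lbC p (fun i j a => Q j * V i j a) σ
      set L := lbL p σ h with hLdef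
      have hL' : 0 < L := hL
      have e1 := (isOpen_lt (continuous_const (y := C/2)) cC).mem_nhds (x := (Q, h)) (by show C/2 < C; linarith)
      have e2 := (isOpen_lt (continuous_const (y := L/2)) cL).mem_nhds (x := (Q, h)) (by show L/2 < L; linarith)
      refine ⟨_, mem_nhdsWithin_of_mem_nhds (Filter.inter_mem e1 e2), C/2, by linarith, L/2, by linarith, ?_⟩
      rintro ⟨Q', h'⟩ ⟨f1, f2⟩ hQ' τ hτ
      rw [gVal_orth p V Q' hQ' _]
      refine le_trans ?_ (gVal_lower hp _ h' τ σ hσ)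
      have f1' : C/2 < lbC p (fun i j a => Q' j * V i j a) σ := f1
      have f2' : L/2 < lbL p σ h' := f2
      have : (0:ℝ) ≤ C/2 := by linarith
      gcongr
      linarith
  obtain ⟨c, hc, δ, hδ, h⟩ := main
  refine ⟨c, hc, δ, hδ, fun Q hQ h' a1 a2 a3 τ hτ => ?_⟩
  refine h (Q, h') ⟨hQ, fun s _ => a1 s, ?_, ?_⟩ hQ τ hτ
  · simpa using a2
  · simpa using a3

end Coercive

/-! ## Part 7: existence of a minimizer -/

section Minimizer

variable {k m : ℕ} {A : Fin k → Fin m → ℕ}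
variable {D : Fin k → Type} {N : Fin m → Type}
  [∀ i, Fintype (D i)] [∀ i, DecidableEq (D i)] [∀ j, Fintype (N j)] [∀ j, DecidableEq (N j)]

lemma gVal_scale {p : Fin m → ℝ} (V : ∀ i j, Fin (A i j) → Matrix (N j) (D i) ℝ) 
    (hb : ∑ i, (Fintype.card (D i) : ℝ) = ∑ j, p j * (Fintype.card (N j) : ℝ))
    {Y : ∀ j, Matrix (N j) (N j) ℝ} (hY : ∀ j, (Y j).PosDef) {τ : ℝ} (hτ : 0 < τ) :
    gVal p V (fun j => τ • Y j) = gVal p V Y := by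
  have hM : ∀ i, gM p V (fun j => τ • Y j) i = τ • gM p V Y i := by
    intro i
    simp only [gM, Finset.smul_sum, Matrix.mul_smul, Matrix.smul_mul]
    refine Finset.sum_congr rfl fun j _ => Finset.sum_congr rfl fun a _ => smul_comm _ _ _
  have hden : ∀ j, (τ • Y j).det ^ p j = τ ^ (p j * (Fintype.card (N j) : ℝ)) * (Y j).det ^ p j := by
    intro j
    rw [Matrix.det_smul, Real.mul_rpow (by positivity) (hY j).det_pos.le,
      ← Real.rpow_natCast, ← Real.rpow_mul hτ.le, mul_comm (p j)]
  have hnum : ∀ i, (τ • gM p V Y i).det = τ ^ (Fintype.card (D i) : ℝ) * (gM p V Y i).det := by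
    intro i
    rw [Matrix.det_smul, Real.rpow_natCast]
  unfold gVal
  simp only [hM, hden, hnum, Finset.prod_mul_distrib]
  rw [← Real.rpow_sum_of_pos hτ, ← Real.rpow_sum_of_pos hτ, hb, mul_div_mul_left]
  exact (Real.rpow_pos_of_pos hτ _).ne'

/-- Parametrization of positive definite tuples. -/
def par (z : (∀ j, Matrix (N j) (N j) ℝ) × ((Σ j, N j) → ℝ)) (j : Fin m) : Matrix (N j) (N j) ℝ :=
  (z.1 j)ᵀ * (Matrix.diagonal fun r => z.2 ⟨j, r⟩) * z.1 j

lemma par_pd (z : (∀ j, Matrix (N j) (N j) ℝ) × ((Σ j, N j) → ℝ)) (hz : z.1 ∈ orth N) 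
    (hz2 : ∀ s, 0 < z.2 s) (j : Fin m) : (par z j).PosDef :=
  aux_pd_conj (Matrix.PosDef.diagonal fun r => hz2 _) _ (z.1 j)ᵀ (hz j).1

lemma par_bdd {p : Fin m → ℝ} (hp : ∀ j, 0 < p j)
    (V : ∀ i j, Fin (A i j) → Matrix (N j) (D i) ℝ) (hf : 0 < gCap p V)
    (hb : ∑ i, (Fintype.card (D i) : ℝ) = ∑ j, p j * (Fintype.card (N j) : ℝ))
    (hpos : ∀ Q ∈ orth N, ∀ T : Finset (Σ j, N j), T ≠ ∅ → T ≠ Finset.univ → 0 < bdef p (fun i j a => Q j * V i j a) T) 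
    (K : ℝ) (hK : 0 < K) : 
    ∃ R, 1 ≤ R ∧ ∀ Y : ∀ j, Matrix (N j) (N j) ℝ, (∀ j, (Y j).PosDef) → gVal p V Y ≤ K → 
      ∃ z, z.1 ∈ orth N ∧ (∀ s, z.2 s ∈ Set.Icc 1 R) ∧ gVal p V (par z) = gVal p V Y := by
  classical
  obtain ⟨c, hc, δ, hδ, hco⟩ := coer hp V hf hb hpos
  refine ⟨Real.exp (max 0 (Real.log (K / c) / δ)), Real.one_le_exp (le_max_left _ _), ?_⟩
  intro Y hY hYK
  choose Q l hQ1 hQ2 hl hYQ using fun j => aux_pd_spectral (hY j)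
  have hQ : Q ∈ orth N := fun j => ⟨hQ1 j, hQ2 j⟩
  rcases isEmpty_or_nonempty (Σ j, N j) with hE | hE
  · refine ⟨(Q, fun s => 1), hQ, fun s => hE.elim s, ?_⟩
    congr 1
    funext j
    have : IsEmpty (N j) := ⟨fun r => hE.elim ⟨j, r⟩⟩
    exact Subsingleton.elim _ _
  · let u : (Σ j, N j) → ℝ := fun s => Real.log (l s.1 s.2)
    have hu : ∀ s : (Σ j, N j), Real.exp (u s) = l s.1 s.2 := fun s => Real.exp_log (hl _ _)
    obtain ⟨s0, hs0⟩ := Finite.exists_min u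
    obtain ⟨s1, hs1⟩ := Finite.exists_max u
    let τ := u s1 - u s0
    have hτ : 0 ≤ τ := sub_nonneg.2 (hs0 s1)
    let z : (∀ j, Matrix (N j) (N j) ℝ) × ((Σ j, N j) → ℝ) := (Q, fun s => Real.exp (u s - u s0))
    have hz : gVal p V (par z) = gVal p V Y := by
      rw [← gVal_scale V hb hY (Real.exp_pos (- u s0))]
      congr 1
      funext j
      rw [hYQ j, ← Matrix.smul_mul, ← Matrix.mul_smul, ← Matrix.diagonal_smul]
      unfold par
      congr 3
      funext r
      show Real.exp (u ⟨j, r⟩ - u s0) = Real.exp (- u s0) * l j r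
      rw [sub_eq_add_neg, Real.exp_add, hu, mul_comm]
    refine ⟨z, hQ, fun s => ⟨Real.one_le_exp (sub_nonneg.2 (hs0 s)), ?_⟩, hz⟩
    show Real.exp (u s - u s0) ≤ _
    rw [Real.exp_le_exp]
    have h1 : u s - u s0 ≤ τ := sub_le_sub_right (hs1 s) _
    rcases hτ.eq_or_lt with h0 | h0
    · exact le_trans (h1.trans h0.symm.le) (le_max_left _ _)
    · refine le_trans h1 (le_trans ?_ (le_max_right _ _))
      have := hco Q hQ (fun s => (u s - u s0) / τ) 
        (fun s => ⟨div_nonneg (sub_nonneg.2 (hs0 s)) hτ, div_le_one_of_le₀ (sub_le_sub_right (hs1 s) _) hτ⟩)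
        ⟨s0, by simp⟩ ⟨s1, div_self h0.ne'⟩ τ hτ
      have e : (fun j => (Q j)ᵀ * (Matrix.diagonal fun r => Real.exp (τ * ((u ⟨j, r⟩ - u s0) / τ))) * Q j) = par z := by
        funext j
        unfold par
        congr 3
        funext r
        rw [mul_div_cancel₀ _ h0.ne']
      rw [e, hz] at this
      have h2 := this.trans hYK
      rw [le_div_iff₀ hδ, Real.le_log_iff_exp_le (div_pos hK hc), le_div_iff₀ hc, mul_comm]
      exact h2

lemma ext_of_pos {p : Fin m → ℝ} (hp : ∀ j, 0 < p j)
    (V : ∀ i j, Fin (A i j) → Matrix (N j) (D i) ℝ) (hf : 0 < gCap p V)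
    (hb : ∑ i, (Fintype.card (D i) : ℝ) = ∑ j, p j * (Fintype.card (N j) : ℝ))
    (hpos : ∀ Q ∈ orth N, ∀ T : Finset (Σ j, N j), T ≠ ∅ → T ≠ Finset.univ → 0 < bdef p (fun i j a => Q j * V i j a) T) :
    gExt p V := by
  classical
  obtain ⟨R, hR, hz⟩ := par_bdd hp V hf hb hpos (gCap p V + 1) (by linarith)
  let S : Set ((∀ j, Matrix (N j) (N j) ℝ) × ((Σ j, N j) → ℝ)) := orth N ×ˢ (Set.univ.pi fun _ => Set.Icc 1 R)
  have hS : IsCompact S := orth_compact.prod (isCompact_univ_pi fun _ => isCompact_Icc)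
  have hSpd : ∀ z ∈ S, ∀ j, (par z j).PosDef := fun z hz j => 
    par_pd z hz.1 (fun s => lt_of_lt_of_le one_pos (hz.2 s (Set.mem_univ _)).1) j
  have hpar : ∀ j, Continuous (fun z : (∀ j, Matrix (N j) (N j) ℝ) × ((Σ j, N j) → ℝ) => par z j) := by
    intro j
    have c1 : Continuous (fun z : (∀ j, Matrix (N j) (N j) ℝ) × ((Σ j, N j) → ℝ) => z.1 j) := by fun_prop
    have c2 : Continuous (fun z : (∀ j, Matrix (N j) (N j) ℝ) × ((Σ j, N j) → ℝ) => fun r : N j => z.2 ⟨j, r⟩) := by 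
      fun_prop
    exact (c1.matrix_transpose.matrix_mul c2.matrix_diagonal).matrix_mul c1
  have hcont : ContinuousOn (fun z => gVal p V (par z)) S := by
    unfold gVal
    refine ContinuousOn.div ?_ ?_ ?_
    · refine Continuous.continuousOn (continuous_finsetProd _ fun i _ => Continuous.matrix_det ?_)
      unfold gM
      refine continuous_finsetSum _ fun j _ => ?_
      have cc : Continuous (fun z : (∀ j, Matrix (N j) (N j) ℝ) × ((Σ j, N j) → ℝ) => 
          ∑ a, (V i j a)ᵀ * par z j * V i j a) := continuous_finsetSum _ fun a _ => ?_
      · exact cc.const_smul (p j)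
      exact (continuous_const.matrix_mul (hpar j)).matrix_mul continuous_const
    · refine continuousOn_finsetProd _ fun j _ => ContinuousOn.rpow_const ?_ ?_
      · exact (hpar j).matrix_det.continuousOn
      · intro z hz
        exact Or.inl (hSpd z hz j).det_pos.ne'
    · intro z hz
      exact (gDen_pos p (hSpd z hz)).ne'
  have hne : S.Nonempty := ⟨(fun j => 1, fun s => 1), fun j => by simp, fun s _ => ⟨le_rfl, hR⟩⟩
  obtain ⟨z0, hz0, hmin⟩ := hS.exists_isMinOn hne hcont
  refine ⟨hf, par z0, hSpd z0 hz0, le_antisymm ?_ (gCap_le hp V (hSpd z0 hz0))⟩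
  have key : ∀ Y : ∀ j, Matrix (N j) (N j) ℝ, (∀ j, (Y j).PosDef) → gVal p V Y ≤ gCap p V + 1 → 
      gVal p V (par z0) ≤ gVal p V Y := by
    intro Y hY hYK
    obtain ⟨z, hz1, hz2, hz3⟩ := hz Y hY hYK
    rw [← hz3]
    exact hmin (show z ∈ S from ⟨hz1, fun s _ => hz2 s⟩)
  refine le_gCap V fun Y hY => ?_
  by_cases hYK : gVal p V Y ≤ gCap p V + 1
  · exact key Y hY hYK
  · have : ∃ Y1 : ∀ j, Matrix (N j) (N j) ℝ, (∀ j, (Y1 j).PosDef) ∧ gVal p V Y1 < gCap p V + 1 := by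
      by_contra hcon
      push Not at hcon
      have := le_gCap V hcon
      linarith
    obtain ⟨Y1, hY1, hlt⟩ := this
    have := key Y1 hY1 hlt.le
    linarith

lemma dichotomy {p : Fin m → ℝ} (hp : ∀ j, 0 < p j)
    (V : ∀ i j, Fin (A i j) → Matrix (N j) (D i) ℝ) (hf : 0 < gCap p V)
    (hb : ∑ i, (Fintype.card (D i) : ℝ) = ∑ j, p j * (Fintype.card (N j) : ℝ))
    (hne : ¬ gExt p V) :
    ∃ Q ∈ orth N, ∃ T : Finset (Σ j, N j), T ≠ ∅ ∧ T ≠ Finset.univ ∧ bdef p (fun i j a => Q j * V i j a) T = 0 := by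
  by_contra hcon
  push Not at hcon
  refine hne (ext_of_pos hp V hf hb fun Q hQ T h1 h2 => ?_)
  exact lt_of_le_of_ne (bdef_nonneg hp _ (gCap_orth hp V hf Q hQ) hb T) (Ne.symm (hcon Q hQ T (Finset.nonempty_iff_ne_empty.2 h1) h2))

end Minimizer

/-! ## Part 8: the inductive construction -/

section Induct

variable {k m : ℕ} {A : Fin k → Fin m → ℕ}

/-- Block-diagonal part with respect to labels. -/
def dg {D : Fin k → Type} {N : Fin m → Type} {s : ℕ} (β : ∀ i, D i → Fin s) (γ : ∀ j, N j → Fin s)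
    (V : ∀ i j, Fin (A i j) → Matrix (N j) (D i) ℝ) : ∀ i j, Fin (A i j) → Matrix (N j) (D i) ℝ :=
  fun i j a => Matrix.of fun x y => if γ j x = β i y then V i j a x y else 0

/-- The conclusion, for labelled index types. -/
def Good {D : Fin k → Type} {N : Fin m → Type}
    [∀ i, Fintype (D i)] [∀ i, DecidableEq (D i)] [∀ j, Fintype (N j)] [∀ j, DecidableEq (N j)]
    (p : Fin m → ℝ) (V : ∀ i j, Fin (A i j) → Matrix (N j) (D i) ℝ) : Prop :=
  ∃ (s : ℕ) (D' : Fin k → Type) (N' : Fin m → Type)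
    (_ : ∀ i, Fintype (D' i)) (_ : ∀ i, DecidableEq (D' i)) (_ : ∀ j, Fintype (N' j)) (_ : ∀ j, DecidableEq (N' j))
    (β : ∀ i, D' i → Fin s) (γ : ∀ j, N' j → Fin s)
    (P : ∀ i, Matrix (D' i) (D i) ℝ) (P' : ∀ i, Matrix (D i) (D' i) ℝ)
    (Q : ∀ j, Matrix (N' j) (N j) ℝ) (Q' : ∀ j, Matrix (N j) (N' j) ℝ),
    (∀ i, P i * P' i = 1) ∧ (∀ i, P' i * P i = 1) ∧ (∀ j, Q j * Q' j = 1) ∧ (∀ j, Q' j * Q j = 1) ∧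
    (∀ ℓ, ∑ i, ∑ x, (if β i x = ℓ then (1:ℝ) else 0) = ∑ j, p j * ∑ x, (if γ j x = ℓ then (1:ℝ) else 0)) ∧
    (∀ i j a x y, β i y < γ j x → (Q j * V i j a * P' i) x y = 0) ∧
    gExt p (dg β γ fun i j a => Q j * V i j a * P' i) ∧
    gCap p (fun i j a => Q j * V i j a * P' i) = gCap p (dg β γ fun i j a => Q j * V i j a * P' i)

lemma good_ext {D : Fin k → Type} {N : Fin m → Type}
    [∀ i, Fintype (D i)] [∀ i, DecidableEq (D i)] [∀ j, Fintype (N j)] [∀ j, DecidableEq (N j)]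
    {p : Fin m → ℝ} (V : ∀ i j, Fin (A i j) → Matrix (N j) (D i) ℝ)
    (hb : ∑ i, (Fintype.card (D i) : ℝ) = ∑ j, p j * (Fintype.card (N j) : ℝ))
    (h : gExt p V) : Good p V := by
  have e : (fun i j a => (1 : Matrix (N j) (N j) ℝ) * V i j a * (1 : Matrix (D i) (D i) ℝ)) = V := by
    funext i j a; rw [Matrix.one_mul, Matrix.mul_one]
  have e2 : dg (s := 1) (fun i (_ : D i) => 0) (fun j (_ : N j) => 0) V = V := by
    funext i j a; ext x y; simp [dg]
  refine ⟨1, D, N, inferInstance, inferInstance, inferInstance, inferInstance, fun _ _ => 0, fun _ _ => 0,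
    fun _ => 1, fun _ => 1, fun _ => 1, fun _ => 1, fun _ => Matrix.one_mul _, fun _ => Matrix.one_mul _,
    fun _ => Matrix.one_mul _, fun _ => Matrix.one_mul _, ?_, ?_, ?_, ?_⟩
  · intro ℓ
    have : ℓ = 0 := Subsingleton.elim _ _
    subst this
    simpa using hb
  · intro i j a x y h
    exact absurd h (lt_irrefl _)
  · rw [e, e2]; exact h
  · rw [e, e2]

lemma good_base {D : Fin k → Type} {N : Fin m → Type}
    [∀ i, Fintype (D i)] [∀ i, DecidableEq (D i)] [∀ j, Fintype (N j)] [∀ j, DecidableEq (N j)]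
    {D₀ : Fin k → Type} {N₀ : Fin m → Type}
    [∀ i, Fintype (D₀ i)] [∀ i, DecidableEq (D₀ i)] [∀ j, Fintype (N₀ j)] [∀ j, DecidableEq (N₀ j)]
    {p : Fin m → ℝ} (V : ∀ i j, Fin (A i j) → Matrix (N j) (D i) ℝ)
    (P₀ : ∀ i, Matrix (D₀ i) (D i) ℝ) (P₀' : ∀ i, Matrix (D i) (D₀ i) ℝ)
    (Q₀ : ∀ j, Matrix (N₀ j) (N j) ℝ) (Q₀' : ∀ j, Matrix (N j) (N₀ j) ℝ)
    (hP : ∀ i, P₀ i * P₀' i = 1) (hP' : ∀ i, P₀' i * P₀ i = 1)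
    (hQ : ∀ j, Q₀ j * Q₀' j = 1) (hQ' : ∀ j, Q₀' j * Q₀ j = 1)
    (h : Good p (fun i j a => Q₀ j * V i j a * P₀' i)) : Good p V := by
  obtain ⟨s, D', N', i1, i2, i3, i4, β, γ, P, P', Q, Q', a1, a2, a3, a4, hc, hz, he, hg⟩ := h
  have e : (fun i j a => Q j * (Q₀ j * V i j a * P₀' i) * P' i) = (fun i j a => (Q j * Q₀ j) * V i j a * (P₀' i * P' i)) := by
    funext i j a
    simp only [Matrix.mul_assoc]
  rw [e] at he hg
  refine ⟨s, D', N', i1, i2, i3, i4, β, γ, fun i => P i * P₀ i, fun i => P₀' i * P' i, fun j => Q j * Q₀ j, 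
    fun j => Q₀' j * Q' j, ?_, ?_, ?_, ?_, hc, ?_, he, hg⟩
  · intro i
    rw [Matrix.mul_assoc, ← Matrix.mul_assoc (P₀ i), hP, Matrix.one_mul, a1]
  · intro i
    rw [Matrix.mul_assoc, ← Matrix.mul_assoc (P' i), a2, Matrix.one_mul, hP']
  · intro i
    rw [Matrix.mul_assoc, ← Matrix.mul_assoc (Q₀ i), hQ, Matrix.one_mul, a3]
  · intro i
    rw [Matrix.mul_assoc, ← Matrix.mul_assoc (Q' i), a4, Matrix.one_mul, hQ']
  · intro i j a x y hxy
    rw [← hz i j a x y hxy]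
    exact congrFun (congrFun (congrFun (congrFun (congrFun e i) j) a).symm x) y

lemma good_tb {D₁ : Fin k → Type} {N₁ : Fin m → Type}
    [∀ i, Fintype (D₁ i)] [∀ i, DecidableEq (D₁ i)] [∀ j, Fintype (N₁ j)] [∀ j, DecidableEq (N₁ j)]
    {D₂ : Fin k → Type} {N₂ : Fin m → Type}
    [∀ i, Fintype (D₂ i)] [∀ i, DecidableEq (D₂ i)] [∀ j, Fintype (N₂ j)] [∀ j, DecidableEq (N₂ j)]
    {p : Fin m → ℝ} (hp : ∀ j, 0 < p j) (V₁ : ∀ i j, Fin (A i j) → Matrix (N₁ j) (D₁ i) ℝ)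
    (X : ∀ i j, Fin (A i j) → Matrix (N₁ j) (D₂ i) ℝ)
    (V₂ : ∀ i j, Fin (A i j) → Matrix (N₂ j) (D₂ i) ℝ)
    (hb : ∑ i, (Fintype.card (D₂ i) : ℝ) = ∑ j, p j * (Fintype.card (N₂ j) : ℝ))
    (h₁ : Good p V₁) (h₂ : Good p V₂) : Good p (tb V₁ X V₂) := by
  obtain ⟨s, D', N', i1, i2, i3, i4, β, γ, P, P', Q, Q', a1, a2, a3, a4, hc, hz, he, hg⟩ := h₁
  obtain ⟨t, E', M', j1, j2, j3, j4, β₂, γ₂, R, R', S, S', b1, b2, b3, b4, kc, kz, ke, kg⟩ := h₂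
  have hb' : ∑ i, (Fintype.card (E' i) : ℝ) = ∑ j, p j * (Fintype.card (M' j) : ℝ) := by
    have e1 : ∀ i, Fintype.card (E' i) = Fintype.card (D₂ i) := fun i => 
      Matrix.square_of_invertible (R i) (R' i) (b1 i) (b2 i)
    have e2 : ∀ j, Fintype.card (M' j) = Fintype.card (N₂ j) := fun i => 
      Matrix.square_of_invertible (S i) (S' i) (b3 i) (b4 i)
    simp only [e1, e2, hb]
  have e : (fun i j a => Matrix.fromBlocks (Q j) 0 0 (S j) * tb V₁ X V₂ i j a * Matrix.fromBlocks (P' i) 0 0 (R' i)) = 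
      tb (fun i j a => Q j * V₁ i j a * P' i) (fun i j a => Q j * X i j a * R' i) (fun i j a => S j * V₂ i j a * R' i) := by
    funext i j a
    simp [tb, Matrix.fromBlocks_multiply]
  have e2 : dg (fun i => Sum.elim (fun x => Fin.castAdd t (β i x)) (fun x => Fin.natAdd s (β₂ i x))) 
      (fun j => Sum.elim (fun x => Fin.castAdd t (γ j x)) (fun x => Fin.natAdd s (γ₂ j x)))
      (tb (fun i j a => Q j * V₁ i j a * P' i) (fun i j a => Q j * X i j a * R' i) (fun i j a => S j * V₂ i j a * R' i)) = 
      tb (dg β γ fun i j a => Q j * V₁ i j a * P' i) (fun _ _ _ => 0) (dg β₂ γ₂ fun i j a => S j * V₂ i j a * R' i) := by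
    funext i j a
    ext x y
    rcases x with x | x <;> rcases y with y | y
    · simp [dg, tb]
    · have : (γ j x : ℕ) ≠ s + β₂ i y := by have := (γ j x).2; omega
      simp [dg, tb, Fin.ext_iff, this]
    · simp only [dg, tb, Matrix.of_apply, Matrix.fromBlocks_apply₂₁, Matrix.zero_apply]
      split_ifs <;> rfl
    · simp [dg, tb]
  refine ⟨s + t, fun i => D' i ⊕ E' i, fun j => N' j ⊕ M' j, fun i => inferInstance, fun i => inferInstance, 
    fun j => inferInstance, fun j => inferInstance, 
    fun i => Sum.elim (fun x => Fin.castAdd t (β i x)) (fun x => Fin.natAdd s (β₂ i x)),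
    fun j => Sum.elim (fun x => Fin.castAdd t (γ j x)) (fun x => Fin.natAdd s (γ₂ j x)),
    fun i => Matrix.fromBlocks (P i) 0 0 (R i), fun i => Matrix.fromBlocks (P' i) 0 0 (R' i),
    fun j => Matrix.fromBlocks (Q j) 0 0 (S j), fun j => Matrix.fromBlocks (Q' j) 0 0 (S' j), ?_, ?_, ?_, ?_, ?_, ?_, ?_, ?_⟩
  · intro i; simp [Matrix.fromBlocks_multiply, a1, b1]
  · intro i; simp [Matrix.fromBlocks_multiply, a2, b2]
  · intro i; simp [Matrix.fromBlocks_multiply, a3, b3]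
  · intro i; simp [Matrix.fromBlocks_multiply, a4, b4]
  · intro ℓ
    simp only [Fintype.sum_sum_type, Sum.elim_inl, Sum.elim_inr]
    refine Fin.addCases (fun ℓ => ?_) (fun ℓ => ?_) ℓ
    · have h1 : ∀ x : Fin t, Fin.natAdd s x ≠ Fin.castAdd t ℓ := by
        intro x hx; have := congrArg Fin.val hx; simp at this; omega
      simpa [h1, Fin.castAdd_inj] using hc ℓ
    · have h1 : ∀ x : Fin s, Fin.castAdd t x ≠ Fin.natAdd s ℓ := by
        intro x hx; have := congrArg Fin.val hx; simp at this; omega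
      simpa [h1, Fin.natAdd_inj] using kc ℓ
  · intro i j a x y hxy
    rw [show Matrix.fromBlocks (Q j) 0 0 (S j) * tb V₁ X V₂ i j a * Matrix.fromBlocks (P' i) 0 0 (R' i) = _ from 
      congrFun (congrFun (congrFun e i) j) a]
    rcases x with x | x <;> rcases y with y | y
    · exact hz i j a x y hxy
    · have := (γ j x).2
      have h' : s + (β₂ i y : ℕ) < γ j x := hxy
      omega
    · simp [tb]
    · exact kz i j a x y (Nat.lt_of_add_lt_add_left (show s + (β₂ i y : ℕ) < s + γ₂ j x from hxy))
  · rw [e, e2]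
    exact tb_ext hp _ _ hb' he ke
  · rw [e, e2, tb_cap hp _ _ _ hb', tb_cap hp _ _ _ hb', hg, kg]

lemma good_all {p : Fin m → ℝ} (hp : ∀ j, 0 < p j) (M : ℕ) : ∀ (D : Fin k → Type) (N : Fin m → Type)
    [∀ i, Fintype (D i)] [∀ i, DecidableEq (D i)] [∀ j, Fintype (N j)] [∀ j, DecidableEq (N j)]
    (V : ∀ i j, Fin (A i j) → Matrix (N j) (D i) ℝ)
    (_ : ∑ i, (Fintype.card (D i) : ℝ) = ∑ j, p j * (Fintype.card (N j) : ℝ))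
    (_ : 0 < gCap p V) (_ : ∑ j, Fintype.card (N j) = M), Good p V := by
  induction M using Nat.strong_induction_on with
  | _ M ih =>
  intro D N _ _ _ _ V hb hf hM
  by_cases hext : gExt p V
  · exact good_ext V hb hext
  obtain ⟨Q, hQ, T, hT1, hT2, hT3⟩ := dichotomy hp V hf hb hext
  have hf' := gCap_orth hp V hf Q hQ
  refine good_base V (fun i => (1 : Matrix (D i) (D i) ℝ)) (fun i => (1 : Matrix (D i) (D i) ℝ)) Q (fun j => (Q j)ᵀ) (fun i => Matrix.one_mul _) (fun i => Matrix.one_mul _)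
     (fun j => (hQ j).2) (fun j => (hQ j).1) ?_
  simp only [Matrix.mul_one]
  obtain ⟨U, W, hUW, hW, hbd⟩ := sub_coord p (fun i j a => Q j * V i j a) hb T
  obtain ⟨P, P', R, R', V₁, X, V₂, h1, h2, h3, h4, h⟩ := sub_adapt (fun i j a => Q j * V i j a) U W hUW
  refine good_base _ P P' R R' h1 h2 h3 h4 ?_
  have hcap := gCap_base hp (fun i j a => Q j * V i j a) P P' R R' h1 h2 h3 h4
  have hpos := mul_pos (gFac_pos p P P' R R' h2 h3) hf'
  rw [← hcap, h] at hpos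
  rw [h]
  have hb₁ : ∑ i, (Fintype.card (Fin (Module.finrank ℝ (U i))) : ℝ) = ∑ j, p j * (Fintype.card (Fin (Module.finrank ℝ (W j))) : ℝ) := by
    simp only [Fintype.card_fin]
    linarith
  have hb₂ : ∑ i, (Fintype.card (Fin (Module.finrank ℝ ((D i → ℝ) ⧸ U i))) : ℝ) = ∑ j, p j * (Fintype.card (Fin (Module.finrank ℝ ((N j → ℝ) ⧸ W j))) : ℝ) := by
    simp only [Fintype.card_fin, sub_dim, mul_sub, Finset.sum_sub_distrib]
    linarith
  rw [tb_cap hp _ _ _ hb₂] at hpos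
  have p1 : 0 < gCap p V₁ := lt_of_le_of_ne (gCap_nonneg hp V₁) (by rintro h0; rw [← h0] at hpos; simp at hpos)
  have p2 : 0 < gCap p V₂ := lt_of_le_of_ne (gCap_nonneg hp V₂) (by rintro h0; rw [← h0] at hpos; simp at hpos)
  have hsum : ∀ j, Module.finrank ℝ ((N j → ℝ) ⧸ W j) + Module.finrank ℝ (W j) = Fintype.card (N j) := fun j => by
    rw [Submodule.finrank_quotient_add_finrank, Module.finrank_fintype_fun_eq_card]
  have hlt1 : ∑ j, Module.finrank ℝ (W j) < M := by
    rw [← hM]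
    obtain ⟨⟨j, r⟩, hr⟩ := Finset.nonempty_iff_ne_empty.2 hT1
    refine Finset.sum_lt_sum (fun j _ => by have := hsum j; omega) ⟨j, Finset.mem_univ _, ?_⟩
    have : W j < ⊤ := by
      rw [lt_top_iff_ne_top]
      intro htop
      have : (fun _ => (1:ℝ)) ∈ W j := htop ▸ Submodule.mem_top
      exact one_ne_zero ((hW j _).1 this r hr)
    have := Submodule.finrank_lt this.ne
    rwa [Module.finrank_fintype_fun_eq_card] at this
  have hlt2 : ∑ j, Module.finrank ℝ ((N j → ℝ) ⧸ W j) < M := by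
    rw [← hM]
    have : ∃ s, s ∉ T := by
      by_contra hcon
      push Not at hcon
      exact hT2 (Finset.eq_univ_iff_forall.2 hcon)
    obtain ⟨⟨j, r⟩, hr⟩ := this
    refine Finset.sum_lt_sum (fun j _ => by have := hsum j; omega) ⟨j, Finset.mem_univ _, ?_⟩
    have hmem : (Pi.single r 1 : N j → ℝ) ∈ W j := by
      rw [hW]
      intro r' hr'
      have : r' ≠ r := by rintro rfl; exact hr hr'
      simp [this]
    have : 0 < Module.finrank ℝ (W j) := by
      rw [Module.finrank_pos_iff_exists_ne_zero]
      refine ⟨⟨_, hmem⟩, ?_⟩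
      intro h0
      have := congrFun (congrArg Subtype.val h0) r
      simp at this
    have := hsum j
    omega
  refine good_tb hp V₁ X V₂ hb₂ ?_ ?_
  · exact ih _ hlt1 _ _ V₁ hb₁ p1 (by simp)
  · exact ih _ hlt2 _ _ V₂ hb₂ p2 (by simp)

end Induct

/-! ## Part 9: sorting the labels and conclusion -/

section Final

lemma fembed_lt {s : ℕ} (f : Fin s → ℕ) {ℓ ℓ' : Fin s} (h : ℓ < ℓ') (r : Fin (f ℓ)) (r' : Fin (f ℓ')) :
    fembed f ℓ r < fembed f ℓ' r' := by
  have h2 : f ℓ + ∑ a ∈ Finset.univ.filter (fun a => a < ℓ), f a ≤ ∑ a ∈ Finset.univ.filter (fun a => a < ℓ'), f a := by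
    rw [← Finset.sum_insert (by simp)]
    refine Finset.sum_le_sum_of_subset ?_
    intro x hx
    simp only [Finset.mem_insert, Finset.mem_filter, Finset.mem_univ, true_and] at hx ⊢
    rcases hx with rfl | hx
    · exact h
    · exact hx.trans h
  have h3 := r.isLt
  show (∑ a ∈ Finset.univ.filter (fun a => a < ℓ), f a) + (r : ℕ) < (∑ a ∈ Finset.univ.filter (fun a => a < ℓ'), f a) + (r' : ℕ)
  omega

lemma fembed_bij {s : ℕ} (f : Fin s → ℕ) :
    Function.Bijective (fun z : (Σ ℓ, Fin (f ℓ)) => fembed f z.1 z.2) := by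
  rw [Fintype.bijective_iff_injective_and_card]
  refine ⟨?_, by simp⟩
  rintro ⟨ℓ, r⟩ ⟨ℓ', r'⟩ h
  rcases lt_trichotomy ℓ ℓ' with hl | hl | hl
  · exact absurd h (fembed_lt f hl r r').ne
  · subst hl
    have := congrArg Fin.val h
    have h2 : (r : ℕ) = r' := Nat.add_left_cancel this
    rw [Fin.ext h2]
  · exact absurd h (fembed_lt f hl r' r).ne'

lemma sort_labels {X : Type} [Fintype X] [DecidableEq X] {s n : ℕ} (β : X → Fin s) (hX : Fintype.card X = n) :
    ∃ (f : Fin s → ℕ) (hs : ∑ ℓ, f ℓ = n) (e : X ≃ Fin n), 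
      (∀ ℓ, (f ℓ : ℝ) = ∑ x, if β x = ℓ then (1:ℝ) else 0) ∧ 
      ∀ ℓ r, β (e.symm (Fin.cast hs (fembed f ℓ r))) = ℓ := by
  classical
  let f : Fin s → ℕ := fun ℓ => Fintype.card {x // β x = ℓ}
  let e1 : (Σ ℓ, Fin (f ℓ)) ≃ X := 
    (Equiv.sigmaCongrRight fun ℓ => (Fintype.equivFin {x // β x = ℓ}).symm).trans (Equiv.sigmaFiberEquiv β)
  have he1 : ∀ z, β (e1 z) = z.1 := by
    rintro ⟨ℓ, r⟩
    exact ((Fintype.equivFin {x // β x = ℓ}).symm r).2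
  have hs : ∑ ℓ, f ℓ = n := by
    rw [← hX, ← Fintype.card_congr e1]; simp
  let e2 : (Σ ℓ, Fin (f ℓ)) ≃ Fin n := (Equiv.ofBijective _ (fembed_bij f)).trans (finCongr hs)
  refine ⟨f, hs, e1.symm.trans e2, ?_, ?_⟩
  · intro ℓ
    simp [f, Fintype.card_subtype]
  · intro ℓ r
    have : e2.symm (Fin.cast hs (fembed f ℓ r)) = ⟨ℓ, r⟩ := by
      rw [Equiv.symm_apply_eq]; rfl
    simp only [Equiv.symm_trans_apply, Equiv.symm_symm, this, he1]

end Final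

/-- For positive rational weights and a feasible datum `(V, p)`, there
exist a base change `A` and dimension vectors `d¹, …, dˢ` summing to the dimension vector
of `V`, each orthogonal to `p`, such that `A·V` is block upper-triangular with respect to
this decomposition, the block-diagonal part `Ṽ = diag(A·V)` gives an extremizable datum
`(Ṽ, p)`, and `cap(V, p) = cap(A⁻¹·Ṽ, p)`. -/
theorem feasible_reduction_to_extremizable {k m : ℕ} (hk : 0 < k) (hm : 0 < m)
    {d : Fin k → ℕ} {n : Fin m → ℕ} {A : Fin k → Fin m → ℕ} (p : Fin m → ℚ)
    (hd : ∀ i, 0 < d i) (hn : ∀ j, 0 < n j) (hp : ∀ j, 0 < p j)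
    (hbal : ∑ i : Fin k, (d i : ℝ) = ∑ j : Fin m, (p j : ℝ) * (n j : ℝ))
    (V : ∀ i : Fin k, ∀ j : Fin m, Fin (A i j) → Matrix (Fin (n j)) (Fin (d i)) ℝ)
    (hfeas : 0 < cap (fun j => (p j : ℝ)) V) :
    ∃ (s : ℕ) (dd : Fin s → Fin k → ℕ) (nn : Fin s → Fin m → ℕ)
      (hd' : ∀ i, ∑ ℓ : Fin s, dd ℓ i = d i) (hn' : ∀ j, ∑ ℓ : Fin s, nn ℓ j = n j)
      (Ag : ∀ i : Fin k, Matrix (Fin (d i)) (Fin (d i)) ℝ)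
      (Ah : ∀ j : Fin m, Matrix (Fin (n j)) (Fin (n j)) ℝ)
      (Vt : ∀ i : Fin k, ∀ j : Fin m, Fin (A i j) → Matrix (Fin (n j)) (Fin (d i)) ℝ),
      (∀ i, IsUnit (Ag i).det) ∧ (∀ j, IsUnit (Ah j).det) ∧
      -- each dimension vector `d^ℓ` is orthogonal to `p`
      (∀ ℓ, ∑ i : Fin k, (dd ℓ i : ℝ) = ∑ j : Fin m, (p j : ℝ) * (nn ℓ j : ℝ)) ∧
      -- `A·V` is block upper-triangular of type `(dd, nn)`
      (∀ i j a (ℓ ℓ' : Fin s) (r : Fin (nn ℓ j)) (c : Fin (dd ℓ' i)), ℓ' < ℓ →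
        (Ah j * V i j a * (Ag i)⁻¹)
            (Fin.cast (hn' j) (fembed (fun ℓ'' => nn ℓ'' j) ℓ r))
            (Fin.cast (hd' i) (fembed (fun ℓ'' => dd ℓ'' i) ℓ' c)) = 0) ∧
      -- `Vt` is the block-diagonal part of `A·V`
      (∀ i j a (ℓ ℓ' : Fin s) (r : Fin (nn ℓ j)) (c : Fin (dd ℓ' i)),
        Vt i j a (Fin.cast (hn' j) (fembed (fun ℓ'' => nn ℓ'' j) ℓ r))
            (Fin.cast (hd' i) (fembed (fun ℓ'' => dd ℓ'' i) ℓ' c)) =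
          if ℓ = ℓ' then
            (Ah j * V i j a * (Ag i)⁻¹)
              (Fin.cast (hn' j) (fembed (fun ℓ'' => nn ℓ'' j) ℓ r))
              (Fin.cast (hd' i) (fembed (fun ℓ'' => dd ℓ'' i) ℓ' c))
          else 0) ∧
      Extremizable (fun j => (p j : ℝ)) Vt ∧
      cap (fun j => (p j : ℝ)) V =
        cap (fun j => (p j : ℝ)) (fun i j a => (Ah j)⁻¹ * Vt i j a * Ag i) := by
  set q : Fin m → ℝ := fun j => (p j : ℝ) with hq
  have hqp : ∀ j, 0 < q j := fun j => by simpa [hq] using hp j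
  have hgood : Good q V := good_all hqp _ _ _ V (by simpa using hbal) hfeas rfl
  obtain ⟨s, D', N', i1, i2, i3, i4, β, γ, P, P', Q, Q', a1, a2, a3, a4, hc, hz, he, hg⟩ := hgood
  choose f hf e hf2 hfe using fun i => sort_labels (β i) 
    ((Matrix.square_of_invertible (P i) (P' i) (a1 i) (a2 i)).trans (Fintype.card_fin (d i)))
  choose g hgs u hg2 hgu using fun j => sort_labels (γ j) 
    ((Matrix.square_of_invertible (Q j) (Q' j) (a3 j) (a4 j)).trans (Fintype.card_fin (n j)))
  have m1 : ∀ i, (P i).submatrix (e i).symm id * (P' i).submatrix id (e i).symm = 1 := fun i => by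
    rw [← Matrix.submatrix_mul _ _ _ _ _ Function.bijective_id, a1, Matrix.submatrix_one_equiv]
  have m2 : ∀ i, (P' i).submatrix id (e i).symm * (P i).submatrix (e i).symm id = 1 := fun i => by
    rw [← Matrix.submatrix_mul _ _ _ _ _ (e i).symm.bijective, a2, Matrix.submatrix_id_id]
  have m3 : ∀ j, (Q j).submatrix (u j).symm id * (Q' j).submatrix id (u j).symm = 1 := fun j => by
    rw [← Matrix.submatrix_mul _ _ _ _ _ Function.bijective_id, a3, Matrix.submatrix_one_equiv]
  have m4 : ∀ j, (Q' j).submatrix id (u j).symm * (Q j).submatrix (u j).symm id = 1 := fun j => by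
    rw [← Matrix.submatrix_mul _ _ _ _ _ (u j).symm.bijective, a4, Matrix.submatrix_id_id]
  have n1 : ∀ i, (1 : Matrix (D' i) (D' i) ℝ).submatrix (e i).symm id * (1 : Matrix (D' i) (D' i) ℝ).submatrix id (e i).symm = 1 := fun i => by
    rw [← Matrix.submatrix_mul _ _ _ _ _ Function.bijective_id, Matrix.one_mul, Matrix.submatrix_one_equiv]
  have n2 : ∀ i, (1 : Matrix (D' i) (D' i) ℝ).submatrix id (e i).symm * (1 : Matrix (D' i) (D' i) ℝ).submatrix (e i).symm id = 1 := fun i => by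
    rw [← Matrix.submatrix_mul _ _ _ _ _ (e i).symm.bijective, Matrix.one_mul, Matrix.submatrix_id_id]
  have n3 : ∀ j, (1 : Matrix (N' j) (N' j) ℝ).submatrix (u j).symm id * (1 : Matrix (N' j) (N' j) ℝ).submatrix id (u j).symm = 1 := fun j => by
    rw [← Matrix.submatrix_mul _ _ _ _ _ Function.bijective_id, Matrix.one_mul, Matrix.submatrix_one_equiv]
  have n4 : ∀ j, (1 : Matrix (N' j) (N' j) ℝ).submatrix id (u j).symm * (1 : Matrix (N' j) (N' j) ℝ).submatrix (u j).symm id = 1 := fun j => by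
    rw [← Matrix.submatrix_mul _ _ _ _ _ (u j).symm.bijective, Matrix.one_mul, Matrix.submatrix_id_id]
  have perm : ∀ (i : Fin k) (j : Fin m) (M : Matrix (N' j) (D' i) ℝ), 
      (1 : Matrix (N' j) (N' j) ℝ).submatrix (u j).symm id * M * (1 : Matrix (D' i) (D' i) ℝ).submatrix id (e i).symm =
        M.submatrix (u j).symm (e i).symm := by
    intro i j M
    have h1 : (1 : Matrix (N' j) (N' j) ℝ).submatrix (u j).symm id * M = M.submatrix (u j).symm id := by
      conv_lhs => rw [← Matrix.submatrix_id_id M]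
      rw [← Matrix.submatrix_mul _ _ _ _ _ Function.bijective_id, Matrix.one_mul]
    rw [h1, ← Matrix.submatrix_mul _ _ _ _ _ Function.bijective_id, Matrix.mul_one]
  have inv1 : ∀ i, ((P i).submatrix (e i).symm id)⁻¹ = (P' i).submatrix id (e i).symm := fun i =>
    Matrix.inv_eq_right_inv (m1 i)
  have inv2 : ∀ j, ((Q j).submatrix (u j).symm id)⁻¹ = (Q' j).submatrix id (u j).symm := fun j =>
    Matrix.inv_eq_right_inv (m3 j)
  have conj : ∀ i j a, (Q j).submatrix (u j).symm id * V i j a * (P' i).submatrix id (e i).symm =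
      (Q j * V i j a * P' i).submatrix (u j).symm (e i).symm := by
    intro i j a
    have h1 : (Q j).submatrix (u j).symm id * V i j a = (Q j * V i j a).submatrix (u j).symm id := by
      conv_lhs => rw [← Matrix.submatrix_id_id (V i j a)]
      rw [← Matrix.submatrix_mul _ _ _ _ _ Function.bijective_id]
    rw [h1, ← Matrix.submatrix_mul _ _ _ _ _ Function.bijective_id]
  let Vt : ∀ i : Fin k, ∀ j : Fin m, Fin (A i j) → Matrix (Fin (n j)) (Fin (d i)) ℝ := fun i j a =>
    (dg β γ (fun i j a => Q j * V i j a * P' i) i j a).submatrix (u j).symm (e i).symm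
  refine ⟨s, fun ℓ i => f i ℓ, fun ℓ j => g j ℓ, hf, hgs, fun i => (P i).submatrix (e i).symm id,
    fun j => (Q j).submatrix (u j).symm id, Vt, ?_, ?_, ?_, ?_, ?_, ?_, ?_⟩
  · intro i
    exact (Matrix.isUnit_iff_isUnit_det _).1 (IsUnit.of_mul_eq_one _ (m1 i))
  · intro j
    exact (Matrix.isUnit_iff_isUnit_det _).1 (IsUnit.of_mul_eq_one _ (m3 j))
  · intro ℓ
    simp only [hf2, hg2]
    exact hc ℓ
  · intro i j a ℓ ℓ' r c hlt
    rw [inv1, conj, Matrix.submatrix_apply]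
    refine hz i j a _ _ ?_
    rw [hfe i ℓ' c, hgu j ℓ r]
    exact hlt
  · intro i j a ℓ ℓ' r c
    rw [inv1, conj, Matrix.submatrix_apply]
    simp only [Vt, dg, Matrix.submatrix_apply, Matrix.of_apply]
    rw [hfe i ℓ' c, hgu j ℓ r]
  · have := gExt_base hqp _ (fun i => (1 : Matrix (D' i) (D' i) ℝ).submatrix (e i).symm id) 
      (fun i => (1 : Matrix (D' i) (D' i) ℝ).submatrix id (e i).symm)
      (fun j => (1 : Matrix (N' j) (N' j) ℝ).submatrix (u j).symm id) 
      (fun j => (1 : Matrix (N' j) (N' j) ℝ).submatrix id (u j).symm) n1 n2 n3 n4 he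
    simp only [perm] at this
    exact this
  · have c1 := gCap_base hqp (dg β γ (fun i j a => Q j * V i j a * P' i)) 
      (fun i => (1 : Matrix (D' i) (D' i) ℝ).submatrix (e i).symm id) 
      (fun i => (1 : Matrix (D' i) (D' i) ℝ).submatrix id (e i).symm)
      (fun j => (1 : Matrix (N' j) (N' j) ℝ).submatrix (u j).symm id) 
      (fun j => (1 : Matrix (N' j) (N' j) ℝ).submatrix id (u j).symm) n1 n2 n3 n4
    have c2 := gCap_base hqp (fun i j a => Q j * V i j a * P' i) 
      (fun i => (1 : Matrix (D' i) (D' i) ℝ).submatrix (e i).symm id) 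
      (fun i => (1 : Matrix (D' i) (D' i) ℝ).submatrix id (e i).symm)
      (fun j => (1 : Matrix (N' j) (N' j) ℝ).submatrix (u j).symm id) 
      (fun j => (1 : Matrix (N' j) (N' j) ℝ).submatrix id (u j).symm) n1 n2 n3 n4
    simp only [perm] at c1 c2
    rw [← hg, ← c2] at c1
    have c3 := gCap_base hqp V _ _ _ _ m1 m2 m3 m4
    simp only [conj] at c3
    have c4 := gCap_base hqp (fun i j a => (Q' j).submatrix id (u j).symm * Vt i j a * (P i).submatrix (e i).symm id)
      _ _ _ _ m1 m2 m3 m4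
    have e4 : (fun i j a => (Q j).submatrix (u j).symm id * ((Q' j).submatrix id (u j).symm * Vt i j a * (P i).submatrix (e i).symm id) 
        * (P' i).submatrix id (e i).symm) = Vt := by
      funext i j a
      rw [Matrix.mul_assoc, Matrix.mul_assoc, m1, Matrix.mul_one, ← Matrix.mul_assoc, m3, Matrix.one_mul]
    rw [e4] at c4
    simp only [inv2]
    have hF := gFac_pos q _ _ _ _ m2 m3
    have c5 : gFac q (fun i => (P' i).submatrix id (e i).symm) (fun j => (Q j).submatrix (u j).symm id) * gCap q V =
      gFac q (fun i => (P' i).submatrix id (e i).symm) (fun j => (Q j).submatrix (u j).symm id) * 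
        gCap q (fun i j a => (Q' j).submatrix id (u j).symm * Vt i j a * (P i).submatrix (e i).symm id) := by
      rw [← c3, ← c4]
      exact c1.symm
    exact mul_left_cancel₀ hF.ne' c5
end

section
/- Assume p_1,…,p_m are positive rational numbers, and let (V, p) be a feasible quiver datum with dimension vector d = (d_1,…,d_k,n_1,…,n_m). Then there exist a geometric datum (W, p) of the same dimension vector and a one-parameter family of tuples of invertible matrices λ̃(t) (for t ∈ ℝ, t ≠ 0, with each λ̃(t)_x ∈ GL(d_x, ℝ) depending on t as a Laurent-monomial matrix function, namely λ̃(t)_x = B_x λ(t)_x A_x for fixed invertible A_x, B_x and diagonal λ(t)_x with entries integer powers of t) such that lim_{t→0} λ̃(t)·V = W. In particular, for every ε > 0 there exists a tuple Ṽ in the orbit {A·V : A ∈ ∏_x GL(d_x, ℝ)} such that ‖Ṽ − W‖_F < ε, where ‖·‖_F denotes the Frobenius norm on the tuple of matrices. -/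
open Matrix BigOperators

open Topology Filter

set_option linter.unusedSectionVars false

namespace QDeg

lemma exists_diag {n : Type} [Fintype n] [DecidableEq n] (M : Matrix n n ℝ) :
    ∃ (L G : Matrix n n ℝ) (δ : n → ℝ), L.det = 1 ∧ G.det = 1 ∧ L * M * G = diagonal δ := by
  obtain ⟨L, L', δ, h⟩ := Matrix.Pivot.exists_list_transvec_mul_mul_list_transvec_eq_diagonal M
  exact ⟨_, _, δ, TransvectionStruct.det_toMatrix_prod L, TransvectionStruct.det_toMatrix_prod L', h⟩

open scoped MatrixOrder in
lemma exists_sq {n : Type} [Fintype n] [DecidableEq n] {M : Matrix n n ℝ} (h : M.PosDef) :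
    ∃ B : Matrix n n ℝ, B.det ≠ 0 ∧ Bᵀ * B = M := by
  obtain ⟨B, hB⟩ := CStarAlgebra.nonneg_iff_eq_star_mul_self.mp h.posSemidef.nonneg
  have hB' : Bᵀ * B = M := by
    rw [hB, Matrix.star_eq_conjTranspose, Matrix.conjTranspose_eq_transpose_of_trivial]
  refine ⟨B, ?_, hB'⟩
  intro h0
  have := h.det_pos
  rw [← hB', Matrix.det_mul, h0] at this
  simp at this

lemma psd_tm {n l : Type} [Fintype n] [Fintype l] (X : Matrix n l ℝ) : (Xᵀ * X).PosSemidef := by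
  simpa using Matrix.posSemidef_conjTranspose_mul_self X

lemma psd_mt {n l : Type} [Fintype n] [Fintype l] (X : Matrix n l ℝ) : (X * Xᵀ).PosSemidef := by
  simpa using Matrix.posSemidef_self_mul_conjTranspose X

lemma det_le_exp {n : Type} [Fintype n] [DecidableEq n] {M : Matrix n n ℝ} (h : M.PosSemidef) :
    M.det ≤ Real.exp (M.trace - Fintype.card n) := by
  rw [h.1.det_eq_prod_eigenvalues, h.1.trace_eq_sum_eigenvalues]
  have : (∑ i, (h.1.eigenvalues i : ℝ)) - Fintype.card n = ∑ i, (h.1.eigenvalues i - 1) := by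
    simp [Finset.sum_sub_distrib]
  simp only [RCLike.ofReal_real_eq_id, id]
  rw [this, Real.exp_sum]
  apply Finset.prod_le_prod
  · intro i _; exact h.eigenvalues_nonneg i
  · intro i _
    have := Real.add_one_le_exp (h.1.eigenvalues i - 1)
    linarith

lemma eq_one_of_det {n : Type} [Fintype n] [DecidableEq n] {M : Matrix n n ℝ} (h : M.PosSemidef)
    (h0 : M.det ≠ 0) (he : Real.exp (M.trace - Fintype.card n) ≤ M.det) : M = 1 := by
  have hev : ∀ i, h.1.eigenvalues i = 1 := by
    by_contra! hne
    obtain ⟨i0, hi0⟩ := hne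
    have hpd : M.PosDef := h.posDef_iff_det_ne_zero.mpr h0
    rw [h.1.det_eq_prod_eigenvalues, h.1.trace_eq_sum_eigenvalues] at he
    have : (∑ i, (h.1.eigenvalues i : ℝ)) - Fintype.card n = ∑ i, (h.1.eigenvalues i - 1) := by
      simp [Finset.sum_sub_distrib]
    simp only [RCLike.ofReal_real_eq_id, id] at he
    rw [this, Real.exp_sum] at he
    refine absurd he (not_le.mpr ?_)
    apply Finset.prod_lt_prod
    · intro i _; exact hpd.eigenvalues_pos i
    · intro i _
      have := Real.add_one_le_exp (h.1.eigenvalues i - 1)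
      linarith
    · refine ⟨i0, Finset.mem_univ _, ?_⟩
      have := Real.add_one_lt_exp (x := h.1.eigenvalues i0 - 1) (by
        intro hh; apply hi0; linarith)
      linarith
  have hsp := h.1.spectral_theorem
  rw [hsp]
  have : (RCLike.ofReal ∘ h.1.eigenvalues : n → ℝ) = 1 := by
    ext i; simp [hev i]
  rw [this]
  have : (diagonal (1 : n → ℝ)) = 1 := Matrix.diagonal_one
  rw [this, map_one]

lemma ultra_lim (u : ℕ → ℝ) (C : ℝ) (h : ∀ n, |u n| ≤ C) :
    ∃ l, Tendsto u (hyperfilter ℕ : Filter ℕ) (𝓝 l) := by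
  have hc : IsCompact (Set.Icc (-C) C) := isCompact_Icc
  obtain ⟨l, _, hl⟩ := hc.ultrafilter_le_nhds ((hyperfilter ℕ).map u) (by
    simp only [Ultrafilter.coe_map, le_principal_iff, Filter.mem_map]
    exact Filter.univ_mem' fun n => abs_le.mp (h n))
  exact ⟨l, hl⟩

/-- general data over finite index types -/
abbrev QD {k m : ℕ} (D : Fin k → Type) (N : Fin m → Type) (A : Fin k → Fin m → ℕ) : Type :=
  ∀ i j, Fin (A i j) → Matrix (N j) (D i) ℝ

section
variable {k m : ℕ} {D : Fin k → Type} {N : Fin m → Type} {A : Fin k → Fin m → ℕ}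
  [∀ i, Fintype (D i)] [∀ i, DecidableEq (D i)] [∀ j, Fintype (N j)] [∀ j, DecidableEq (N j)]

/-- left operator -/
def Lop (p : Fin m → ℝ) (V : QD D N A) (i : Fin k) : Matrix (D i) (D i) ℝ :=
  ∑ j, p j • ∑ a, (V i j a)ᵀ * V i j a

/-- right operator -/
def Rop (V : QD D N A) (j : Fin m) : Matrix (N j) (N j) ℝ :=
  ∑ i, ∑ a, V i j a * (V i j a)ᵀ

def Geom (p : Fin m → ℝ) (V : QD D N A) : Prop :=
  (∀ i, Lop p V i = 1) ∧ (∀ j, Rop V j = 1)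

def act (H : ∀ j, Matrix (N j) (N j) ℝ) (V : QD D N A) (G : ∀ i, Matrix (D i) (D i) ℝ) : QD D N A :=
  fun i j a => H j * V i j a * G i

def actL (H : ∀ j, Matrix (N j) (N j) ℝ) (V : QD D N A) : QD D N A :=
  fun i j a => H j * V i j a

def gnum (p : Fin m → ℝ) (V : QD D N A) : ℝ := ∏ i, (Lop p V i).det

noncomputable def wt (p : Fin m → ℝ) (H : ∀ j, Matrix (N j) (N j) ℝ) : ℝ := ∏ j, ((H j).det ^ 2) ^ (p j)

def FeasC (p : Fin m → ℝ) (V : QD D N A) (c : ℝ) : Prop :=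
  ∀ B : ∀ j, Matrix (N j) (N j) ℝ, (∀ j, (B j).det ≠ 0) → c * wt p B ≤ gnum p (actL B V)

def Degen (p : Fin m → ℝ) (V : QD D N A) : Prop :=
  ∃ (H : ∀ j, Matrix (N j) (N j) ℝ) (G : ∀ i, Matrix (D i) (D i) ℝ)
    (eN : ∀ j, N j → ℤ) (eD : ∀ i, D i → ℤ),
    (∀ j, (H j).det ≠ 0) ∧ (∀ i, (G i).det ≠ 0) ∧
    (∀ i j a r c, act H V G i j a r c ≠ 0 → eD i c ≤ eN j r) ∧
    Geom p (fun i j a => Matrix.of fun r c =>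
      if eD i c = eN j r then act H V G i j a r c else 0 : QD D N A)

lemma Lop_psd (p : Fin m → ℝ) (hp : ∀ j, 0 < p j) (V : QD D N A) (i : Fin k) :
    (Lop p V i).PosSemidef := by
  unfold Lop
  apply Matrix.posSemidef_sum
  intro j _
  apply Matrix.PosSemidef.smul _ (hp j).le
  exact Matrix.posSemidef_sum _ fun a _ => psd_tm _

lemma Rop_psd (V : QD D N A) (j : Fin m) : (Rop V j).PosSemidef := by
  unfold Rop
  apply Matrix.posSemidef_sum
  intro i _
  exact Matrix.posSemidef_sum _ fun a _ => psd_mt _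

lemma gnum_nonneg (p : Fin m → ℝ) (hp : ∀ j, 0 < p j) (V : QD D N A) : 0 ≤ gnum p V :=
  Finset.prod_nonneg fun i _ => (Lop_psd p hp V i).det_nonneg

lemma wt_pos (p : Fin m → ℝ) {H : ∀ j, Matrix (N j) (N j) ℝ} (h : ∀ j, (H j).det ≠ 0) :
    0 < wt p H :=
  Finset.prod_pos fun j _ => Real.rpow_pos_of_pos (by have := h j; positivity) _

lemma wt_mul (p : Fin m → ℝ) (H K : ∀ j, Matrix (N j) (N j) ℝ) :
    wt p (fun j => H j * K j) = wt p H * wt p K := by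
  unfold wt
  rw [← Finset.prod_mul_distrib]
  refine Finset.prod_congr rfl fun j _ => ?_
  rw [Matrix.det_mul, mul_pow, Real.mul_rpow (by positivity) (by positivity)]

lemma Lop_right (p : Fin m → ℝ) (V : QD D N A) (G : ∀ i, Matrix (D i) (D i) ℝ) (i : Fin k) :
    Lop p (fun i j a => V i j a * G i : QD D N A) i = (G i)ᵀ * Lop p V i * G i := by
  unfold Lop
  simp only [Matrix.mul_sum, Matrix.sum_mul, Finset.smul_sum, Matrix.transpose_mul,
    Matrix.mul_smul, Matrix.smul_mul, Matrix.mul_assoc]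

lemma gnum_right (p : Fin m → ℝ) (V : QD D N A) (G : ∀ i, Matrix (D i) (D i) ℝ) :
    gnum p (fun i j a => V i j a * G i : QD D N A) = gnum p V * ∏ i, (G i).det ^ 2 := by
  unfold gnum
  rw [← Finset.prod_mul_distrib]
  refine Finset.prod_congr rfl fun j _ => ?_
  rw [Lop_right, Matrix.det_mul, Matrix.det_mul, Matrix.det_transpose]; ring

lemma FeasC.act {p : Fin m → ℝ} {V : QD D N A} {c : ℝ} (h : FeasC p V c)
    {H : ∀ j, Matrix (N j) (N j) ℝ} (hH : ∀ j, (H j).det ≠ 0) (G : ∀ i, Matrix (D i) (D i) ℝ) :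
    FeasC p (act H V G) (c * wt p H * ∏ i, (G i).det ^ 2) := by
  intro B hB
  have h1 := h (fun j => B j * H j) (fun j => by
    rw [Matrix.det_mul]; exact mul_ne_zero (hB j) (hH j))
  have e : actL B (QDeg.act H V G) = fun i j a => actL (fun j => B j * H j) V i j a * G i := by
    funext i j a
    simp [actL, QDeg.act, Matrix.mul_assoc]
  rw [e, gnum_right]
  rw [wt_mul] at h1
  have h2 : 0 ≤ ∏ i, (G i).det ^ 2 := Finset.prod_nonneg fun i _ => sq_nonneg _
  calc _ = (c * (wt p B * wt p H)) * ∏ i, (G i).det ^ 2 := by ring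
    _ ≤ _ := mul_le_mul_of_nonneg_right h1 h2

lemma continuous_Lop (p : Fin m → ℝ) (i : Fin k) : Continuous fun V : QD D N A => Lop p V i := by
  unfold Lop
  fun_prop

lemma continuous_gnum (p : Fin m → ℝ) (B : ∀ j, Matrix (N j) (N j) ℝ) :
    Continuous fun V : QD D N A => gnum p (actL B V) := by
  unfold gnum
  refine continuous_finsetProd _ fun i _ => Continuous.matrix_det ?_
  unfold Lop actL
  fun_prop

lemma FeasC.limit {ι : Type} {l : Filter ι} [l.NeBot] {p : Fin m → ℝ} {V : ι → QD D N A}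
    {W : QD D N A} {c : ι → ℝ} {c' : ℝ} (h : ∀ᶠ s in l, FeasC p (V s) (c s))
    (hV : Tendsto V l (𝓝 W)) (hc : Tendsto c l (𝓝 c')) : FeasC p W c' := by
  intro B hB
  have h1 := ((continuous_gnum p B).tendsto W).comp hV
  exact le_of_tendsto_of_tendsto (hc.mul_const (wt p B)) h1 (h.mono fun s hs => hs B hB)

lemma trace_Lop_Rop (p : Fin m → ℝ) (V : QD D N A) :
    ∑ i, (Lop p V i).trace = ∑ j, p j * (Rop V j).trace := by
  unfold Lop Rop
  simp only [Matrix.trace_sum, Matrix.trace_smul, smul_eq_mul, Finset.mul_sum]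
  rw [Finset.sum_comm]
  refine Finset.sum_congr rfl fun j _ => Finset.sum_congr rfl fun i _ =>
    Finset.sum_congr rfl fun a _ => ?_
  rw [Matrix.trace_mul_comm]

lemma Rop_actL (B : ∀ j, Matrix (N j) (N j) ℝ) (V : QD D N A) (j : Fin m) :
    Rop (actL B V) j = B j * Rop V j * (B j)ᵀ := by
  unfold Rop actL
  simp only [Matrix.mul_sum, Matrix.sum_mul, Matrix.transpose_mul, Matrix.mul_assoc]

end
end QDeg

namespace QDeg
section
variable {k m : ℕ} {D : Fin k → Type} {N : Fin m → Type} {A : Fin k → Fin m → ℕ}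
  [∀ i, Fintype (D i)] [∀ i, DecidableEq (D i)] [∀ j, Fintype (N j)] [∀ j, DecidableEq (N j)]

lemma geom_of_feas {p : Fin m → ℝ} (hp : ∀ j, 0 < p j)
    (hbal : ∑ i, (Fintype.card (D i) : ℝ) = ∑ j, p j * (Fintype.card (N j) : ℝ))
    {W : QD D N A} (hL : ∀ i, Lop p W i = 1) (hF : FeasC p W 1) : Geom p W := by
  refine ⟨hL, ?_⟩
  have hpsd := Rop_psd W
  -- regularised bound
  have hδ : ∀ δ : ℝ, 0 < δ → 1 ≤ ∏ j, (Rop W j + δ • 1).det ^ p j := by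
    intro δ hδ
    have hpd : ∀ j, (Rop W j + δ • (1 : Matrix (N j) (N j) ℝ)).PosDef := fun j =>
      Matrix.PosDef.posSemidef_add (hpsd j) (Matrix.PosDef.smul Matrix.PosDef.one hδ)
    choose B hB0 hB using fun j => exists_sq (hpd j).inv
    have h1 := hF B hB0
    have hw : wt p B * ∏ j, (Rop W j + δ • 1).det ^ p j = 1 := by
      unfold wt
      rw [← Finset.prod_mul_distrib]
      apply Finset.prod_eq_one
      intro j _
      have hd := (hpd j).det_pos
      rw [← Real.mul_rpow (by positivity) hd.le]
      have : (B j).det ^ 2 = ((Rop W j + δ • 1).det)⁻¹ := by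
        have := congrArg Matrix.det (hB j)
        rw [Matrix.det_mul, Matrix.det_transpose, Matrix.det_nonsing_inv,
          Ring.inverse_eq_inv'] at this
        rw [← this]; ring
      rw [this, inv_mul_cancel₀ hd.ne', Real.one_rpow]
    have hg : gnum p (actL B W) ≤ 1 := by
      calc gnum p (actL B W) ≤ ∏ i, Real.exp ((Lop p (actL B W) i).trace - Fintype.card (D i)) :=
            Finset.prod_le_prod (fun i _ => (Lop_psd p hp _ i).det_nonneg)
              (fun i _ => det_le_exp (Lop_psd p hp _ i))
        _ = Real.exp (∑ i, ((Lop p (actL B W) i).trace - Fintype.card (D i))) :=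
            (Real.exp_sum _ _).symm
        _ ≤ 1 := by
            rw [Real.exp_le_one_iff, Finset.sum_sub_distrib, trace_Lop_Rop, hbal, sub_nonpos]
            refine Finset.sum_le_sum fun j _ => mul_le_mul_of_nonneg_left ?_ (hp j).le
            rw [Rop_actL, Matrix.trace_mul_comm, ← Matrix.mul_assoc, hB]
            have hdu : IsUnit (Rop W j + δ • (1 : Matrix (N j) (N j) ℝ)).det :=
              (hpd j).det_pos.ne'.isUnit
            have e : (Rop W j + δ • (1 : Matrix (N j) (N j) ℝ))⁻¹ * Rop W j
                = 1 - δ • (Rop W j + δ • (1 : Matrix (N j) (N j) ℝ))⁻¹ := by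
              have h3 := Matrix.nonsing_inv_mul _ hdu
              rw [Matrix.mul_add, Matrix.mul_smul, Matrix.mul_one] at h3
              exact eq_sub_of_add_eq h3
            rw [e, Matrix.trace_sub, Matrix.trace_smul, Matrix.trace_one, smul_eq_mul]
            have := (hpd j).inv.posSemidef.trace_nonneg
            nlinarith
    have hw0 := wt_pos p hB0
    have hle : wt p B ≤ 1 := by linarith
    by_contra! hlt
    nlinarith [mul_lt_mul_of_pos_left hlt hw0]
  have h1 : 1 ≤ ∏ j, (Rop W j).det ^ p j := by
    have hc : Continuous fun δ : ℝ => ∏ j, (Rop W j + δ • 1).det ^ p j := by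
      refine continuous_finsetProd _ fun j _ => ?_
      refine Continuous.rpow_const ?_ (fun _ => Or.inr (hp j).le)
      refine Continuous.matrix_det ?_
      fun_prop
    have ht := (hc.tendsto 0).mono_left (nhdsWithin_le_nhds (s := Set.Ioi 0))
    have := ge_of_tendsto ht (by
      filter_upwards [self_mem_nhdsWithin] with δ hd using hδ δ hd)
    simpa using this
  have hdet : ∀ j, 0 < (Rop W j).det := by
    intro j
    refine lt_of_le_of_ne (hpsd j).det_nonneg fun h0 => ?_
    have : ∏ j, (Rop W j).det ^ p j = 0 := by
      apply Finset.prod_eq_zero (Finset.mem_univ j)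
      rw [← h0, Real.zero_rpow (hp j).ne']
    linarith
  have htr : ∑ j, p j * ((Rop W j).trace - Fintype.card (N j)) = 0 := by
    simp only [mul_sub, Finset.sum_sub_distrib]
    rw [← trace_Lop_Rop, ← hbal]
    simp [hL]
  intro j0
  by_contra hne
  have hlt : ∏ j, (Rop W j).det ^ p j
      < ∏ j, Real.exp ((Rop W j).trace - Fintype.card (N j)) ^ p j := by
    apply Finset.prod_lt_prod
    · intro j _; exact Real.rpow_pos_of_pos (hdet j) _
    · intro j _; exact Real.rpow_le_rpow (hdet j).le (det_le_exp (hpsd j)) (hp j).le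
    · refine ⟨j0, Finset.mem_univ _, Real.rpow_lt_rpow (hdet j0).le ?_ (hp j0)⟩
      by_contra! hge
      exact hne (eq_one_of_det (hpsd j0) (hdet j0).ne' hge)
  have : ∏ j, Real.exp ((Rop W j).trace - Fintype.card (N j)) ^ p j = 1 := by
    rw [← Real.exp_zero, ← htr, Real.exp_sum]
    refine Finset.prod_congr rfl fun j _ => ?_
    rw [← Real.exp_mul, mul_comm]
  linarith

/-- near-optimal scalings -/
lemma exists_scaling {p : Fin m → ℝ} (hp : ∀ j, 0 < p j) {V : QD D N A} {c₀ : ℝ} (hc₀ : 0 < c₀)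
    (hF : FeasC p V c₀) (ε : ℝ) (hε : 0 < ε) :
    ∃ (B : ∀ j, Matrix (N j) (N j) ℝ) (C : ∀ i, Matrix (D i) (D i) ℝ) (V' : QD D N A),
      (∀ j, (B j).det ≠ 0) ∧ (∀ i, (C i).det ≠ 0) ∧
      (∀ i j a, B j * V i j a = V' i j a * C i) ∧ (∀ i, Lop p V' i = 1) ∧
      FeasC p V' (1 / (1 + ε)) := by
  set S : Set ℝ := {r | ∃ B : ∀ j, Matrix (N j) (N j) ℝ, (∀ j, (B j).det ≠ 0) ∧
    r = gnum p (actL B V) / wt p B} with hS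
  have hne : S.Nonempty := ⟨_, fun j => 1, by simp, rfl⟩
  have hlb : ∀ r ∈ S, c₀ ≤ r := by
    rintro r ⟨B, hB, rfl⟩
    rw [le_div_iff₀ (wt_pos p hB)]
    exact hF B hB
  have hbdd : BddBelow S := ⟨c₀, hlb⟩
  have hc : 0 < sInf S := lt_of_lt_of_le hc₀ (le_csInf hne hlb)
  have hFc : FeasC p V (sInf S) := by
    intro B hB
    rw [← le_div_iff₀ (wt_pos p hB)]
    exact csInf_le hbdd ⟨B, hB, rfl⟩
  obtain ⟨r, ⟨B, hB, rfl⟩, hr⟩ := exists_lt_of_csInf_lt hne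
    (show sInf S < sInf S * (1 + ε) by nlinarith)
  have hw := wt_pos p hB
  have hgpos : 0 < gnum p (actL B V) := lt_of_lt_of_le (mul_pos hc hw) (hFc B hB)
  have hpd : ∀ i, (Lop p (actL B V) i).PosDef := by
    intro i
    rw [(Lop_psd p hp _ i).posDef_iff_det_ne_zero]
    intro h0
    have : gnum p (actL B V) = 0 := Finset.prod_eq_zero (Finset.mem_univ i) h0
    linarith
  choose C hC0 hC using fun i => exists_sq (hpd i)
  have hCu : ∀ i, IsUnit (C i).det := fun i => (hC0 i).isUnit
  refine ⟨B, C, act B V (fun i => (C i)⁻¹), hB, hC0, ?_, ?_, ?_⟩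
  · intro i j a
    simp only [act]
    rw [Matrix.mul_assoc, Matrix.nonsing_inv_mul _ (hCu i), Matrix.mul_one]
  · intro i
    have e := Lop_right p (actL B V) (fun i => (C i)⁻¹) i
    have e2 : (fun i j a => actL B V i j a * (C i)⁻¹ : QD D N A) = act B V (fun i => (C i)⁻¹) := rfl
    rw [e2] at e
    rw [e, ← hC, Matrix.transpose_nonsing_inv, Matrix.mul_assoc, Matrix.mul_assoc,
      Matrix.mul_nonsing_inv _ (hCu i), Matrix.mul_one, Matrix.nonsing_inv_mul]
    rw [Matrix.det_transpose]; exact hCu i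
  · have h1 := hFc.act hB (fun i => (C i)⁻¹)
    have e3 : (∏ i, ((C i)⁻¹).det ^ 2) = (gnum p (actL B V))⁻¹ := by
      unfold gnum
      rw [← Finset.prod_inv_distrib]
      refine Finset.prod_congr rfl fun i _ => ?_
      rw [← hC, Matrix.det_mul, Matrix.det_transpose, Matrix.det_nonsing_inv,
        Ring.inverse_eq_inv']
      rw [inv_pow, sq]
    rw [e3] at h1
    intro B' hB'
    refine le_trans ?_ (h1 B' hB')
    refine mul_le_mul_of_nonneg_right ?_ (wt_pos p hB').le
    rw [div_lt_iff₀ hw] at hr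
    rw [div_le_iff₀ (by linarith), ← div_eq_mul_inv, div_mul_eq_mul_div, le_div_iff₀ hgpos]
    nlinarith

lemma entry_bound {p : Fin m → ℝ} (hp : ∀ j, 0 < p j) {V : QD D N A} {i : Fin k}
    (h : Lop p V i = 1) (j : Fin m) (a : Fin (A i j)) (r : N j) (c : D i) :
    |V i j a r c| ≤ 1 + 1 / p j := by
  have h1 : (Lop p V i) c c = 1 := by rw [h]; simp
  have h2 : p j * (V i j a r c) ^ 2 ≤ (Lop p V i) c c := by
    unfold Lop
    simp only [Matrix.sum_apply, Matrix.smul_apply, smul_eq_mul, Matrix.mul_apply,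
      Matrix.transpose_apply]
    refine le_trans ?_ (Finset.single_le_sum (f := fun j => p j * ∑ a : Fin (A i j), ∑ r,
      V i j a r c * V i j a r c) (fun j _ => ?_) (Finset.mem_univ j))
    · refine mul_le_mul_of_nonneg_left ?_ (hp j).le
      refine le_trans ?_ (Finset.single_le_sum (f := fun a : Fin (A i j) => ∑ r,
        V i j a r c * V i j a r c) (fun a _ => Finset.sum_nonneg fun r _ => mul_self_nonneg _)
        (Finset.mem_univ a))
      refine le_trans (le_of_eq (sq _)) (Finset.single_le_sum (f := fun r =>
        V i j a r c * V i j a r c) (fun a _ => mul_self_nonneg _) (Finset.mem_univ r))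
    · exact mul_nonneg (hp j).le (Finset.sum_nonneg fun a _ =>
        Finset.sum_nonneg fun r _ => mul_self_nonneg _)
  rw [h1] at h2
  have h3 : (V i j a r c) ^ 2 ≤ 1 / p j := by
    rw [le_div_iff₀ (hp j)]; linarith
  have h4 := sq_abs (V i j a r c)
  have h5 : 0 < 1 / p j := by have := hp j; positivity
  nlinarith [abs_nonneg (V i j a r c), sq_nonneg (|V i j a r c| - 1)]

/-- total absolute size of a pair of matrix tuples -/
def siz (B : ∀ j, Matrix (N j) (N j) ℝ) (C : ∀ i, Matrix (D i) (D i) ℝ) : ℝ :=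
  (∑ j, ∑ r, ∑ c, |B j r c|) + ∑ i, ∑ r, ∑ c, |C i r c|

lemma siz_nonneg (B : ∀ j, Matrix (N j) (N j) ℝ) (C : ∀ i, Matrix (D i) (D i) ℝ) :
    0 ≤ siz B C := by unfold siz; positivity

lemma le_siz_left (B : ∀ j, Matrix (N j) (N j) ℝ) (C : ∀ i, Matrix (D i) (D i) ℝ) (j : Fin m)
    (r c : N j) : |B j r c| ≤ siz B C := by
  unfold siz
  have h1 : |B j r c| ≤ ∑ c, |B j r c| :=
    Finset.single_le_sum (f := fun c => |B j r c|) (fun _ _ => abs_nonneg _) (Finset.mem_univ c)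
  have h2 : ∑ c, |B j r c| ≤ ∑ r, ∑ c, |B j r c| :=
    Finset.single_le_sum (f := fun r => ∑ c, |B j r c|) (fun _ _ => by positivity)
      (Finset.mem_univ r)
  have h3 : ∑ r, ∑ c, |B j r c| ≤ ∑ j, ∑ r, ∑ c, |B j r c| :=
    Finset.single_le_sum (f := fun j => ∑ r, ∑ c, |B j r c|) (fun _ _ => by positivity)
      (Finset.mem_univ j)
  have h4 : 0 ≤ ∑ i, ∑ r, ∑ c, |C i r c| := by positivity
  linarith

lemma le_siz_right (B : ∀ j, Matrix (N j) (N j) ℝ) (C : ∀ i, Matrix (D i) (D i) ℝ) (i : Fin k)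
    (r c : D i) : |C i r c| ≤ siz B C := by
  have := le_siz_left C B i r c
  unfold siz at *
  linarith

lemma continuous_siz : Continuous fun x : (∀ j, Matrix (N j) (N j) ℝ) × (∀ i, Matrix (D i) (D i) ℝ)
    => siz x.1 x.2 := by
  unfold siz
  fun_prop

lemma siz_smul (t : ℝ) (ht : 0 ≤ t) (B : ∀ j, Matrix (N j) (N j) ℝ)
    (C : ∀ i, Matrix (D i) (D i) ℝ) :
    siz (fun j => t • B j) (fun i => t • C i) = t * siz B C := by
  unfold siz
  simp [abs_mul, abs_of_nonneg ht, Finset.mul_sum, mul_add]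

lemma siz_pos {B : ∀ j, Matrix (N j) (N j) ℝ} {C : ∀ i, Matrix (D i) (D i) ℝ}
    (hB : ∀ j, (B j).det ≠ 0) (hC : ∀ i, (C i).det ≠ 0)
    (h : (∃ j, Nonempty (N j)) ∨ (∃ i, Nonempty (D i))) : 0 < siz B C := by
  refine lt_of_le_of_ne (siz_nonneg B C) fun h0 => ?_
  rcases h with ⟨j, hj⟩ | ⟨i, hi⟩
  · apply hB j
    have : B j = 0 := by
      ext r c
      have := le_siz_left B C j r c
      rw [← h0] at this
      simpa using abs_nonpos_iff.mp this
    rw [this, Matrix.det_zero]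
  · apply hC i
    have : C i = 0 := by
      ext r c
      have := le_siz_right B C i r c
      rw [← h0] at this
      simpa using abs_nonpos_iff.mp this
    rw [this, Matrix.det_zero]

lemma exists_hom {p : Fin m → ℝ} (hp : ∀ j, 0 < p j)
    (hbal : ∑ i, (Fintype.card (D i) : ℝ) = ∑ j, p j * (Fintype.card (N j) : ℝ))
    {V : QD D N A} {c₀ : ℝ} (hc₀ : 0 < c₀) (hF : FeasC p V c₀)
    (hne : (∃ j, Nonempty (N j)) ∨ (∃ i, Nonempty (D i))) :
    ∃ (W : QD D N A) (φN : ∀ j, Matrix (N j) (N j) ℝ) (φD : ∀ i, Matrix (D i) (D i) ℝ),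
      Geom p W ∧ FeasC p W 1 ∧ (∀ i j a, φN j * V i j a = W i j a * φD i) ∧
      siz φN φD = 1 := by
  choose B C V' hB hC hBC hL hF' using fun s : ℕ =>
    exists_scaling hp hc₀ hF (1 / ((s : ℝ) + 1)) (by positivity)
  have hs : ∀ s, 0 < siz (B s) (C s) := fun s => siz_pos (hB s) (hC s) hne
  choose W hW using fun i j (a : Fin (A i j)) r c => ultra_lim (fun s => V' s i j a r c) _
    (fun s => entry_bound hp (hL s i) j a r c)
  choose φN hφN using fun j r c => ultra_lim (fun s => (siz (B s) (C s))⁻¹ * B s j r c) 1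
    (fun s => by
      rw [abs_mul, abs_inv, abs_of_pos (hs s), inv_mul_le_iff₀ (hs s), mul_one]
      exact le_siz_left _ _ _ _ _)
  choose φD hφD using fun j r c => ultra_lim (fun s => (siz (B s) (C s))⁻¹ * C s j r c) 1
    (fun s => by
      rw [abs_mul, abs_inv, abs_of_pos (hs s), inv_mul_le_iff₀ (hs s), mul_one]
      exact le_siz_right _ _ _ _ _)
  set l : Filter ℕ := (hyperfilter ℕ : Filter ℕ) with hl
  have tW : Tendsto V' l (𝓝 (fun i j a => Matrix.of (W i j a) : QD D N A)) := by
    simp only [tendsto_pi_nhds]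
    intro i j a
    exact tendsto_pi_nhds.2 fun r => tendsto_pi_nhds.2 fun c => hW i j a r c
  have tN : Tendsto (fun s => fun j => (siz (B s) (C s))⁻¹ • B s j) l
      (𝓝 (fun j => (Matrix.of (φN j) : Matrix (N j) (N j) ℝ))) := by
    simp only [tendsto_pi_nhds]
    intro j
    exact tendsto_pi_nhds.2 fun r => tendsto_pi_nhds.2 fun c => hφN j r c
  have tD : Tendsto (fun s => fun j => (siz (B s) (C s))⁻¹ • C s j) l
      (𝓝 (fun j => (Matrix.of (φD j) : Matrix (D j) (D j) ℝ))) := by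
    simp only [tendsto_pi_nhds]
    intro j
    exact tendsto_pi_nhds.2 fun r => tendsto_pi_nhds.2 fun c => hφD j r c
  have tc : Tendsto (fun s : ℕ => 1 / (1 + 1 / ((s : ℝ) + 1))) l (𝓝 1) := by
    have h1 : Tendsto (fun s : ℕ => 1 / ((s : ℝ) + 1)) l (𝓝 0) :=
      tendsto_one_div_add_atTop_nhds_zero_nat.mono_left Nat.hyperfilter_le_atTop
    have := (tendsto_const_nhds (x := (1 : ℝ))).div (h1.const_add 1) (by norm_num)
    simpa [Pi.div_def] using this
  have hFW := FeasC.limit (Eventually.of_forall hF') tW tc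
  have hLW : ∀ i, Lop p (fun i j a => Matrix.of (W i j a) : QD D N A) i = 1 := by
    intro i
    have := ((continuous_Lop p i).tendsto _).comp tW
    refine tendsto_nhds_unique this ?_
    simp only [Function.comp_def, hL]
    exact tendsto_const_nhds
  refine ⟨_, fun j => Matrix.of (φN j), fun j => Matrix.of (φD j),
    geom_of_feas hp hbal hLW hFW, hFW, ?_, ?_⟩
  · intro i j a
    have t1 : Tendsto (fun s => ((siz (B s) (C s))⁻¹ • B s j) * V i j a) l
        (𝓝 (Matrix.of (φN j) * V i j a)) := by
      have := (tendsto_pi_nhds.mp tN) j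
      exact ((continuous_id.matrix_mul continuous_const).tendsto _).comp this
    have t2 : Tendsto (fun s => V' s i j a * ((siz (B s) (C s))⁻¹ • C s i)) l
        (𝓝 (Matrix.of (W i j a) * Matrix.of (φD i))) := by
      have h1 := (tendsto_pi_nhds.mp tD) i
      have h2 := tendsto_pi_nhds.mp ((tendsto_pi_nhds.mp ((tendsto_pi_nhds.mp tW) i)) j) a
      exact ((continuous_fst.matrix_mul continuous_snd).tendsto (_, _)).comp (h2.prodMk_nhds h1)
    refine tendsto_nhds_unique t1 ?_
    refine t2.congr fun s => ?_
    rw [Matrix.smul_mul, hBC, Matrix.mul_smul]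
  · have h1 := ((continuous_siz (N := N) (D := D)).tendsto (_, _)).comp (tN.prodMk_nhds tD)
    refine tendsto_nhds_unique h1 ?_
    refine tendsto_const_nhds.congr fun s => ?_
    simp only [Function.comp_def]
    rw [siz_smul _ (inv_nonneg.mpr (hs s).le), inv_mul_cancel₀ (hs s).ne']

end
end QDeg

namespace QDeg

lemma sum_fromBlocks_diag {ι l l' n n' : Type} (s : Finset ι) (f : ι → Matrix l l' ℝ)
    (g : ι → Matrix n n' ℝ) :
    ∑ x ∈ s, fromBlocks (f x) 0 0 (g x) = fromBlocks (∑ x ∈ s, f x) 0 0 (∑ x ∈ s, g x) := by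
  ext (i | i) (j | j) <;> simp [Matrix.sum_apply]

section blocks
variable {k m : ℕ} {D₁ D₂ : Fin k → Type} {N₁ N₂ : Fin m → Type} {A : Fin k → Fin m → ℕ}
  [∀ i, Fintype (D₁ i)] [∀ i, DecidableEq (D₁ i)] [∀ j, Fintype (N₁ j)] [∀ j, DecidableEq (N₁ j)]
  [∀ i, Fintype (D₂ i)] [∀ i, DecidableEq (D₂ i)] [∀ j, Fintype (N₂ j)] [∀ j, DecidableEq (N₂ j)]

/-- block upper triangular datum -/
def blk (S : QD D₁ N₁ A) (R : QD D₂ N₁ A) (Q : QD D₂ N₂ A) :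
    QD (fun i => D₁ i ⊕ D₂ i) (fun j => N₁ j ⊕ N₂ j) A :=
  fun i j a => fromBlocks (S i j a) (R i j a) 0 (Q i j a)

lemma Lop_blk (p : Fin m → ℝ) (S : QD D₁ N₁ A) (Q : QD D₂ N₂ A) (i : Fin k) :
    Lop p (blk S (fun _ _ _ => 0) Q) i = fromBlocks (Lop p S i) 0 0 (Lop p Q i) := by
  unfold Lop blk
  simp only [fromBlocks_transpose, fromBlocks_multiply]
  simp [sum_fromBlocks_diag, fromBlocks_smul]

lemma Rop_blk (S : QD D₁ N₁ A) (Q : QD D₂ N₂ A) (j : Fin m) :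
    Rop (blk S (fun _ _ _ => 0) Q) j = fromBlocks (Rop S j) 0 0 (Rop Q j) := by
  unfold Rop blk
  simp only [fromBlocks_transpose, fromBlocks_multiply]
  simp [sum_fromBlocks_diag]

lemma Geom_blk {p : Fin m → ℝ} {S : QD D₁ N₁ A} {Q : QD D₂ N₂ A} (hS : Geom p S)
    (hQ : Geom p Q) : Geom p (blk S (fun _ _ _ => 0) Q) := by
  constructor
  · intro i; rw [Lop_blk, hS.1, hQ.1, fromBlocks_one]
  · intro i; rw [Rop_blk, hS.2, hQ.2, fromBlocks_one]

lemma gnum_blk (p : Fin m → ℝ) (S : QD D₁ N₁ A) (Q : QD D₂ N₂ A) :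
    gnum p (blk S (fun _ _ _ => 0) Q) = gnum p S * gnum p Q := by
  unfold gnum
  rw [← Finset.prod_mul_distrib]
  refine Finset.prod_congr rfl fun i _ => ?_
  rw [Lop_blk, Matrix.det_fromBlocks_zero₂₁]

/-- block diagonal group element -/
def bd {J : Type} {N₁ N₂ : J → Type} (X : ∀ j, Matrix (N₁ j) (N₁ j) ℝ)
    (Y : ∀ j, Matrix (N₂ j) (N₂ j) ℝ) :
    ∀ j, Matrix (N₁ j ⊕ N₂ j) (N₁ j ⊕ N₂ j) ℝ := fun j => fromBlocks (X j) 0 0 (Y j)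

lemma wt_bd (p : Fin m → ℝ) (X : ∀ j, Matrix (N₁ j) (N₁ j) ℝ) (Y : ∀ j, Matrix (N₂ j) (N₂ j) ℝ) :
    wt p (bd X Y) = wt p X * wt p Y := by
  unfold wt bd
  rw [← Finset.prod_mul_distrib]
  refine Finset.prod_congr rfl fun i _ => ?_
  rw [Matrix.det_fromBlocks_zero₂₁, mul_pow, Real.mul_rpow (by positivity) (by positivity)]

lemma actL_bd (X : ∀ j, Matrix (N₁ j) (N₁ j) ℝ) (Y : ∀ j, Matrix (N₂ j) (N₂ j) ℝ)
    (S : QD D₁ N₁ A) (Q : QD D₂ N₂ A) :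
    actL (bd X Y) (blk S (fun _ _ _ => 0) Q) = blk (actL X S) (fun _ _ _ => 0) (actL Y Q) := by
  funext i j a
  simp [actL, bd, blk, fromBlocks_multiply]

lemma act_bd (X : ∀ j, Matrix (N₁ j) (N₁ j) ℝ) (Y : ∀ j, Matrix (N₂ j) (N₂ j) ℝ)
    (X' : ∀ j, Matrix (D₁ j) (D₁ j) ℝ) (Y' : ∀ j, Matrix (D₂ j) (D₂ j) ℝ)
    (S : QD D₁ N₁ A) (R : QD D₂ N₁ A) (Q : QD D₂ N₂ A) :
    act (bd X Y) (blk S R Q) (bd X' Y') =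
      blk (act X S X') (fun i j a => X j * R i j a * Y' i) (act Y Q Y') := by
  funext i j a
  simp [act, bd, blk, fromBlocks_multiply]

lemma det_bd {J : Type} {N₁ N₂ : J → Type} [∀ j, Fintype (N₁ j)] [∀ j, DecidableEq (N₁ j)]
    [∀ j, Fintype (N₂ j)] [∀ j, DecidableEq (N₂ j)]
    {X : ∀ j, Matrix (N₁ j) (N₁ j) ℝ} {Y : ∀ j, Matrix (N₂ j) (N₂ j) ℝ}
    (hX : ∀ j, (X j).det ≠ 0) (hY : ∀ j, (Y j).det ≠ 0) (j : J) : (bd X Y j).det ≠ 0 := by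
  unfold bd
  rw [Matrix.det_fromBlocks_zero₂₁]
  exact mul_ne_zero (hX j) (hY j)

lemma split_left {p : Fin m → ℝ} (hp : ∀ j, 0 < p j) {S : QD D₁ N₁ A} {Q : QD D₂ N₂ A} {c : ℝ}
    (hc : 0 < c) (h : FeasC p (blk S (fun _ _ _ => 0) Q) c) : ∃ c' > 0, FeasC p S c' := by
  have key : ∀ B : ∀ j, Matrix (N₁ j) (N₁ j) ℝ, (∀ j, (B j).det ≠ 0) →
      c * wt p B ≤ gnum p (actL B S) * gnum p Q := by
    intro B hB
    have h1 := h (bd B (fun _ => 1)) (det_bd hB (by simp))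
    rw [wt_bd, actL_bd, gnum_blk] at h1
    have e1 : wt p (fun j => (1 : Matrix (N₂ j) (N₂ j) ℝ)) = 1 := by simp [wt]
    have e2 : actL (fun j => (1 : Matrix (N₂ j) (N₂ j) ℝ)) Q = Q := by funext i j a; simp [actL]
    rwa [e1, e2, mul_one] at h1
  have hq : 0 < gnum p Q := by
    refine lt_of_le_of_ne (gnum_nonneg p hp Q) fun h0 => ?_
    have h1 := key (fun _ => 1) (by simp)
    rw [← h0, mul_zero] at h1
    have := mul_pos hc (wt_pos p (H := fun j => (1 : Matrix (N₁ j) (N₁ j) ℝ)) (by simp))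
    linarith
  refine ⟨c / gnum p Q, by positivity, fun B hB => ?_⟩
  rw [div_mul_eq_mul_div, div_le_iff₀ hq]
  exact key B hB

lemma split_right {p : Fin m → ℝ} (hp : ∀ j, 0 < p j) {S : QD D₁ N₁ A} {Q : QD D₂ N₂ A} {c : ℝ}
    (hc : 0 < c) (h : FeasC p (blk S (fun _ _ _ => 0) Q) c) : ∃ c' > 0, FeasC p Q c' := by
  have key : ∀ B : ∀ j, Matrix (N₂ j) (N₂ j) ℝ, (∀ j, (B j).det ≠ 0) →
      c * wt p B ≤ gnum p (actL B Q) * gnum p S := by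
    intro B hB
    have h1 := h (bd (fun _ => 1) B) (det_bd (by simp) hB)
    rw [wt_bd, actL_bd, gnum_blk] at h1
    have e1 : wt p (fun j => (1 : Matrix (N₁ j) (N₁ j) ℝ)) = 1 := by simp [wt]
    have e2 : actL (fun j => (1 : Matrix (N₁ j) (N₁ j) ℝ)) S = S := by funext i j a; simp [actL]
    rwa [e1, e2, one_mul, mul_comm (gnum p S)] at h1
  have hq : 0 < gnum p S := by
    refine lt_of_le_of_ne (gnum_nonneg p hp S) fun h0 => ?_
    have h1 := key (fun _ => 1) (by simp)
    rw [← h0, mul_zero] at h1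
    have := mul_pos hc (wt_pos p (H := fun j => (1 : Matrix (N₂ j) (N₂ j) ℝ)) (by simp))
    linarith
  refine ⟨c / gnum p S, by positivity, fun B hB => ?_⟩
  rw [div_mul_eq_mul_div, div_le_iff₀ hq]
  exact key B hB

lemma tri_scaled {p : Fin m → ℝ} {S : QD D₁ N₁ A} {R : QD D₂ N₁ A} {Q : QD D₂ N₂ A} {c : ℝ}
    (h : FeasC p (blk S R Q) c) (t : ℝ) (ht : 0 < t) :
    FeasC p (blk S (fun i j a => t • R i j a) Q)
      (c * t ^ (-2 * (∑ i, (Fintype.card (D₁ i) : ℝ) - ∑ j, p j * (Fintype.card (N₁ j) : ℝ)))) := by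
  have h1 := h.act (H := bd (fun j => t • (1 : Matrix (N₁ j) (N₁ j) ℝ)) (fun _ => 1))
    (det_bd (fun j => by simp [ht.ne']) (by simp))
    (bd (fun i => t⁻¹ • (1 : Matrix (D₁ i) (D₁ i) ℝ)) (fun _ => 1))
  rw [act_bd] at h1
  have e1 : act (fun j => t • (1 : Matrix (N₁ j) (N₁ j) ℝ)) S
      (fun i => t⁻¹ • (1 : Matrix (D₁ i) (D₁ i) ℝ)) = S := by
    funext i j a
    simp [act, smul_smul, ht.ne']
  have e2 : act (fun j => (1 : Matrix (N₂ j) (N₂ j) ℝ)) Q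
      (fun i => (1 : Matrix (D₂ i) (D₂ i) ℝ)) = Q := by
    funext i j a
    simp [act]
  have e3 : (fun i j a => t • (1 : Matrix (N₁ j) (N₁ j) ℝ) * R i j a * (1 : Matrix (D₂ i) (D₂ i) ℝ)
      : QD D₂ N₁ A) = fun i j a => t • R i j a := by
    funext i j a
    simp
  rw [e1, e2, e3] at h1
  convert h1 using 1
  have w1 : wt p (bd (fun j => t • (1 : Matrix (N₁ j) (N₁ j) ℝ))
      (fun j => (1 : Matrix (N₂ j) (N₂ j) ℝ))) =
      t ^ (2 * ∑ j, p j * (Fintype.card (N₁ j) : ℝ)) := by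
    rw [Finset.mul_sum, Real.rpow_sum_of_pos ht]
    unfold wt bd
    refine Finset.prod_congr rfl fun j _ => ?_
    rw [Matrix.det_fromBlocks_zero₂₁, Matrix.det_smul, Matrix.det_one, Matrix.det_one, mul_one,
      mul_one, ← pow_mul, ← Real.rpow_natCast, ← Real.rpow_mul ht.le]
    congr 1
    push_cast; ring
  have w2 : ∏ i, (bd (fun i => t⁻¹ • (1 : Matrix (D₁ i) (D₁ i) ℝ))
      (fun j => (1 : Matrix (D₂ j) (D₂ j) ℝ)) i).det ^ 2 =
      t ^ (-2 * ∑ i, (Fintype.card (D₁ i) : ℝ)) := by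
    rw [Finset.mul_sum, Real.rpow_sum_of_pos ht]
    unfold bd
    refine Finset.prod_congr rfl fun j _ => ?_
    rw [Matrix.det_fromBlocks_zero₂₁, Matrix.det_smul, Matrix.det_one, Matrix.det_one, mul_one,
      mul_one, ← pow_mul, ← Real.rpow_natCast, Real.inv_rpow ht.le, ← Real.rpow_neg ht.le]
    congr 1
    push_cast; ring
  rw [w1, w2, mul_assoc, ← Real.rpow_add ht]
  congr 2
  ring

lemma tendsto_blk (S : QD D₁ N₁ A) (R : QD D₂ N₁ A) (Q : QD D₂ N₂ A) :
    Tendsto (fun t : ℝ => blk S (fun i j a => t • R i j a) Q) (𝓝[>] 0)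
      (𝓝 (blk S (fun _ _ _ => 0) Q)) := by
  have : Continuous (fun t : ℝ => blk S (fun i j a => t • R i j a) Q) := by
    unfold blk
    refine continuous_pi fun i => continuous_pi fun j => continuous_pi fun a => ?_
    refine Continuous.matrix_fromBlocks ?_ ?_ ?_ ?_ <;> fun_prop
  have h := (this.tendsto 0).mono_left (nhdsWithin_le_nhds (s := Set.Ioi 0))
  simpa using h

lemma tri_le {p : Fin m → ℝ} {S : QD D₁ N₁ A} {R : QD D₂ N₁ A} {Q : QD D₂ N₂ A} {c : ℝ}
    (hc : 0 < c) (h : FeasC p (blk S R Q) c) :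
    ∑ i, (Fintype.card (D₁ i) : ℝ) ≤ ∑ j, p j * (Fintype.card (N₁ j) : ℝ) := by
  by_contra! hlt
  set κ := ∑ i, (Fintype.card (D₁ i) : ℝ) - ∑ j, p j * (Fintype.card (N₁ j) : ℝ) with hκ
  have hκ0 : 0 < κ := by rw [hκ]; linarith
  have ht := ((continuous_gnum p (fun j => (1 : Matrix (N₁ j ⊕ N₂ j) (N₁ j ⊕ N₂ j) ℝ))).tendsto
    _).comp (tendsto_blk S R Q)
  have ht2 : Tendsto (fun t : ℝ => t ^ (2 * κ)) (𝓝[>] 0) (𝓝 0) := by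
    have := ((Real.continuous_rpow_const (q := 2 * κ) (by positivity)).tendsto 0).mono_left
      (nhdsWithin_le_nhds (s := Set.Ioi 0))
    rwa [Real.zero_rpow (by positivity)] at this
  have ht3 := ht.mul ht2
  rw [mul_zero] at ht3
  have : c ≤ 0 := by
    refine ge_of_tendsto ht3 ?_
    filter_upwards [self_mem_nhdsWithin] with t ht
    have ht : 0 < t := ht
    have h1 := tri_scaled h t ht (fun j => (1 : Matrix (N₁ j ⊕ N₂ j) (N₁ j ⊕ N₂ j) ℝ)) (by simp)
    have e1 : wt p (fun j => (1 : Matrix (N₁ j ⊕ N₂ j) (N₁ j ⊕ N₂ j) ℝ)) = 1 := by simp [wt]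
    rw [e1, mul_one, ← hκ] at h1
    have h2 := mul_le_mul_of_nonneg_right h1 (Real.rpow_nonneg ht.le (2 * κ))
    rw [mul_assoc, ← Real.rpow_add ht] at h2
    simpa using h2
  linarith

lemma tri_eq {p : Fin m → ℝ} {S : QD D₁ N₁ A} {R : QD D₂ N₁ A} {Q : QD D₂ N₂ A} {c : ℝ}
    (h : FeasC p (blk S R Q) c)
    (he : ∑ i, (Fintype.card (D₁ i) : ℝ) = ∑ j, p j * (Fintype.card (N₁ j) : ℝ)) :
    FeasC p (blk S (fun _ _ _ => 0) Q) c := by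
  refine FeasC.limit (l := 𝓝[>] (0 : ℝ)) (c := fun _ => c) ?_ (tendsto_blk S R Q)
    tendsto_const_nhds
  filter_upwards [self_mem_nhdsWithin] with t ht
  have := tri_scaled h t ht
  rwa [he, sub_self, mul_zero, Real.rpow_zero, mul_one] at this

lemma Degen_blk {p : Fin m → ℝ} {S : QD D₁ N₁ A} {R : QD D₂ N₁ A} {Q : QD D₂ N₂ A}
    (hS : Degen p S) (hQ : Degen p Q) : Degen p (blk S R Q) := by
  obtain ⟨H₁, G₁, n₁, d₁, hH₁, hG₁, ho₁, hg₁⟩ := hS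
  obtain ⟨H₂, G₂, n₂, d₂, hH₂, hG₂, ho₂, hg₂⟩ := hQ
  obtain ⟨K, hK⟩ : ∃ K : ℤ, ∀ i j c r, d₂ i c < n₁ j r + K := by
    refine ⟨1 + (∑ i, ∑ c, |d₂ i c|) + ∑ j, ∑ r, |n₁ j r|, fun i j c r => ?_⟩
    have a1 : |d₂ i c| ≤ ∑ c, |d₂ i c| :=
      Finset.single_le_sum (f := fun c => |d₂ i c|) (fun _ _ => abs_nonneg _) (Finset.mem_univ c)
    have a2 : ∑ c, |d₂ i c| ≤ ∑ i, ∑ c, |d₂ i c| :=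
      Finset.single_le_sum (f := fun i => ∑ c, |d₂ i c|)
        (fun _ _ => Finset.sum_nonneg fun _ _ => abs_nonneg _) (Finset.mem_univ i)
    have b1 : |n₁ j r| ≤ ∑ c, |n₁ j c| :=
      Finset.single_le_sum (f := fun c => |n₁ j c|) (fun _ _ => abs_nonneg _) (Finset.mem_univ r)
    have b2 : ∑ c, |n₁ j c| ≤ ∑ i, ∑ c, |n₁ i c| :=
      Finset.single_le_sum (f := fun i => ∑ c, |n₁ i c|)
        (fun _ _ => Finset.sum_nonneg fun _ _ => abs_nonneg _) (Finset.mem_univ j)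
    have := le_abs_self (d₂ i c)
    have := neg_abs_le (n₁ j r)
    linarith
  refine ⟨bd H₁ H₂, bd G₁ G₂, fun j => Sum.elim (fun r => n₁ j r + K) (n₂ j),
    fun i => Sum.elim (fun c => d₁ i c + K) (d₂ i), det_bd hH₁ hH₂, det_bd hG₁ hG₂, ?_, ?_⟩
  · rw [act_bd]
    rintro i j a (r | r) (c | c) hne
    · simpa using ho₁ i j a r c hne
    · exact (hK i j c r).le
    · simp [blk] at hne
    · simpa using ho₂ i j a r c hne
  · convert Geom_blk hg₁ hg₂ using 1
    rw [act_bd]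
    funext i j a
    ext (r | r) (c | c)
    · simp [blk]
    · simp [blk, (hK i j c r).ne]
    · simp only [blk, Matrix.of_apply, fromBlocks_apply₂₁, Matrix.zero_apply]
      split_ifs <;> rfl
    · simp only [blk, Matrix.of_apply, fromBlocks_apply₂₂]
      split_ifs <;> first | rfl | contradiction

end blocks

section
variable {k m : ℕ} {D : Fin k → Type} {N : Fin m → Type} {A : Fin k → Fin m → ℕ}
  [∀ i, Fintype (D i)] [∀ i, DecidableEq (D i)] [∀ j, Fintype (N j)] [∀ j, DecidableEq (N j)]
  {D' : Fin k → Type} {N' : Fin m → Type}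
  [∀ i, Fintype (D' i)] [∀ i, DecidableEq (D' i)] [∀ j, Fintype (N' j)] [∀ j, DecidableEq (N' j)]

def re (V : QD D N A) (e : ∀ j, N' j ≃ N j) (f : ∀ i, D' i ≃ D i) : QD D' N' A :=
  fun i j a => (V i j a).submatrix (e j) (f i)

lemma Lop_re (p : Fin m → ℝ) (V : QD D N A) (e : ∀ j, N' j ≃ N j) (f : ∀ i, D' i ≃ D i)
    (i : Fin k) : Lop p (re V e f) i = (Lop p V i).submatrix (f i) (f i) := by
  ext r c
  simp only [Lop, re, Matrix.sum_apply, Matrix.smul_apply, Matrix.mul_apply,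
    Matrix.submatrix_apply, Matrix.transpose_apply]
  refine Finset.sum_congr rfl fun j _ => ?_
  congr 1
  refine Finset.sum_congr rfl fun a _ => ?_
  exact (e j).sum_comp (fun x => V i j a x (f i r) * V i j a x (f i c))

lemma Rop_re (V : QD D N A) (e : ∀ j, N' j ≃ N j) (f : ∀ i, D' i ≃ D i)
    (j : Fin m) : Rop (re V e f) j = (Rop V j).submatrix (e j) (e j) := by
  ext r c
  simp only [Rop, re, Matrix.sum_apply, Matrix.mul_apply,
    Matrix.submatrix_apply, Matrix.transpose_apply]
  refine Finset.sum_congr rfl fun i _ => ?_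
  refine Finset.sum_congr rfl fun a _ => ?_
  exact (f i).sum_comp (fun x => V i j a (e j r) x * V i j a (e j c) x)

lemma Geom_re {p : Fin m → ℝ} {V : QD D N A} (e : ∀ j, N' j ≃ N j) (f : ∀ i, D' i ≃ D i)
    (h : Geom p V) : Geom p (re V e f) := by
  constructor
  · intro i; rw [Lop_re, h.1, Matrix.submatrix_one_equiv]
  · intro i; rw [Rop_re, h.2, Matrix.submatrix_one_equiv]

lemma Degen_re {p : Fin m → ℝ} {V : QD D N A} (e : ∀ j, N' j ≃ N j) (f : ∀ i, D' i ≃ D i)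
    (h : Degen p V) : Degen p (re V e f) := by
  obtain ⟨H, G, eN, eD, hH, hG, ho, hg⟩ := h
  have key : act (fun j => (H j).submatrix (e j) (e j)) (re V e f)
      (fun i => (G i).submatrix (f i) (f i)) = re (act H V G) e f := by
    funext i j a
    simp only [act, re]
    rw [Matrix.submatrix_mul_equiv, Matrix.submatrix_mul_equiv]
  refine ⟨fun j => (H j).submatrix (e j) (e j), fun i => (G i).submatrix (f i) (f i),
    fun j r => eN j (e j r), fun i c => eD i (f i c), ?_, ?_, ?_, ?_⟩
  · intro j; rw [Matrix.det_submatrix_equiv_self]; exact hH j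
  · intro j; rw [Matrix.det_submatrix_equiv_self]; exact hG j
  · rw [key]
    intro i j a r c
    exact ho i j a (e j r) (f i c)
  · rw [key]
    have h2 := Geom_re e f hg
    unfold re at h2 ⊢
    convert h2 using 1
    funext i j a
    ext r c
    simp

lemma Degen_of_re {p : Fin m → ℝ} {V : QD D N A} (e : ∀ j, N' j ≃ N j) (f : ∀ i, D' i ≃ D i)
    (h : Degen p (re V e f)) : Degen p V := by
  have := Degen_re (fun j => (e j).symm) (fun i => (f i).symm) h
  convert this using 1
  funext i j a
  ext r c
  simp [re]

lemma FeasC_re {p : Fin m → ℝ} {V : QD D N A} (e : ∀ j, N' j ≃ N j) (f : ∀ i, D' i ≃ D i) {c : ℝ}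
    (h : FeasC p V c) : FeasC p (re V e f) c := by
  intro B hB
  have h1 := h (fun j => (B j).submatrix (e j).symm (e j).symm) (fun j => by
    rw [Matrix.det_submatrix_equiv_self]; exact hB j)
  have e1 : wt p (fun j => (B j).submatrix (e j).symm (e j).symm) = wt p B := by
    unfold wt
    refine Finset.prod_congr rfl fun j _ => ?_
    rw [Matrix.det_submatrix_equiv_self]
  have e2 : actL B (re V e f) =
      re (actL (fun j => (B j).submatrix (e j).symm (e j).symm) V) e f := by
    funext i j a
    simp only [actL, re]
    rw [← Matrix.submatrix_mul_equiv _ _ _ (e j) _]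
    simp
  rw [e1] at h1
  refine h1.trans (le_of_eq ?_)
  rw [e2]
  unfold gnum
  refine Finset.prod_congr rfl fun i _ => ?_
  rw [Lop_re, Matrix.det_submatrix_equiv_self]

lemma Degen_of_act {p : Fin m → ℝ} {V : QD D N A} {H : ∀ j, Matrix (N j) (N j) ℝ}
    {G : ∀ i, Matrix (D i) (D i) ℝ} (hH : ∀ j, (H j).det ≠ 0) (hG : ∀ i, (G i).det ≠ 0)
    (h : Degen p (act H V G)) : Degen p V := by
  obtain ⟨H', G', eN, eD, hH', hG', ho, hg⟩ := h
  have key : act H' (act H V G) G' = act (fun j => H' j * H j) V (fun i => G i * G' i) := by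
    funext i j a
    simp [act, Matrix.mul_assoc]
  rw [key] at ho hg
  exact ⟨_, _, eN, eD, fun j => by rw [Matrix.det_mul]; exact mul_ne_zero (hH' j) (hH j),
    fun j => by rw [Matrix.det_mul]; exact mul_ne_zero (hG j) (hG' j), ho, hg⟩

end
end QDeg

namespace QDeg

lemma card_split {n : Type} [Fintype n] (s : n → Prop) [DecidablePred s] :
    Fintype.card {x // s x} + Fintype.card {x // ¬ s x} = Fintype.card n := by
  rw [← Fintype.card_sum]
  exact Fintype.card_congr (Equiv.sumCompl s)

section
variable {k m : ℕ} {D : Fin k → Type} {N : Fin m → Type} {A : Fin k → Fin m → ℕ}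
  [∀ i, Fintype (D i)] [∀ i, DecidableEq (D i)] [∀ j, Fintype (N j)] [∀ j, DecidableEq (N j)]

lemma re_split (V : QD D N A) (sN : ∀ j, N j → Prop) (sD : ∀ i, D i → Prop)
    [∀ j, DecidablePred (sN j)] [∀ i, DecidablePred (sD i)]
    (h : ∀ i j a r c, sD i c → ¬ sN j r → V i j a r c = 0) :
    ∃ (S : QD (fun i => {x // sD i x}) (fun j => {x // sN j x}) A)
      (R : QD (fun i => {x // ¬ sD i x}) (fun j => {x // sN j x}) A)
      (Q : QD (fun i => {x // ¬ sD i x}) (fun j => {x // ¬ sN j x}) A),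
      re V (fun j => Equiv.sumCompl (sN j)) (fun i => Equiv.sumCompl (sD i)) = blk S R Q := by
  refine ⟨fun i j a => Matrix.of fun r c => V i j a r c, fun i j a => Matrix.of fun r c => V i j a r c,
    fun i j a => Matrix.of fun r c => V i j a r c, ?_⟩
  funext i j a
  ext (r | r) (c | c)
  · simp [re, blk]
  · simp [re, blk]
  · simp [re, blk, h i j a r c c.2 r.2]
  · simp [re, blk]

end

theorem main_ind {k m : ℕ} {A : Fin k → Fin m → ℕ} {p : Fin m → ℝ} (hp : ∀ j, 0 < p j) (n : ℕ) :
    ∀ (D : Fin k → Type) (N : Fin m → Type)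
      [∀ i, Fintype (D i)] [∀ i, DecidableEq (D i)] [∀ j, Fintype (N j)] [∀ j, DecidableEq (N j)]
      (V : QD D N A) (c : ℝ), 0 < c → FeasC p V c →
      ∑ i, (Fintype.card (D i) : ℝ) = ∑ j, p j * (Fintype.card (N j) : ℝ) →
      ∑ i, Fintype.card (D i) + ∑ j, Fintype.card (N j) = n → Degen p V := by
  classical
  induction n using Nat.strong_induction_on with
  | _ n ih =>
  intro D N _ _ _ _ V c hc hF hbal hn
  by_cases hne : (∃ j, Nonempty (N j)) ∨ (∃ i, Nonempty (D i))
  swap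
  · push Not at hne
    obtain ⟨h1, h2⟩ := hne
    refine ⟨fun _ => 1, fun _ => 1, fun _ _ => 0, fun _ _ => 0, by simp, by simp, by simp, ?_, ?_⟩
    · intro i; have := h2 i; exact Subsingleton.elim _ _
    · intro j; have := h1 j; exact Subsingleton.elim _ _
  obtain ⟨W, φN, φD, hW, hFW, hφ, hsz⟩ := exists_hom hp hbal hc hF hne
  by_cases hdet : (∀ j, (φN j).det ≠ 0) ∧ (∀ i, (φD i).det ≠ 0)
  · refine ⟨φN, fun i => (φD i)⁻¹, fun _ _ => 0, fun _ _ => 0, hdet.1, ?_, by simp, ?_⟩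
    · intro i
      rw [Matrix.det_nonsing_inv, Ring.inverse_eq_inv']
      exact inv_ne_zero (hdet.2 i)
    · convert hW using 1
      funext i j a
      ext r c
      simp only [act, hφ, Matrix.mul_assoc]
      rw [Matrix.mul_nonsing_inv _ (hdet.2 i).isUnit]
      simp
  -- the degenerate case
  choose LN GN δN hLN hGN hδN using fun j => exists_diag (φN j)
  choose LD GD δD hLD hGD hδD using fun i => exists_diag (φD i)
  have inv_ne : ∀ {x : Type} [Fintype x] [DecidableEq x] {M : Matrix x x ℝ}, M.det = 1 →
      (M⁻¹).det ≠ 0 := by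
    intro x _ _ M h
    rw [Matrix.det_nonsing_inv, h]; simp
  set V' := act (fun j => (GN j)⁻¹) V GD with hV'
  set W' := act LN W (fun i => (LD i)⁻¹) with hW'
  have hrel : ∀ i j a r c, δN j r * V' i j a r c = W' i j a r c * δD i c := by
    intro i j a r c
    have : diagonal (δN j) * V' i j a = W' i j a * diagonal (δD i) := by
      rw [← hδN, ← hδD]
      simp only [hV', hW', act]
      have u1 : IsUnit (GN j).det := by rw [hGN]; exact isUnit_one
      have u2 : IsUnit (LD i).det := by rw [hLD]; exact isUnit_one
      calc LN j * φN j * GN j * ((GN j)⁻¹ * V i j a * GD i)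
          = LN j * φN j * (GN j * (GN j)⁻¹) * V i j a * GD i := by
            simp only [Matrix.mul_assoc]
        _ = LN j * (φN j * V i j a) * GD i := by
            rw [Matrix.mul_nonsing_inv _ u1]; simp only [Matrix.mul_assoc, Matrix.one_mul]
        _ = LN j * W i j a * ((LD i)⁻¹ * LD i) * φD i * GD i := by
            rw [hφ, Matrix.nonsing_inv_mul _ u2]; simp only [Matrix.mul_assoc, Matrix.one_mul]
        _ = _ := by simp only [Matrix.mul_assoc]
    have := congrFun (congrFun this r) c
    rwa [Matrix.diagonal_mul, Matrix.mul_diagonal] at this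
  have hGN0 : ∀ j, ((GN j)⁻¹).det ≠ 0 := fun j => inv_ne (hGN j)
  have hGD0 : ∀ j, (GD j).det ≠ 0 := fun j => by rw [hGD]; exact one_ne_zero
  have hFV' := hF.act (H := fun j => (GN j)⁻¹) hGN0 GD
  rw [← hV'] at hFV'
  have hFW' := hFW.act (H := LN) (fun j => by rw [hLN]; exact one_ne_zero) (fun i => (LD i)⁻¹)
  rw [← hW'] at hFW'
  have hc1 : 0 < c * wt p (fun j => (GN j)⁻¹) * ∏ i, (GD i).det ^ 2 := by
    refine mul_pos (mul_pos hc (wt_pos p hGN0)) (Finset.prod_pos fun i _ => ?_)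
    have := hGD0 i; positivity
  have hc2 : 0 < 1 * wt p LN * ∏ i, ((LD i)⁻¹).det ^ 2 := by
    refine mul_pos (mul_pos one_pos (wt_pos p fun j => by rw [hLN]; exact one_ne_zero))
      (Finset.prod_pos fun i _ => ?_)
    have := inv_ne (hLD i); positivity
  obtain ⟨S, R, Q, hS⟩ := re_split V' (fun j r => δN j r = 0) (fun i c => δD i c = 0) (by
    intro i j a r c h1 h2
    have := hrel i j a r c
    rw [h1, mul_zero] at this
    exact (mul_eq_zero.mp this).resolve_left h2)
  obtain ⟨S', R', Q', hS'⟩ := re_split W' (fun j r => ¬ δN j r = 0) (fun i c => ¬ δD i c = 0) (by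
    intro i j a r c h1 h2
    have := hrel i j a r c
    rw [not_not.mp h2, zero_mul] at this
    exact (mul_eq_zero.mp this.symm).resolve_right h1)
  have fV := FeasC_re (fun j => Equiv.sumCompl (fun r => δN j r = 0))
    (fun i => Equiv.sumCompl (fun c => δD i c = 0)) hFV'
  have fW := FeasC_re (fun j => Equiv.sumCompl (fun r => ¬ δN j r = 0))
    (fun i => Equiv.sumCompl (fun c => ¬ δD i c = 0)) hFW'
  rw [hS] at fV
  rw [hS'] at fW
  have k1 := tri_le hc1 fV
  have k2 := tri_le hc2 fW
  have cD : ∀ i, (Fintype.card {x // δD i x = 0} : ℝ) + Fintype.card {x // ¬ δD i x = 0}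
      = Fintype.card (D i) := fun i => by exact_mod_cast card_split (fun x => δD i x = 0)
  have cN : ∀ i, (Fintype.card {x // δN i x = 0} : ℝ) + Fintype.card {x // ¬ δN i x = 0}
      = Fintype.card (N i) := fun i => by exact_mod_cast card_split (fun x => δN i x = 0)
  have hbal' := hbal
  simp only [← cD, ← cN, mul_add, Finset.sum_add_distrib] at hbal'
  have b1 : ∑ i, (Fintype.card {x // δD i x = 0} : ℝ)
      = ∑ j, p j * (Fintype.card {x // δN j x = 0} : ℝ) := by linarith
  have b2 : ∑ i, (Fintype.card {x // ¬ δD i x = 0} : ℝ)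
      = ∑ j, p j * (Fintype.card {x // ¬ δN j x = 0} : ℝ) := by linarith
  have f0 := tri_eq fV b1
  obtain ⟨cS, hcS, hFS⟩ := split_left hp hc1 f0
  obtain ⟨cQ, hcQ, hFQ⟩ := split_right hp hc1 f0
  have tot : (∑ i, Fintype.card {x // δD i x = 0} + ∑ j, Fintype.card {x // δN j x = 0})
      + (∑ i, Fintype.card {x // ¬ δD i x = 0} + ∑ j, Fintype.card {x // ¬ δN j x = 0}) = n := by
    rw [← hn]
    simp only [← card_split (fun x => δD _ x = 0), ← card_split (fun x => δN _ x = 0),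
      Finset.sum_add_distrib]
    ring
  have pos_of : ∀ {K : ℕ} {X : Fin K → Type} [∀ i, Fintype (X i)], (∃ i, Nonempty (X i)) →
      0 < ∑ i, Fintype.card (X i) := by
    rintro K X _ ⟨i, hi⟩
    exact Finset.sum_pos' (fun _ _ => Nat.zero_le _) ⟨i, Finset.mem_univ _, Fintype.card_pos⟩
  have p1 : 0 < ∑ i, Fintype.card {x // δD i x = 0} + ∑ j, Fintype.card {x // δN j x = 0} := by
    rw [not_and_or] at hdet
    push Not at hdet
    rcases hdet with ⟨j, hj⟩ | ⟨i, hi⟩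
    · have h1 := congrArg Matrix.det (hδN j)
      rw [Matrix.det_mul, Matrix.det_mul, hj, Matrix.det_diagonal, mul_zero, zero_mul] at h1
      obtain ⟨x, _, hx⟩ := Finset.prod_eq_zero_iff.mp h1.symm
      have := pos_of (X := fun j => {x // δN j x = 0}) ⟨j, ⟨⟨x, hx⟩⟩⟩
      omega
    · have h1 := congrArg Matrix.det (hδD i)
      rw [Matrix.det_mul, Matrix.det_mul, hi, Matrix.det_diagonal, mul_zero, zero_mul] at h1
      obtain ⟨x, _, hx⟩ := Finset.prod_eq_zero_iff.mp h1.symm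
      have := pos_of (X := fun j => {x // δD j x = 0}) ⟨i, ⟨⟨x, hx⟩⟩⟩
      omega
  have zero_of : ∀ {x : Type} [Fintype x] [DecidableEq x] {L M G : Matrix x x ℝ} {δ : x → ℝ},
      L.det = 1 → G.det = 1 → L * M * G = diagonal δ → (∀ y, δ y = 0) → M = 0 := by
    intro x _ _ L M G δ hL hG h h0
    have e0 : diagonal δ = 0 := by
      rw [show δ = 0 from funext h0]; exact Matrix.diagonal_zero
    rw [e0] at h
    have uL : IsUnit L.det := by rw [hL]; exact isUnit_one
    have uG : IsUnit G.det := by rw [hG]; exact isUnit_one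
    calc M = L⁻¹ * (L * M * G) * G⁻¹ := by
          rw [Matrix.mul_assoc, Matrix.mul_assoc (L * M), Matrix.mul_nonsing_inv _ uG,
            Matrix.mul_one, ← Matrix.mul_assoc, Matrix.nonsing_inv_mul _ uL, Matrix.one_mul]
      _ = 0 := by rw [h]; simp
  have p2 : 0 < ∑ i, Fintype.card {x // ¬ δD i x = 0} + ∑ j, Fintype.card {x // ¬ δN j x = 0} := by
    by_contra hcon
    have hD : ∀ i x, δD i x = 0 := by
      intro i x
      by_contra hx
      have := pos_of (X := fun j => {x // ¬ δD j x = 0}) ⟨i, ⟨⟨x, hx⟩⟩⟩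
      omega
    have hN : ∀ i x, δN i x = 0 := by
      intro i x
      by_contra hx
      have := pos_of (X := fun j => {x // ¬ δN j x = 0}) ⟨i, ⟨⟨x, hx⟩⟩⟩
      omega
    have z1 : ∀ j, φN j = 0 := fun j => zero_of (hLN j) (hGN j) (hδN j) (hN j)
    have z2 : ∀ i, φD i = 0 := fun i => zero_of (hLD i) (hGD i) (hδD i) (hD i)
    simp [siz, z1, z2] at hsz
  have dS := ih _ (by omega) _ _ S cS hcS hFS b1 rfl
  have dQ := ih _ (by omega) _ _ Q cQ hcQ hFQ b2 rfl
  have dB := Degen_blk (R := R) dS dQ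
  rw [← hS] at dB
  exact Degen_of_act hGN0 hGD0 (Degen_of_re _ _ dB)

lemma feasC_of_cap {k m : ℕ} {d : Fin k → ℕ} {n : Fin m → ℕ} {A : Fin k → Fin m → ℕ}
    (p : Fin m → ℝ)
    (V : ∀ i : Fin k, ∀ j : Fin m, Fin (A i j) → Matrix (Fin (n j)) (Fin (d i)) ℝ)
    (h : 0 < cap p V) :
    FeasC (D := fun i => Fin (d i)) (N := fun j => Fin (n j)) p V (cap p V) := by
  intro B hB
  unfold cap at h ⊢
  set T := { r : ℝ | ∃ Y : ∀ j : Fin m, Matrix (Fin (n j)) (Fin (n j)) ℝ,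
    (∀ j, (Y j).PosDef) ∧ r = capVal p V Y } with hT
  have hb : BddBelow T := by
    by_contra hb
    rw [Real.sInf_of_not_bddBelow hb] at h
    exact lt_irrefl _ h
  have hpd : ∀ j, ((B j)ᵀ * B j).PosDef := by
    intro j
    rw [(psd_tm (B j)).posDef_iff_det_ne_zero, Matrix.det_mul, Matrix.det_transpose]
    exact mul_ne_zero (hB j) (hB j)
  have h1 := csInf_le hb (show capVal p V (fun j => (B j)ᵀ * B j) ∈ T from ⟨_, hpd, rfl⟩)
  rw [← le_div_iff₀ (wt_pos p hB)]
  refine h1.trans (le_of_eq ?_)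
  unfold capVal gnum wt Lop actL
  congr 1
  · refine Finset.prod_congr rfl fun i _ => ?_
    simp only [Matrix.transpose_mul, Matrix.mul_assoc]
  · refine Finset.prod_congr rfl fun j _ => ?_
    rw [Matrix.det_mul, Matrix.det_transpose, sq]

end QDeg

namespace QDeg

lemma entry_eq {n l : Type} [Fintype n] [DecidableEq n] [Fintype l] [DecidableEq l]
    (H : Matrix n n ℝ) (X : Matrix n l ℝ) (G : Matrix l l ℝ) (hG : G.det ≠ 0)
    (eN : n → ℤ) (eD : l → ℤ) {t : ℝ} (ht : t ≠ 0) (r : n) (c : l) :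
    ((((1 : Matrix n n ℝ) * diagonal (fun r => t ^ (eN r)) * H) * X *
      ((1 : Matrix l l ℝ) * diagonal (fun c => t ^ (eD c)) * G⁻¹)⁻¹ : Matrix n l ℝ) r c) =
      t ^ (eN r - eD c) * (H * X * G) r c := by
  have hinv : (1 * diagonal (fun c => t ^ (eD c)) * G⁻¹)⁻¹
      = G * diagonal (fun c => t ^ (- eD c)) := by
    apply Matrix.inv_eq_right_inv
    have h1 : G⁻¹ * G = 1 := Matrix.nonsing_inv_mul G (isUnit_iff_ne_zero.2 hG)
    rw [Matrix.one_mul, Matrix.mul_assoc, ← Matrix.mul_assoc G⁻¹, h1, Matrix.one_mul,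
      Matrix.diagonal_mul_diagonal]
    rw [← Matrix.diagonal_one]
    congr 1
    funext c
    rw [← zpow_add₀ ht, add_neg_cancel, zpow_zero]
  rw [hinv, Matrix.one_mul, ← Matrix.mul_assoc, Matrix.mul_diagonal, Matrix.mul_assoc,
    Matrix.mul_assoc, Matrix.diagonal_mul, sub_eq_add_neg, zpow_add₀ ht, Matrix.mul_assoc]
  ring

lemma tendsto_entry (e : ℤ) (x : ℝ) (h : x ≠ 0 → 0 ≤ e) :
    Tendsto (fun t : ℝ => t ^ e * x) (𝓝[≠] 0) (𝓝 (if e = 0 then x else 0)) := by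
  by_cases hx : x = 0
  · simp [hx]
  by_cases he : e = 0
  · simp [he]
  rw [if_neg he]
  obtain ⟨q, rfl⟩ := Int.eq_ofNat_of_zero_le (h hx)
  have hq : q ≠ 0 := by rintro rfl; simp at he
  have : Tendsto (fun t : ℝ => t ^ q * x) (𝓝 0) (𝓝 ((0:ℝ) ^ q * x)) :=
    ((continuous_pow q).mul continuous_const).tendsto 0
  rw [zero_pow hq, zero_mul] at this
  simpa using this.mono_left nhdsWithin_le_nhds

end QDeg
/-- For positive rational weights and a feasible datum `(V, p)`, there
exist a geometric datum `(W, p)` of the same dimension vector and a one-parameter family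
of base changes `λ̃(t)_x = B_x λ(t)_x A_x` (with `A_x, B_x` fixed invertible matrices and
`λ(t)_x` diagonal with entries integer powers of `t`) such that `λ̃(t)·V → W` as `t → 0`.
In particular, for every `ε > 0` there is a point `Ṽ` of the orbit of `V` within Frobenius
distance `ε` of `W`. -/
theorem feasible_degenerates_to_geometric {k m : ℕ} (hk : 0 < k) (hm : 0 < m)
    {d : Fin k → ℕ} {n : Fin m → ℕ} {A : Fin k → Fin m → ℕ} (p : Fin m → ℚ)
    (hd : ∀ i, 0 < d i) (hn : ∀ j, 0 < n j) (hp : ∀ j, 0 < p j)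
    (hbal : ∑ i : Fin k, (d i : ℝ) = ∑ j : Fin m, (p j : ℝ) * (n j : ℝ))
    (V : ∀ i : Fin k, ∀ j : Fin m, Fin (A i j) → Matrix (Fin (n j)) (Fin (d i)) ℝ)
    (hfeas : 0 < cap (fun j => (p j : ℝ)) V) :
    ∃ (W : ∀ i : Fin k, ∀ j : Fin m, Fin (A i j) → Matrix (Fin (n j)) (Fin (d i)) ℝ)
      (Ag Bg : ∀ i : Fin k, Matrix (Fin (d i)) (Fin (d i)) ℝ)
      (Ah Bh : ∀ j : Fin m, Matrix (Fin (n j)) (Fin (n j)) ℝ)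
      (eD : ∀ i : Fin k, Fin (d i) → ℤ) (eN : ∀ j : Fin m, Fin (n j) → ℤ),
      IsGeometric (fun j => (p j : ℝ)) W ∧
      (∀ i, IsUnit (Ag i).det) ∧ (∀ i, IsUnit (Bg i).det) ∧
      (∀ j, IsUnit (Ah j).det) ∧ (∀ j, IsUnit (Bh j).det) ∧
      Tendsto
        (fun t : ℝ => fun i : Fin k => fun j : Fin m => fun a : Fin (A i j) =>
          (Bh j * Matrix.diagonal (fun r => t ^ (eN j r)) * Ah j) * V i j a *
            (Bg i * Matrix.diagonal (fun c => t ^ (eD i c)) * Ag i)⁻¹)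
        (𝓝[≠] (0 : ℝ)) (𝓝 W) ∧
      (∀ ε : ℝ, 0 < ε →
        ∃ (Cg : ∀ i : Fin k, Matrix (Fin (d i)) (Fin (d i)) ℝ)
          (Ch : ∀ j : Fin m, Matrix (Fin (n j)) (Fin (n j)) ℝ),
          (∀ i, IsUnit (Cg i).det) ∧ (∀ j, IsUnit (Ch j).det) ∧
          Real.sqrt (∑ i : Fin k, ∑ j : Fin m, ∑ a : Fin (A i j),
            ∑ r : Fin (n j), ∑ c : Fin (d i),
              ((Ch j * V i j a * (Cg i)⁻¹) r c - W i j a r c) ^ 2) < ε) := by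
  obtain ⟨H, G, eN, eD, hH, hG, ho, hg⟩ := QDeg.main_ind (p := fun j => (p j : ℝ))
    (fun j => by exact_mod_cast hp j) _ (fun i => Fin (d i)) (fun j => Fin (n j)) V _ hfeas
    (QDeg.feasC_of_cap _ V hfeas) (by simpa using hbal) rfl
  set W : ∀ i : Fin k, ∀ j : Fin m, Fin (A i j) → Matrix (Fin (n j)) (Fin (d i)) ℝ :=
    fun i j a => Matrix.of fun r c =>
      if eD i c = eN j r then QDeg.act H V G i j a r c else 0 with hW
  have hlim : Tendsto
        (fun t : ℝ => fun i : Fin k => fun j : Fin m => fun a : Fin (A i j) =>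
          (1 * Matrix.diagonal (fun r => t ^ (eN j r)) * H j) * V i j a *
            (1 * Matrix.diagonal (fun c => t ^ (eD i c)) * (G i)⁻¹)⁻¹)
        (𝓝[≠] (0 : ℝ)) (𝓝 W) := by
    refine tendsto_pi_nhds.2 fun i => tendsto_pi_nhds.2 fun j => tendsto_pi_nhds.2 fun a =>
      tendsto_pi_nhds.2 fun r => tendsto_pi_nhds.2 fun c => ?_
    have h1 := QDeg.tendsto_entry (eN j r - eD i c) (QDeg.act H V G i j a r c)
      (fun hx => sub_nonneg.2 (ho i j a r c hx))
    have h2 : W i j a r c =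
        if eN j r - eD i c = 0 then QDeg.act H V G i j a r c else 0 := by
      simp only [hW, Matrix.of_apply, sub_eq_zero, eq_comm]
    rw [h2]
    refine h1.congr' ?_
    filter_upwards [self_mem_nhdsWithin] with t ht
    exact (QDeg.entry_eq (H j) (V i j a) (G i) (hG i) (eN j) (eD i) ht r c).symm
  have hGu : ∀ i, IsUnit ((G i)⁻¹).det := fun i =>
    Matrix.isUnit_nonsing_inv_det _ (isUnit_iff_ne_zero.2 (hG i))
  refine ⟨W, fun i => (G i)⁻¹, fun _ => 1, H, fun _ => 1, eD, eN, hg, hGu, by simp,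
    fun j => isUnit_iff_ne_zero.2 (hH j), by simp, hlim, fun ε hε => ?_⟩
  have hcont : Continuous (fun U : (∀ i : Fin k, ∀ j : Fin m, Fin (A i j) →
      Matrix (Fin (n j)) (Fin (d i)) ℝ) =>
      Real.sqrt (∑ i : Fin k, ∑ j : Fin m, ∑ a : Fin (A i j),
            ∑ r : Fin (n j), ∑ c : Fin (d i), (U i j a r c - W i j a r c) ^ 2)) := by
    refine Real.continuous_sqrt.comp ?_
    refine continuous_finsetSum _ fun i _ => continuous_finsetSum _ fun j _ =>
      continuous_finsetSum _ fun a _ => continuous_finsetSum _ fun r _ =>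
      continuous_finsetSum _ fun c _ => ?_
    have : Continuous (fun U : (∀ i : Fin k, ∀ j : Fin m, Fin (A i j) →
      Matrix (Fin (n j)) (Fin (d i)) ℝ) => U i j a r c) :=
      by
      fun_prop
    exact (this.sub continuous_const).pow 2
  have h3 := (hcont.tendsto W).comp hlim
  have h4 : Real.sqrt (∑ i : Fin k, ∑ j : Fin m, ∑ a : Fin (A i j),
      ∑ r : Fin (n j), ∑ c : Fin (d i), (W i j a r c - W i j a r c) ^ 2) < ε := by
    simpa using hε
  obtain ⟨t, ht1, ht2⟩ :=
    ((h3.eventually (gt_mem_nhds h4)).and self_mem_nhdsWithin).exists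
  have ht : t ≠ 0 := ht2
  refine ⟨fun i => 1 * Matrix.diagonal (fun c => t ^ (eD i c)) * (G i)⁻¹,
    fun j => 1 * Matrix.diagonal (fun r => t ^ (eN j r)) * H j, fun i => ?_, fun j => ?_, ht1⟩
  · beta_reduce
    rw [Matrix.one_mul, Matrix.det_mul, Matrix.det_diagonal]
    exact (isUnit_iff_ne_zero.2 (Finset.prod_ne_zero_iff.2 fun c _ => zpow_ne_zero _ ht)).mul
      (hGu i)
  · beta_reduce
    rw [Matrix.one_mul, Matrix.det_mul, Matrix.det_diagonal]
    exact (isUnit_iff_ne_zero.2 (Finset.prod_ne_zero_iff.2 fun c _ => zpow_ne_zero _ ht)).mul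
      (isUnit_iff_ne_zero.2 (hH j))
end
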